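/- Let n ≥ 2, 1 < r < n, r* = nr/(n−r), and let Ω ∈ L^{r,r*}(𝕊^{n−1}) have mean zero, with 0 < α < 1 + n/r'. Let r'n/(r'+n) < p < n/α, 1/q = 1/p − α/n, and α − n/p < λ < 1 + n/r' − n/p. Then there is C such that for all f ∈ C_c^∞(ℝ^n), (∫_{ℝ^n} (|x|^λ |T_{Ω,α}f(x)|)^q dx)^{1/q} ≤ C (∫_{ℝ^n} (|x|^λ |∇f(x)|)^p dx)^{1/p}. -/

import Mathlib

open MeasureTheory Metric Set Filter
open scoped ENNReal NNReal Topology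

noncomputable section

abbrev Rn (n : ℕ) := EuclideanSpace ℝ (Fin n)

/-- An axis-parallel half-open cube in `ℝⁿ`. -/
structure Cube (n : ℕ) where
  corner : Fin n → ℝ
  side : ℝ
  side_pos : 0 < side

/-- The set of points of a cube. -/
def Cube.carrier {n : ℕ} (Q : Cube n) : Set (Rn n) :=
  {x | ∀ i, Q.corner i ≤ x i ∧ x i < Q.corner i + Q.side}

/-- Surface measure on the unit sphere `𝕊^{n-1} ⊆ ℝⁿ`. -/
def sphereMeasure (n : ℕ) : Measure (Rn n) :=
  (MeasureTheory.Measure.hausdorffMeasure ((n : ℝ) - 1)).restrict (sphere (0 : Rn n) 1)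

/-- `f ∈ C_c^∞(ℝⁿ)`. -/
def IsCcSmooth {n : ℕ} (f : Rn n → ℝ) : Prop :=
  ContDiff ℝ (⊤ : ℕ∞) f ∧ HasCompactSupport f

/-- Truncated rough fractional singular integral. -/
def roughOpTrunc (n : ℕ) (α : ℝ) (Ω f : Rn n → ℝ) (x : Rn n) (ε : ℝ) : ℝ :=
  ∫ y in {y : Rn n | ε < ‖y‖}, (Ω (‖y‖⁻¹ • y) / ‖y‖ ^ ((n : ℝ) + 1 - α)) * f (x - y)

/-- The rough fractional singular integral `T_{Ω,α} f`, as a principal value. -/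
def roughOp (n : ℕ) (α : ℝ) (Ω f : Rn n → ℝ) (x : Rn n) : ℝ :=
  limUnder (𝓝[>] (0 : ℝ)) (roughOpTrunc n α Ω f x)

/-- Riesz potential (modulo its normalizing constant) of a nonnegative function. -/
def rieszPot (n : ℕ) (α : ℝ) (g : Rn n → ℝ) (x : Rn n) : ℝ≥0∞ :=
  ∫⁻ y, ENNReal.ofReal (g y) / ENNReal.ofReal (‖x - y‖ ^ ((n : ℝ) - α))

/-- `|∇f|`. -/
def gradNorm {n : ℕ} (f : Rn n → ℝ) (y : Rn n) : ℝ := ‖gradient f y‖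

/-- Weak Lorentz norm `‖Ω‖_{L^{r,∞}(𝕊^{n-1})}`. -/
def weakLorentzSphere (n : ℕ) (r : ℝ) (Ω : Rn n → ℝ) : ℝ≥0∞ :=
  ⨆ (t : ℝ) (_ : 0 < t), ENNReal.ofReal t * sphereMeasure n {y | t < |Ω y|} ^ (1 / r)

/-- Lorentz norm `‖Ω‖_{L^{r,q}(𝕊^{n-1})}`. -/
def lorentzSphere (n : ℕ) (r q : ℝ) (Ω : Rn n → ℝ) : ℝ≥0∞ :=
  (ENNReal.ofReal r *
      ∫⁻ t in Ioi (0 : ℝ),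
        ENNReal.ofReal t ^ q * sphereMeasure n {y | t < |Ω y|} ^ (q / r) / ENNReal.ofReal t) ^ (1 / q)

/-- The Young function `Φ(t) = t log(1+t)^{1/n'}`, `1/n' = (n-1)/n`. -/
def orliczYoung (n : ℕ) (t : ℝ) : ℝ := t * Real.log (1 + t) ^ (((n : ℝ) - 1) / n)

/-- Admissible Orlicz levels for the `L(log L)^{1/n'}` norm w.r.t. normalized surface measure. -/
def orliczSet (n : ℕ) (Ω : Rn n → ℝ) : Set ℝ :=
  {lam | 0 < lam ∧ ⨍ y, orliczYoung n (|Ω y| / lam) ∂sphereMeasure n ≤ 1}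

/-- Orlicz norm `‖Ω‖_{L(log L)^{1/n'}(𝕊^{n-1})}`. -/
def orliczSphereNorm (n : ℕ) (Ω : Rn n → ℝ) : ℝ := sInf (orliczSet n Ω)

/-- A sparse family of cubes. -/
def IsSparse {n : ℕ} (𝒮 : Set (Cube n)) : Prop :=
  ∃ E : Cube n → Set (Rn n),
    (∀ Q ∈ 𝒮, E Q ⊆ Q.carrier ∧ volume Q.carrier ≤ 2 * volume (E Q)) ∧
    𝒮.Pairwise fun Q P => Disjoint (E Q) (E P)

/-- A dyadic grid of cubes. -/
def IsDyadicGrid {n : ℕ} (𝒟 : Set (Cube n)) : Prop :=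
  (∀ Q ∈ 𝒟, ∃ k : ℤ, Q.side = (2 : ℝ) ^ k) ∧
  (∀ (k : ℤ) (x : Rn n), ∃! Q : Cube n, Q ∈ 𝒟 ∧ Q.side = (2 : ℝ) ^ k ∧ x ∈ Q.carrier) ∧
  (∀ Q ∈ 𝒟, ∀ P ∈ 𝒟, Disjoint Q.carrier P.carrier ∨ Q.carrier ⊆ P.carrier ∨ P.carrier ⊆ Q.carrier)

/-- The shifted dyadic grid `𝒟_t = {2^k([0,1)^n + m + (-1)^k t)}`. -/
def shiftedGrid (n : ℕ) (t : Fin n → ℝ) : Set (Cube n) :=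
  {Q | ∃ (k : ℤ) (m : Fin n → ℤ),
      Q.side = (2 : ℝ) ^ k ∧ Q.corner = fun i => (2 : ℝ) ^ k * ((m i : ℝ) + (-1 : ℝ) ^ k * t i)}

/-- `(⨍_Q |g|^s)^{1/s}` as an extended nonnegative real. -/
def avgLs (n : ℕ) (s : ℝ) (Q : Cube n) (g : Rn n → ℝ) : ℝ≥0∞ :=
  ((volume Q.carrier)⁻¹ * ∫⁻ y in Q.carrier, ENNReal.ofReal |g y| ^ s) ^ (1 / s)

/-- The `L^s` sparse (or dyadic) fractional operator `I^𝒮_{α,L^s}`. -/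
def sparseOpLs (n : ℕ) (α s : ℝ) (𝒮 : Set (Cube n)) (g : Rn n → ℝ) (x : Rn n) : ℝ≥0∞ :=
  ∑' Q : 𝒮, Set.indicator (Q : Cube n).carrier
      (fun _ => ENNReal.ofReal ((Q : Cube n).side ^ α) * avgLs n s (Q : Cube n) g) x

/-- The `L^s` fractional maximal operator `M_{α,L^s}`. -/
def maxOpLs (n : ℕ) (α s : ℝ) (g : Rn n → ℝ) (x : Rn n) : ℝ≥0∞ :=
  ⨆ (Q : Cube n) (_ : x ∈ Q.carrier), ENNReal.ofReal (Q.side ^ α) * avgLs n s Q g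

/-- The measure `w dx` associated with a weight `w`. -/
def wMeasure (n : ℕ) (w : Rn n → ℝ) : Measure (Rn n) :=
  volume.withDensity fun x => ENNReal.ofReal (w x)

/-- Muckenhoupt `A_∞` (via the standard fair-proportion characterization). -/
def IsAinfty {n : ℕ} (w : Rn n → ℝ) : Prop :=
  ∃ C > (0 : ℝ), ∃ δ > (0 : ℝ), ∀ Q : Cube n, ∀ S ⊆ Q.carrier, MeasurableSet S →
    wMeasure n w S ≤
      ENNReal.ofReal C * (volume S / volume Q.carrier) ^ δ * wMeasure n w Q.carrier

/-- `‖g‖_{L^p(w)}` for an `ℝ≥0∞`-valued `g`. -/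
def lpNormW (n : ℕ) (p : ℝ) (w : Rn n → ℝ) (g : Rn n → ℝ≥0∞) : ℝ≥0∞ :=
  (∫⁻ x, g x ^ p ∂wMeasure n w) ^ (1 / p)

/-- `‖g‖_{L^{p,∞}(w)}` for an `ℝ≥0∞`-valued `g`. -/
def weakNormW (n : ℕ) (p : ℝ) (w : Rn n → ℝ) (g : Rn n → ℝ≥0∞) : ℝ≥0∞ :=
  ⨆ (lam : ℝ) (_ : 0 < lam),
    ENNReal.ofReal lam * wMeasure n w {x | ENNReal.ofReal lam < g x} ^ (1 / p)

/-- Unweighted `L^p` "norm" of an `ℝ≥0∞`-valued function. -/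
def lqNorm (n : ℕ) (p : ℝ) (g : Rn n → ℝ≥0∞) : ℝ≥0∞ :=
  (∫⁻ x, g x ^ p) ^ (1 / p)

/-- Unweighted weak `L^p` norm of an `ℝ≥0∞`-valued function. -/
def weakNorm (n : ℕ) (p : ℝ) (g : Rn n → ℝ≥0∞) : ℝ≥0∞ :=
  ⨆ (lam : ℝ) (_ : 0 < lam),
    ENNReal.ofReal lam * volume {x | ENNReal.ofReal lam < g x} ^ (1 / p)

/-- Maximal function of a measure over cubes. -/
def measMax (n : ℕ) (μ : Measure (Rn n)) (x : Rn n) : ℝ≥0∞ :=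
  ⨆ (Q : Cube n) (_ : x ∈ Q.carrier), μ Q.carrier / volume Q.carrier

/-- The rough fractional maximal operator `M_{Ω,α}`. -/
def roughMax (n : ℕ) (α : ℝ) (Ω f : Rn n → ℝ) (x : Rn n) : ℝ≥0∞ :=
  ⨆ (t : ℝ) (_ : 0 < t),
    ENNReal.ofReal (t ^ (α - 1)) * ((volume (ball (0 : Rn n) t))⁻¹ *
      ∫⁻ y in ball (0 : Rn n) t, ENNReal.ofReal |Ω (‖y‖⁻¹ • y) * f (x - y)|)

/-- Average of `f` over the ball `B(x,t)`. -/
def ballAvg {n : ℕ} (f : Rn n → ℝ) (x : Rn n) (t : ℝ) : ℝ :=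
  ⨍ y in ball x t, f y

/-- The sharp rough fractional maximal operator `M^#_{Ω,α}`. -/
def roughMaxSharp (n : ℕ) (α : ℝ) (Ω f : Rn n → ℝ) (x : Rn n) : ℝ≥0∞ :=
  ⨆ (t : ℝ) (_ : 0 < t),
    ENNReal.ofReal (t ^ (α - 1)) * ((volume (ball (0 : Rn n) t))⁻¹ *
      ∫⁻ y in ball (0 : Rn n) t,
        ENNReal.ofReal (|Ω (‖y‖⁻¹ • y)| * |f (x - y) - ballAvg f x t|))

/-- The natural rough maximal operator `M^♮_Ω` (with `α = 1`). -/
def roughMaxNatural (n : ℕ) (Ω f : Rn n → ℝ) (x : Rn n) : ℝ≥0∞ :=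
  ⨆ (t : ℝ) (_ : 0 < t),
    ENNReal.ofReal |⨍ y in ball (0 : Rn n) t, Ω (‖y‖⁻¹ • y) * f (x - y)|

/-- The fractional spherical maximal operator `𝒮_β`. -/
def sphMax (n : ℕ) (β : ℝ) (f : Rn n → ℝ) (x : Rn n) : ℝ≥0∞ :=
  ⨆ (r : ℝ) (_ : 0 < r),
    ENNReal.ofReal (r ^ β) *
      ((MeasureTheory.Measure.hausdorffMeasure ((n : ℝ) - 1) (sphere x r))⁻¹ *
        ∫⁻ y in sphere x r, ENNReal.ofReal |f y|
          ∂(MeasureTheory.Measure.hausdorffMeasure ((n : ℝ) - 1)))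


/-- The measure `w^q dx`. -/
def wqMeasure (n : ℕ) (q : ℝ) (w : Rn n → ℝ) : Measure (Rn n) :=
  volume.withDensity fun x => ENNReal.ofReal (w x) ^ q

/-- Weak norm `‖g‖_{L^{q,∞}(w^q)}` for `ℝ≥0∞`-valued `g`. -/
def weakNormWq (n : ℕ) (q : ℝ) (w : Rn n → ℝ) (g : Rn n → ℝ≥0∞) : ℝ≥0∞ :=
  ⨆ (lam : ℝ) (_ : 0 < lam),
    ENNReal.ofReal lam * wqMeasure n q w {x | ENNReal.ofReal lam < g x} ^ (1 / q)

/-!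
Since `Ω` has mean zero, the average of `f` over `ball x ‖y‖` may be subtracted from `f (x - y)`
inside the principal value. Comparing `f` with its averages through the gradient then gives
`|T f x| ≤ C ∫ K (x - u) |∇f u| du`, where `K` is the potential
`K w = ∫ |Ω (y / |y|)| |y| ^ (α - n - 1) |w - y| ^ (1 - n) dy` over `|w - y| < 2 |y|`, a positive
kernel homogeneous of degree `α - n`. Young's inequality shows that `K` is in `L^a` of the sphere
for every `1 / a` slightly larger than `1 / r - 1 / n`, and this much integrability is enough for
the Stein–Weiss inequality with kernel `K`: the part where `|x - y| ≤ |x| / 2` is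
handled as in the Hardy–Littlewood–Sobolev inequality, the rest by Hardy-type inequalities.

Polar coordinates come with the cone measure on the sphere; it is a multiple of the Hausdorff
measure because both give the same mass to balls of equal radius.
-/

/-! ### Uniformly distributed measures -/

theorem preimage_prodMk_dist_lt {X : Type*} [PseudoMetricSpace X] (x : X) (s : ℝ) :
    Prod.mk x ⁻¹' {z : X × X | dist z.1 z.2 < s} = ball x s := by
  simp only [preimage_ofPred_eq, ball, dist_comm]

theorem measurableSet_dist_lt {X : Type*} [PseudoMetricSpace X] [SecondCountableTopology X]
    [MeasurableSpace X] [OpensMeasurableSpace X] (s : ℝ) :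
    MeasurableSet {z : X × X | dist z.1 z.2 < s} :=
  (isOpen_lt continuous_dist continuous_const).measurableSet

theorem measurable_measure_inter_ball {X : Type*} [PseudoMetricSpace X] [SecondCountableTopology X]
    [MeasurableSpace X] [OpensMeasurableSpace X] {ν : Measure X} [SFinite ν] {U : Set X}
    (hU : MeasurableSet U) (s : ℝ) : Measurable fun x => ν (U ∩ ball x s) := by
  simpa only [preimage_prodMk_dist_lt, Measure.restrict_apply' hU, inter_comm] using
    measurable_measure_prodMk_left (ν := ν.restrict U) (measurableSet_dist_lt s)

/-- All balls of equal radius have equal measure (Christensen's uniformly distributed measures). -/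
def IsUniformlyDistributed {X : Type*} [PseudoMetricSpace X] [MeasurableSpace X]
    (μ : Measure X) : Prop :=
  ∀ (x y : X) (s : ℝ), μ (ball x s) = μ (ball y s)

namespace IsUniformlyDistributed

variable {X : Type*} [PseudoMetricSpace X] [MeasurableSpace X] {μ ν : Measure X}

theorem measure_ball_ne_zero [SecondCountableTopology X] (hμ : IsUniformlyDistributed μ)
    (hμ0 : μ ≠ 0) (x : X) {s : ℝ} (hs : 0 < s) : μ (ball x s) ≠ 0 := by
  refine fun h0 => hμ0 (Measure.measure_univ_eq_zero.1 (measure_null_of_locally_null _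
    fun y _ => ?_))
  exact ⟨ball y s, mem_nhdsWithin_of_mem_nhds (ball_mem_nhds y hs), (hμ y x s).trans h0⟩

variable [SecondCountableTopology X] [BorelSpace X]

theorem setLIntegral_measure_inter_ball_le [SFinite μ] [SFinite ν] (hμ : IsUniformlyDistributed μ)
    {U : Set X} (hU : MeasurableSet U) (x₀ : X) (s : ℝ) :
    ∫⁻ x in U, ν (U ∩ ball x s) ∂μ ≤ μ (ball x₀ s) * ν U := by
  calc ∫⁻ x in U, ν (U ∩ ball x s) ∂μ
      = ((μ.restrict U).prod (ν.restrict U)) {z : X × X | dist z.1 z.2 < s} := by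
        simp only [Measure.prod_apply (measurableSet_dist_lt s), preimage_prodMk_dist_lt,
          Measure.restrict_apply' hU, inter_comm]
    _ = ∫⁻ y in U, μ (ball y s ∩ U) ∂ν := by
        rw [Measure.prod_apply_symm (measurableSet_dist_lt s)]
        exact lintegral_congr fun y => Measure.restrict_apply' hU
    _ ≤ ∫⁻ _ in U, μ (ball x₀ s) ∂ν :=
        lintegral_mono fun y => (measure_mono inter_subset_left).trans_eq (hμ y x₀ s)
    _ = μ (ball x₀ s) * ν U := setLIntegral_const _ _

theorem measure_le_mul_of_tendsto [SFinite μ] [IsFiniteMeasure ν] (hμ : IsUniformlyDistributed μ)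
    (hν : IsUniformlyDistributed ν) (hν0 : ν ≠ 0) (x₀ : X) {u : ℕ → ℝ}
    (hu : Tendsto u atTop (𝓝[>] 0)) {L : ℝ≥0∞}
    (hL : Tendsto (fun k => μ (ball x₀ (u k)) / ν (ball x₀ (u k))) atTop (𝓝 L))
    {U : Set X} (hU : IsOpen U) : μ U ≤ L * ν U := by
  obtain ⟨hu0, hupos⟩ := tendsto_nhdsWithin_iff.1 hu
  have hlim : ∀ x ∈ U, 1 = liminf (fun k => ν (U ∩ ball x (u k)) / ν (ball x₀ (u k))) atTop := by
    intro x hx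
    obtain ⟨ε, hε, hεU⟩ := Metric.isOpen_iff.1 hU x hx
    refine (Tendsto.liminf_eq (tendsto_const_nhds.congr' ?_)).symm
    filter_upwards [hupos, hu0.eventually (gt_mem_nhds hε)] with k hk hkε
    rw [inter_eq_right.2 ((ball_subset_ball hkε.le).trans hεU), hν x x₀,
      ENNReal.div_self (hν.measure_ball_ne_zero hν0 x₀ hk) (measure_ne_top _ _)]
  have hstep : ∀ᶠ k in atTop, ∫⁻ x in U, ν (U ∩ ball x (u k)) / ν (ball x₀ (u k)) ∂μ ≤
      μ (ball x₀ (u k)) / ν (ball x₀ (u k)) * ν U := by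
    filter_upwards [hupos] with k hk
    simp only [div_eq_mul_inv]
    rw [lintegral_mul_const' _ _ (ENNReal.inv_ne_top.2 (hν.measure_ball_ne_zero hν0 x₀ hk)),
      mul_right_comm]
    gcongr
    exact hμ.setLIntegral_measure_inter_ball_le hU.measurableSet x₀ (u k)
  calc μ U = ∫⁻ _ in U, 1 ∂μ := (setLIntegral_one U).symm
    _ = ∫⁻ x in U, liminf (fun k => ν (U ∩ ball x (u k)) / ν (ball x₀ (u k))) atTop ∂μ :=
        setLIntegral_congr_fun hU.measurableSet hlim
    _ ≤ liminf (fun k => ∫⁻ x in U, ν (U ∩ ball x (u k)) / ν (ball x₀ (u k)) ∂μ) atTop :=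
        lintegral_liminf_le fun k =>
          (measurable_measure_inter_ball hU.measurableSet (u k)).div_const _
    _ ≤ liminf (fun k => μ (ball x₀ (u k)) / ν (ball x₀ (u k)) * ν U) atTop :=
        liminf_le_liminf hstep
    _ = L * ν U := (ENNReal.Tendsto.mul_const hL (Or.inr (measure_ne_top _ _))).liminf_eq

theorem exists_eq_smul [Nonempty X] [IsFiniteMeasure μ] [IsFiniteMeasure ν]
    (hμ : IsUniformlyDistributed μ) (hν : IsUniformlyDistributed ν) (hμ0 : μ ≠ 0) (hν0 : ν ≠ 0) :
    ∃ c : ℝ≥0∞, c ≠ ⊤ ∧ μ = c • ν := by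
  obtain ⟨x₀⟩ := ‹Nonempty X›
  have hu : Tendsto (fun k : ℕ => 1 / ((k : ℝ) + 1)) atTop (𝓝[>] 0) :=
    tendsto_nhdsWithin_iff.2 ⟨tendsto_one_div_add_atTop_nhds_zero_nat,
      Eventually.of_forall fun k => mem_Ioi.2 (by positivity)⟩
  obtain ⟨L, φ, hφ, hL⟩ := CompactSpace.tendsto_subseq fun k : ℕ =>
    μ (ball x₀ (1 / ((k : ℝ) + 1))) / ν (ball x₀ (1 / ((k : ℝ) + 1)))
  have hle := fun U (hU : IsOpen U) =>
    hμ.measure_le_mul_of_tendsto hν hν0 x₀ (hu.comp hφ.tendsto_atTop) hL hU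
  have hge := fun U (hU : IsOpen U) =>
    hν.measure_le_mul_of_tendsto hμ hμ0 x₀ (hu.comp hφ.tendsto_atTop) (L := L⁻¹)
      (((continuous_inv.tendsto L).comp hL).congr fun k => ENNReal.inv_div
        (Or.inl (measure_ne_top _ _))
        (Or.inl (hν.measure_ball_ne_zero hν0 x₀ Nat.one_div_pos_of_nat))) hU
  have hL0 : L ≠ 0 := by
    rintro rfl
    exact hμ0 (by simpa using hle univ isOpen_univ)
  have hLtop : L ≠ ⊤ := by
    rintro rfl
    exact hν0 (by simpa using hge univ isOpen_univ)
  have heq : ∀ U, IsOpen U → μ U = (L • ν) U := fun U hU =>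
    (hle U hU).antisymm <| calc L * ν U ≤ L * (L⁻¹ * μ U) := by gcongr; exact hge U hU
      _ = μ U := by rw [← mul_assoc, ENNReal.mul_inv_cancel hL0 hLtop, one_mul]
  exact ⟨L, hLtop, ext_of_generate_finite {U | IsOpen U} BorelSpace.measurable_eq isPiSystem_isOpen
    heq (heq univ isOpen_univ)⟩

end IsUniformlyDistributed

/-! ### Surface measure on the unit sphere -/

section SphereMeasure

open Module
open scoped Pointwise

variable {E : Type*} [NormedAddCommGroup E] [InnerProductSpace ℝ E]

theorem mem_image_stereoInvFunAux {v x : E} (hv : ‖v‖ = 1) (hx : ‖x‖ = 1) (hvx : inner ℝ v x ≤ 0) :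
    x ∈ (fun w : (Submodule.span ℝ {v})ᗮ => stereoInvFunAux v w) '' closedBall 0 2 := by
  have hxv : x ≠ v := by
    rintro rfl
    rw [real_inner_self_eq_norm_sq, hx] at hvx
    norm_num at hvx
  refine ⟨stereoToFun v x, ?_,
    congrArg Subtype.val (stereo_left_inv hv (x := ⟨x, mem_sphere_zero_iff_norm.2 hx⟩) hxv)⟩
  have hproj : ‖(Submodule.span ℝ {v})ᗮ.orthogonalProjectionOnto x‖ ≤ 1 :=
    hx ▸ Submodule.norm_orthogonalProjectionOnto_apply_le _ x
  have hfactor : 2 / (1 - inner ℝ v x) ≤ 2 := div_le_self zero_le_two (by linarith)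
  rw [mem_closedBall_zero_iff, stereoToFun_apply, norm_smul, innerSL_apply_apply,
    Real.norm_of_nonneg (div_nonneg zero_le_two (by linarith))]
  nlinarith [norm_nonneg ((Submodule.span ℝ {v})ᗮ.orthogonalProjectionOnto x)]

theorem ball_subset_image_orthogonalProjectionOnto_sphere {v : E} (hv : ‖v‖ = 1) :
    ball 0 1 ⊆ (Submodule.span ℝ {v})ᗮ.orthogonalProjectionOnto '' sphere (0 : E) 1 := by
  intro w hw
  rw [mem_ball_zero_iff] at hw
  have hvw : inner ℝ (w : E) v = 0 := Submodule.mem_orthogonal_singleton_iff_inner_left.1 w.2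
  have hw' : 0 ≤ 1 - ‖(w : E)‖ ^ 2 := by
    rw [← Submodule.coe_norm]
    nlinarith [norm_nonneg w]
  refine ⟨w + √(1 - ‖(w : E)‖ ^ 2) • v, ?_, ?_⟩
  · rw [mem_sphere_zero_iff_norm, ← sq_eq_sq₀ (norm_nonneg _) zero_le_one, norm_add_sq_real,
      inner_smul_right, hvw, norm_smul, hv, Real.norm_of_nonneg (Real.sqrt_nonneg _), mul_one,
      Real.sq_sqrt hw']
    ring
  · rw [map_add, map_smul, Submodule.orthogonalProjectionOnto_mem_subspace_eq_self,
      Submodule.orthogonalProjectionOnto_orthogonalComplement_singleton_eq_zero,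
      smul_zero, add_zero]

theorem exists_linearIsometryEquiv_apply_eq {x y : E} (h : ‖x‖ = ‖y‖) :
    ∃ e : E ≃ₗᵢ[ℝ] E, e x = y :=
  ⟨_, Submodule.reflection_sub h⟩

theorem image_coe_ball_sphere (e : E ≃ₗᵢ[ℝ] E) {x y : sphere (0 : E) 1} (h : e x = y) (s : ℝ) :
    (Subtype.val '' ball y s : Set E) = e '' (Subtype.val '' ball x s) := by
  have himage : ∀ z : sphere (0 : E) 1, (Subtype.val '' ball z s : Set E) =
      ball (z : E) s ∩ sphere 0 1 := fun z => by
    rw [inter_comm, ← Subtype.image_preimage_coe]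
    rfl
  have hsphere : e '' sphere 0 1 = sphere 0 1 := by
    simp
  rw [himage, himage, image_inter e.injective, e.image_ball, h, hsphere]

variable [MeasurableSpace E] [BorelSpace E]

theorem hausdorffMeasure_sphere_lt_top {m : ℕ} [Fact (finrank ℝ E = m + 1)] :
    μH[m] (sphere (0 : E) 1) < ⊤ := by
  have : FiniteDimensional ℝ E := .of_fact_finrank_eq_succ m
  have : Nontrivial E := Module.nontrivial_of_finrank_eq_succ (Fact.out : finrank ℝ E = m + 1)
  have hcap : ∀ v : E, ‖v‖ = 1 →
      μH[m] ((fun w : (Submodule.span ℝ {v})ᗮ => stereoInvFunAux v w) '' closedBall 0 2) < ⊤ := by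
    intro v hv
    have hdim : finrank ℝ (Submodule.span ℝ {v})ᗮ = m :=
      Submodule.finrank_orthogonal_span_singleton (ne_zero_of_norm_ne_zero (by simp [hv]))
    have hsmooth : ContDiff ℝ 1 fun w : (Submodule.span ℝ {v})ᗮ => stereoInvFunAux v w :=
      contDiff_stereoInvFunAux.comp (Submodule.span ℝ {v})ᗮ.subtypeL.contDiff
    obtain ⟨K, hK⟩ := hsmooth.contDiffOn.exists_lipschitzOnWith one_ne_zero
      (convex_closedBall _ 2) (isCompact_closedBall 0 2)
    refine (hK.hausdorffMeasure_image_le m.cast_nonneg).trans_lt (ENNReal.mul_lt_top (by simp) ?_)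
    rw [← hdim]
    exact measure_closedBall_lt_top
  obtain ⟨v, hv⟩ := exists_norm_eq E zero_le_one
  refine (measure_mono fun x hx => ?_).trans_lt
    ((measure_union_le _ _).trans_lt (ENNReal.add_lt_top.2 ⟨hcap v hv, hcap (-v) (by simpa)⟩))
  rw [mem_sphere_zero_iff_norm] at hx
  rcases le_total (inner ℝ v x) 0 with h | h
  · exact Or.inl (mem_image_stereoInvFunAux hv hx h)
  · exact Or.inr (mem_image_stereoInvFunAux (by simpa) hx (by simpa using h))

theorem hausdorffMeasure_sphere_pos {m : ℕ} [Fact (finrank ℝ E = m + 1)] :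
    0 < μH[m] (sphere (0 : E) 1) := by
  have : FiniteDimensional ℝ E := .of_fact_finrank_eq_succ m
  have : Nontrivial E := Module.nontrivial_of_finrank_eq_succ (Fact.out : finrank ℝ E = m + 1)
  obtain ⟨v, hv⟩ := exists_norm_eq E zero_le_one
  have hdim : finrank ℝ (Submodule.span ℝ {v})ᗮ = m :=
    Submodule.finrank_orthogonal_span_singleton (ne_zero_of_norm_ne_zero (by simp [hv]))
  calc 0 < μH[m] (ball (0 : (Submodule.span ℝ {v})ᗮ) 1) := by
        rw [← hdim]
        exact measure_ball_pos _ _ one_pos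
    _ ≤ μH[m] ((Submodule.span ℝ {v})ᗮ.orthogonalProjectionOnto '' sphere (0 : E) 1) :=
        measure_mono (ball_subset_image_orthogonalProjectionOnto_sphere hv)
    _ ≤ μH[m] (sphere (0 : E) 1) := by
        simpa using (Submodule.lipschitzWith_orthogonalProjectionOnto _).hausdorffMeasure_image_le
          m.cast_nonneg (sphere (0 : E) 1)

theorem isUniformlyDistributed_comap_hausdorffMeasure (d : ℝ) :
    IsUniformlyDistributed (μH[d].comap (Subtype.val : sphere (0 : E) 1 → E)) := by
  intro x y s
  obtain ⟨e, he⟩ := exists_linearIsometryEquiv_apply_eq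
    ((norm_eq_of_mem_sphere x).trans (norm_eq_of_mem_sphere y).symm)
  rw [comap_subtype_coe_apply isClosed_sphere.measurableSet,
    comap_subtype_coe_apply isClosed_sphere.measurableSet, image_coe_ball_sphere e he s]
  exact (e.toIsometryEquiv.hausdorffMeasure_image d _).symm

theorem isUniformlyDistributed_toSphere [FiniteDimensional ℝ E] :
    IsUniformlyDistributed (volume : Measure E).toSphere := by
  intro x y s
  obtain ⟨e, he⟩ := exists_linearIsometryEquiv_apply_eq
    ((norm_eq_of_mem_sphere x).trans (norm_eq_of_mem_sphere y).symm)
  have hcone : Ioo (0 : ℝ) 1 • (e '' (Subtype.val '' ball x s)) =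
      e.symm ⁻¹' (Ioo (0 : ℝ) 1 • (Subtype.val '' ball x s)) := by
    rw [← e.image_eq_preimage_symm]
    exact (image_image2_right_comm fun t z => (e.map_smul t z).symm)
  rw [Measure.toSphere_apply' _ measurableSet_ball, Measure.toSphere_apply' _ measurableSet_ball,
    image_coe_ball_sphere e he s, hcone]
  exact congrArg _ (e.symm.measurePreserving.measure_preimage_equiv
    (f := e.symm.toHomeomorph.toMeasurableEquiv) _).symm

theorem exists_map_toSphere_eq_smul_hausdorffMeasure [FiniteDimensional ℝ E] {m : ℕ}
    [Fact (finrank ℝ E = m + 1)] :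
    ∃ c : ℝ≥0∞, c ≠ ⊤ ∧
      (volume : Measure E).toSphere.map Subtype.val = c • μH[m].restrict (sphere (0 : E) 1) := by
  have : Nontrivial E := Module.nontrivial_of_finrank_eq_succ (Fact.out : finrank ℝ E = m + 1)
  have : Nonempty (sphere (0 : E) 1) := (NormedSpace.sphere_nonempty.2 zero_le_one).to_subtype
  have hS : MeasurableSet (sphere (0 : E) 1) := isClosed_sphere.measurableSet
  have huniv : (μH[m].comap (Subtype.val : sphere (0 : E) 1 → E)) univ =
      μH[m] (sphere (0 : E) 1) := by
    rw [comap_subtype_coe_apply hS, Subtype.coe_image_univ]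
  have : IsFiniteMeasure (μH[m].comap (Subtype.val : sphere (0 : E) 1 → E)) :=
    ⟨huniv.trans_lt hausdorffMeasure_sphere_lt_top⟩
  have hne : μH[m].comap (Subtype.val : sphere (0 : E) 1 → E) ≠ 0 := fun h =>
    hausdorffMeasure_sphere_pos.ne' (by rw [← huniv, h, Measure.coe_zero, Pi.zero_apply])
  obtain ⟨c, hc, h⟩ := isUniformlyDistributed_toSphere.exists_eq_smul
    (isUniformlyDistributed_comap_hausdorffMeasure (E := E) m) (Measure.toSphere_ne_zero _) hne
  exact ⟨c, hc, by rw [h, Measure.map_smul, map_comap_subtype_coe hS]⟩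

end SphereMeasure

/-! ### Positively homogeneous functions in polar coordinates -/

/-- `κ` is positively homogeneous of degree `β`; no condition is imposed on `κ 0`. -/
def PosHomogeneous {E : Type*} [NormedAddCommGroup E] [NormedSpace ℝ E] (β : ℝ) (κ : E → ℝ≥0∞) :
    Prop :=
  ∀ s : ℝ, 0 < s → ∀ w, w ≠ 0 → κ (s • w) = ENNReal.ofReal (s ^ β) * κ w

theorem rpow_le_one_add_rpow (x : ℝ≥0∞) {b a : ℝ} (hb : 0 ≤ b) (hba : b ≤ a) :
    x ^ b ≤ 1 + x ^ a := by
  rcases le_total x 1 with h | h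
  · exact (ENNReal.rpow_le_one h hb).trans le_self_add
  · exact (ENNReal.rpow_le_rpow_of_exponent_le h hba).trans le_add_self

theorem lintegral_rpow_lt_top_of_exponent_le {X : Type*} [MeasurableSpace X] {μ : Measure X}
    [IsFiniteMeasure μ] {g : X → ℝ≥0∞} {a b : ℝ} (hb : 0 ≤ b) (hba : b ≤ a)
    (h : ∫⁻ x, g x ^ a ∂μ < ⊤) : ∫⁻ x, g x ^ b ∂μ < ⊤ := by
  refine (lintegral_mono fun x => rpow_le_one_add_rpow (g x) hb hba).trans_lt ?_
  rw [lintegral_add_left measurable_const, lintegral_one]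
  exact ENNReal.add_lt_top.2 ⟨measure_lt_top _ _, h⟩

theorem lintegral_Ioi_rpow {β ρ : ℝ} (hβ : β < 0) (hρ : 0 < ρ) :
    ∫⁻ t in Ioi ρ, ENNReal.ofReal (t ^ (β - 1)) =
      ENNReal.ofReal (-β)⁻¹ * ENNReal.ofReal (ρ ^ β) := by
  rw [← ofReal_integral_eq_lintegral_ofReal (integrableOn_Ioi_rpow_of_lt (by linarith) hρ)
    ((ae_restrict_mem measurableSet_Ioi).mono fun t ht => Real.rpow_nonneg (hρ.trans ht).le _),
    integral_Ioi_rpow_of_lt (by linarith) hρ, ← ENNReal.ofReal_mul (by simpa using hβ.le)]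
  rw [sub_add_cancel]
  congr 1
  field_simp

theorem lintegral_Ioc_rpow {β ρ : ℝ} (hβ : 0 < β) (hρ : 0 ≤ ρ) :
    ∫⁻ t in Ioc 0 ρ, ENNReal.ofReal (t ^ (β - 1)) =
      ENNReal.ofReal β⁻¹ * ENNReal.ofReal (ρ ^ β) := by
  rw [← ofReal_integral_eq_lintegral_ofReal
    ((intervalIntegrable_iff_integrableOn_Ioc_of_le hρ).1
      (intervalIntegral.intervalIntegrable_rpow' (by linarith)))
    ((ae_restrict_mem measurableSet_Ioc).mono fun t ht => Real.rpow_nonneg ht.1.le _),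
    ← intervalIntegral.integral_of_le hρ, integral_rpow (Or.inl (by linarith)),
    ← ENNReal.ofReal_mul (by positivity), sub_add_cancel, Real.zero_rpow hβ.ne']
  congr 1
  ring

section Polar

variable {E : Type*} [NormedAddCommGroup E] [NormedSpace ℝ E]

local notation "dim" => (Module.finrank ℝ E : ℝ)

namespace PosHomogeneous

variable {β γ a : ℝ} {κ κ' : E → ℝ≥0∞}

theorem rpow (h : PosHomogeneous β κ) (ha : 0 ≤ a) : PosHomogeneous (β * a) fun w => κ w ^ a :=
  fun s hs w hw => by
    beta_reduce
    rw [h s hs w hw, ENNReal.mul_rpow_of_nonneg _ _ ha, ENNReal.ofReal_rpow_of_pos (by positivity),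
      ← Real.rpow_mul hs.le]

theorem mul (h : PosHomogeneous β κ) (h' : PosHomogeneous γ κ') :
    PosHomogeneous (β + γ) fun w => κ w * κ' w :=
  fun s hs w hw => by
    beta_reduce
    rw [h s hs w hw, h' s hs w hw, Real.rpow_add hs, ENNReal.ofReal_mul (by positivity)]
    ring

theorem norm_rpow (γ : ℝ) : PosHomogeneous γ fun w : E => ENNReal.ofReal (‖w‖ ^ γ) :=
  fun s hs w _ => by
    beta_reduce
    rw [norm_smul, Real.norm_of_nonneg hs.le, Real.mul_rpow hs.le (norm_nonneg _),
      ENNReal.ofReal_mul (by positivity)]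

theorem apply_eq_norm_rpow_mul (h : PosHomogeneous β κ) {w : E} (hw : w ≠ 0) :
    κ w = ENNReal.ofReal (‖w‖ ^ β) * κ (‖w‖⁻¹ • w) := by
  rw [← h ‖w‖ (norm_pos_iff.2 hw) _ (by simpa), smul_inv_smul₀ (norm_ne_zero_iff.2 hw)]

end PosHomogeneous

variable [FiniteDimensional ℝ E] [Nontrivial E] [MeasurableSpace E] [BorelSpace E]
  {μ : Measure E} [μ.IsAddHaarMeasure]

theorem lintegral_direction_mul_norm {φ : ℝ → ℝ≥0∞} (hφ : Measurable φ) {ψ : E → ℝ≥0∞}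
    (hψ : Measurable ψ) :
    ∫⁻ y, ψ (‖y‖⁻¹ • y) * φ ‖y‖ ∂μ =
      (∫⁻ ω : sphere (0 : E) 1, ψ ω ∂μ.toSphere) *
        ∫⁻ t in Ioi (0 : ℝ), φ t * ENNReal.ofReal (t ^ (dim - 1)) := by
  have hprod := μ.measurePreserving_homeomorphUnitSphereProd.lintegral_comp_emb
    (Homeomorph.measurableEmbedding _) fun z => ψ z.1 * φ z.2
  simp only [homeomorphUnitSphereProd_apply_snd_coe, homeomorphUnitSphereProd_apply_fst_coe]
    at hprod
  rw [lintegral_subtype_comap (measurableSet_singleton (0 : E)).compl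
    (fun y => ψ (‖y‖⁻¹ • y) * φ ‖y‖), restrict_compl_singleton] at hprod
  rw [hprod, lintegral_prod_mul (f := fun ω : sphere (0 : E) 1 => ψ ω)
      (g := fun t : Ioi (0 : ℝ) => φ t)
      (by fun_prop) (by fun_prop), Measure.volumeIoiPow,
    lintegral_withDensity_eq_lintegral_mul _ (by fun_prop) (by fun_prop)]
  simp only [Pi.mul_apply]
  rw [lintegral_subtype_comap measurableSet_Ioi
    (fun t : ℝ => ENNReal.ofReal (t ^ (Module.finrank ℝ E - 1)) * φ t)]
  have hdim : dim - 1 = (Module.finrank ℝ E - 1 : ℕ) := by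
    rw [Nat.cast_sub Module.finrank_pos, Nat.cast_one]
  simp only [hdim, Real.rpow_natCast, mul_comm]

theorem integral_direction_mul_norm_eq_zero (φ : ℝ → ℝ) {ψ : E → ℝ}
    (hψ : ∫ ω : sphere (0 : E) 1, ψ ω ∂μ.toSphere = 0) :
    ∫ y, ψ (‖y‖⁻¹ • y) * φ ‖y‖ ∂μ = 0 := by
  have hprod := μ.measurePreserving_homeomorphUnitSphereProd.integral_comp
    (Homeomorph.measurableEmbedding _) fun z => ψ z.1 * φ z.2
  simp only [homeomorphUnitSphereProd_apply_snd_coe, homeomorphUnitSphereProd_apply_fst_coe]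
    at hprod
  rw [integral_subtype_comap (measurableSet_singleton (0 : E)).compl
    (fun y => ψ (‖y‖⁻¹ • y) * φ ‖y‖), restrict_compl_singleton] at hprod
  rw [hprod, integral_prod_mul (fun ω : sphere (0 : E) 1 => ψ ω) fun t : Ioi (0 : ℝ) => φ t,
    hψ, zero_mul]

namespace PosHomogeneous

variable {β : ℝ} {κ : E → ℝ≥0∞}

theorem setLIntegral_norm_mem (h : PosHomogeneous β κ) (hκ : Measurable κ) {A : Set ℝ}
    (hA : MeasurableSet A) :
    ∫⁻ w in norm ⁻¹' A, κ w ∂μ = (∫⁻ ω : sphere (0 : E) 1, κ ω ∂μ.toSphere) *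
      ∫⁻ t in A ∩ Ioi 0, ENNReal.ofReal (t ^ (β + dim - 1)) := by
  calc ∫⁻ w in norm ⁻¹' A, κ w ∂μ
      = ∫⁻ w, κ (‖w‖⁻¹ • w) * A.indicator (fun t => ENNReal.ofReal (t ^ β)) ‖w‖ ∂μ := by
        rw [← lintegral_indicator (measurable_norm hA)]
        refine lintegral_congr_ae ?_
        filter_upwards [compl_mem_ae_iff.2 (measure_singleton (μ := μ) (0 : E))] with w hw
        by_cases hwA : ‖w‖ ∈ A
        · rw [indicator_of_mem (by exact hwA), indicator_of_mem hwA, h.apply_eq_norm_rpow_mul hw,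
            mul_comm]
        · rw [indicator_of_notMem (by exact hwA), indicator_of_notMem hwA, mul_zero]
    _ = _ := by
        rw [lintegral_direction_mul_norm (by fun_prop) hκ, ← Measure.restrict_restrict hA,
          ← lintegral_indicator hA]
        congr 1
        refine setLIntegral_congr_fun measurableSet_Ioi fun t ht => ?_
        by_cases htA : t ∈ A
        · rw [indicator_of_mem htA, indicator_of_mem htA, ← ENNReal.ofReal_mul
            (Real.rpow_nonneg ht.le _), ← Real.rpow_add ht, add_sub_assoc]
        · rw [indicator_of_notMem htA, indicator_of_notMem htA, zero_mul]

theorem setLIntegral_lt_norm (h : PosHomogeneous β κ) (hκ : Measurable κ) (hβ : β + dim < 0)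
    {ρ : ℝ} (hρ : 0 < ρ) :
    ∫⁻ w in {w | ρ < ‖w‖}, κ w ∂μ = (∫⁻ ω : sphere (0 : E) 1, κ ω ∂μ.toSphere) *
      ENNReal.ofReal (-(β + dim))⁻¹ * ENNReal.ofReal (ρ ^ (β + dim)) := by
  have hpolar := h.setLIntegral_norm_mem (μ := μ) hκ (measurableSet_Ioi (a := ρ))
  rwa [Ioi_inter_Ioi, sup_of_le_left hρ.le, lintegral_Ioi_rpow hβ hρ, ← mul_assoc] at hpolar

theorem setLIntegral_norm_le (h : PosHomogeneous β κ) (hκ : Measurable κ) (hβ : 0 < β + dim)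
    {ρ : ℝ} (hρ : 0 ≤ ρ) :
    ∫⁻ w in {w | ‖w‖ ≤ ρ}, κ w ∂μ = (∫⁻ ω : sphere (0 : E) 1, κ ω ∂μ.toSphere) *
      ENNReal.ofReal (β + dim)⁻¹ * ENNReal.ofReal (ρ ^ (β + dim)) := by
  have hpolar := h.setLIntegral_norm_mem (μ := μ) hκ (measurableSet_Iic (a := ρ))
  rwa [Iic_inter_Ioi, lintegral_Ioc_rpow hβ hρ, ← mul_assoc] at hpolar

theorem exists_setLIntegral_lt_norm_rpow_le (h : PosHomogeneous β κ) (hκ : Measurable κ) {a : ℝ}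
    (ha : 0 < a) (hβ : β + dim / a < 0)
    (hfin : ∫⁻ ω : sphere (0 : E) 1, κ ω ^ a ∂μ.toSphere < ⊤) :
    ∃ C : ℝ≥0∞, C ≠ ⊤ ∧ ∀ ρ : ℝ, 0 < ρ →
      (∫⁻ w in {w | ρ < ‖w‖}, κ w ^ a ∂μ) ^ (1 / a) ≤ C * ENNReal.ofReal (ρ ^ (β + dim / a)) := by
  have hdeg : β * a + dim = (β + dim / a) * a := by field_simp
  refine ⟨((∫⁻ ω : sphere (0 : E) 1, κ ω ^ a ∂μ.toSphere) *
    ENNReal.ofReal (-((β + dim / a) * a))⁻¹) ^ (1 / a), by finiteness, fun ρ hρ => le_of_eq ?_⟩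
  rw [(h.rpow ha.le).setLIntegral_lt_norm (by fun_prop) (hdeg ▸ mul_neg_of_neg_of_pos hβ ha) hρ,
    hdeg, ENNReal.mul_rpow_of_nonneg _ _ (by positivity),
    ENNReal.ofReal_rpow_of_pos (by positivity),
    ← Real.rpow_mul hρ.le, mul_assoc _ a, mul_one_div_cancel ha.ne', mul_one]

theorem exists_setLIntegral_norm_le_rpow_le (h : PosHomogeneous β κ) (hκ : Measurable κ) {a : ℝ}
    (ha : 0 < a) (hβ : 0 < β + dim / a)
    (hfin : ∫⁻ ω : sphere (0 : E) 1, κ ω ^ a ∂μ.toSphere < ⊤) :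
    ∃ C : ℝ≥0∞, C ≠ ⊤ ∧ ∀ ρ : ℝ, 0 < ρ →
      (∫⁻ w in {w | ‖w‖ ≤ ρ}, κ w ^ a ∂μ) ^ (1 / a) ≤ C * ENNReal.ofReal (ρ ^ (β + dim / a)) := by
  have hdeg : β * a + dim = (β + dim / a) * a := by field_simp
  refine ⟨((∫⁻ ω : sphere (0 : E) 1, κ ω ^ a ∂μ.toSphere) *
    ENNReal.ofReal ((β + dim / a) * a)⁻¹) ^ (1 / a), by finiteness, fun ρ hρ => le_of_eq ?_⟩
  rw [(h.rpow ha.le).setLIntegral_norm_le (by fun_prop) (hdeg ▸ mul_pos hβ ha) hρ.le,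
    hdeg, ENNReal.mul_rpow_of_nonneg _ _ (by positivity),
    ENNReal.ofReal_rpow_of_pos (by positivity),
    ← Real.rpow_mul hρ.le, mul_assoc _ a, mul_one_div_cancel ha.ne', mul_one]

theorem lintegral_toSphere_lt_top (h : PosHomogeneous β κ) (hκ : Measurable κ)
    (hfin : ∫⁻ w in {w | ‖w‖ ∈ Ioc (1 : ℝ) 2}, κ w ∂μ < ⊤) :
    ∫⁻ ω : sphere (0 : E) 1, κ ω ∂μ.toSphere < ⊤ := by
  have hpolar := h.setLIntegral_norm_mem (μ := μ) hκ (measurableSet_Ioc (a := (1 : ℝ)) (b := 2))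
  have hpos : ∫⁻ t in Ioc (1 : ℝ) 2 ∩ Ioi 0, ENNReal.ofReal (t ^ (β + dim - 1)) ≠ 0 := by
    rw [inter_eq_left.2 fun t (ht : t ∈ Ioc (1 : ℝ) 2) => mem_Ioi.2 (zero_lt_one.trans ht.1),
      ← pos_iff_ne_zero,
      setLIntegral_pos_iff (by fun_prop)]
    refine (by simp : 0 < volume (Ioc (1 : ℝ) 2)).trans_le (measure_mono fun t ht => ⟨?_, ht⟩)
    exact (ENNReal.ofReal_pos.2 (Real.rpow_pos_of_pos (zero_lt_one.trans ht.1) _)).ne'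
  by_contra! htop
  rw [top_le_iff.1 htop, ENNReal.top_mul hpos] at hpolar
  exact hfin.ne hpolar

end PosHomogeneous

end Polar

/-! ### Strong-type bounds for positive kernels -/

/-- The positive integral operator with kernel `N` maps `L^p(μ)` boundedly into `L^q(μ)`. -/
def KernelStrongType {X : Type*} [MeasurableSpace X] (μ : Measure X) (p q : ℝ)
    (N : X → X → ℝ≥0∞) : Prop :=
  ∃ C : ℝ≥0∞, C ≠ ⊤ ∧ ∀ G : X → ℝ≥0∞, Measurable G →
    (∫⁻ x, (∫⁻ y, N x y * G y ∂μ) ^ q ∂μ) ^ (1 / q) ≤ C * (∫⁻ y, G y ^ p ∂μ) ^ (1 / p)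

namespace KernelStrongType

variable {X : Type*} [MeasurableSpace X] {μ : Measure X} {p q : ℝ} {N N₁ N₂ : X → X → ℝ≥0∞}

theorem of_normalized (hp : 0 < p) (hq : 0 < q) {C : ℝ≥0∞} (hC : C ≠ ⊤)
    (h : ∀ G : X → ℝ≥0∞, Measurable G → ∫⁻ y, G y ^ p ∂μ ≤ 1 →
      ∫⁻ x, (∫⁻ y, N x y * G y ∂μ) ^ q ∂μ ≤ C) : KernelStrongType μ p q N := by
  refine ⟨C ^ (1 / q) + 1, by finiteness, fun G hG => ?_⟩
  set A := (∫⁻ y, G y ^ p ∂μ) ^ (1 / p) with hA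
  rcases eq_or_ne A 0 with hA0 | hA0
  · have hG0 : ∀ᵐ y ∂μ, G y = 0 := by
      rw [hA, ENNReal.rpow_eq_zero_iff_of_pos (by positivity),
        lintegral_eq_zero_iff (by fun_prop)] at hA0
      filter_upwards [hA0] with y hy
      exact (ENNReal.rpow_eq_zero_iff_of_pos hp).1 hy
    have hTG : ∀ x, ∫⁻ y, N x y * G y ∂μ = 0 := fun x =>
      lintegral_eq_zero_of_ae_eq_zero (by filter_upwards [hG0] with y hy; simp [hy])
    simp [hTG, hq, ENNReal.zero_rpow_of_pos]
  rcases eq_or_ne A ⊤ with hAtop | hAtop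
  · simp [hAtop]
  have hscaled := h (fun y => A⁻¹ * G y) (by fun_prop) (by
    simp only [ENNReal.mul_rpow_of_nonneg _ _ hp.le]
    rw [lintegral_const_mul _ (by fun_prop), ENNReal.inv_rpow, hA, ← ENNReal.rpow_mul,
      one_div_mul_cancel hp.ne', ENNReal.rpow_one]
    exact ENNReal.inv_mul_le_one _)
  have hAinv : A⁻¹ ≠ ⊤ := ENNReal.inv_ne_top.2 hA0
  simp only [mul_left_comm (N _ _), lintegral_const_mul' _ _ hAinv,
    ENNReal.mul_rpow_of_nonneg _ _ hq.le] at hscaled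
  rw [lintegral_const_mul' _ _ (ENNReal.rpow_ne_top_of_nonneg hq.le hAinv), ENNReal.inv_rpow,
    mul_comm, ← div_eq_mul_inv, ENNReal.div_le_iff (by simp [hA0, hAtop])
    (ENNReal.rpow_ne_top_of_nonneg hq.le hAtop)] at hscaled
  calc (∫⁻ x, (∫⁻ y, N x y * G y ∂μ) ^ q ∂μ) ^ (1 / q) ≤ (C * A ^ q) ^ (1 / q) := by gcongr
    _ = C ^ (1 / q) * A := by
      rw [ENNReal.mul_rpow_of_nonneg _ _ (by positivity), ← ENNReal.rpow_mul,
        mul_one_div_cancel hq.ne', ENNReal.rpow_one]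
    _ ≤ (C ^ (1 / q) + 1) * A := by gcongr; exact le_self_add

theorem mono (hN : KernelStrongType μ p q N₂) (hq : 0 < q)
    (hle : ∀ᵐ x ∂μ, ∀ᵐ y ∂μ, N₁ x y ≤ N₂ x y) : KernelStrongType μ p q N₁ := by
  obtain ⟨C, hC, h⟩ := hN
  refine ⟨C, hC, fun G hG => le_trans ?_ (h G hG)⟩
  gcongr ?_ ^ _
  refine lintegral_mono_ae ?_
  filter_upwards [hle] with x hx
  gcongr ?_ ^ q
  refine lintegral_mono_ae ?_
  filter_upwards [hx] with y hy
  gcongr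

theorem const_mul (hN : KernelStrongType μ p q N) (hq : 0 < q) {c : ℝ≥0∞} (hc : c ≠ ⊤) :
    KernelStrongType μ p q fun x y => c * N x y := by
  obtain ⟨C, hC, h⟩ := hN
  refine ⟨c * C, ENNReal.mul_ne_top hc hC, fun G hG => ?_⟩
  simp only [mul_assoc, lintegral_const_mul' _ _ hc, ENNReal.mul_rpow_of_nonneg _ _ hq.le]
  rw [lintegral_const_mul' _ _ (ENNReal.rpow_ne_top_of_nonneg hq.le hc),
    ENNReal.mul_rpow_of_nonneg _ _ (by positivity), ← ENNReal.rpow_mul, mul_one_div_cancel hq.ne',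
    ENNReal.rpow_one]
  gcongr
  exact h G hG

theorem add [SFinite μ] (h₁ : KernelStrongType μ p q N₁) (h₂ : KernelStrongType μ p q N₂)
    (hN₁ : Measurable (Function.uncurry N₁)) (hN₂ : Measurable (Function.uncurry N₂))
    (hq : 1 ≤ q) : KernelStrongType μ p q fun x y => N₁ x y + N₂ x y := by
  obtain ⟨C₁, hC₁, h₁⟩ := h₁
  obtain ⟨C₂, hC₂, h₂⟩ := h₂
  refine ⟨C₁ + C₂, ENNReal.add_ne_top.2 ⟨hC₁, hC₂⟩, fun G hG => ?_⟩
  have hmeas : ∀ {N : X → X → ℝ≥0∞}, Measurable (Function.uncurry N) →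
      Measurable fun x => ∫⁻ y, N x y * G y ∂μ := fun hN =>
    (hN.mul (hG.comp measurable_snd)).lintegral_prod_right'
  have hsplit : ∀ x, ∫⁻ y, (N₁ x y + N₂ x y) * G y ∂μ =
      ∫⁻ y, N₁ x y * G y ∂μ + ∫⁻ y, N₂ x y * G y ∂μ := fun x => by
    simp only [add_mul]
    exact lintegral_add_left ((hN₁.comp measurable_prodMk_left).mul hG) _
  simp only [hsplit]
  rw [add_mul]
  exact (ENNReal.lintegral_Lp_add_le (hmeas hN₁).aemeasurable (hmeas hN₂).aemeasurable hq).trans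
    (add_le_add (h₁ G hG) (h₂ G hG))

end KernelStrongType

/-! ### The Hardy–Littlewood–Sobolev inequality for homogeneous kernels -/

section Threshold

variable {c e q : ℝ}

theorem coe_rpow_le_lintegral_of_forall_le_add (hc : 0 < c) (he : 0 < e) (hq : 1 < q) {v : ℝ≥0}
    {u : ℝ → ℝ≥0∞} (h : ∀ δ : ℝ, 0 < δ → v ≤ ENNReal.ofReal (c * δ ^ (-e)) + u δ) :
    (v : ℝ≥0∞) ^ q ≤ ENNReal.ofReal (2 * (e * (q - 1)) * (2 * c) ^ (q - 1)) *
      ∫⁻ δ in Ioi (0 : ℝ), ENNReal.ofReal (δ ^ (-(e * (q - 1)) - 1)) * u δ := by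
  have hq1 : 0 < q - 1 := sub_pos.2 hq
  rcases eq_or_ne v 0 with rfl | hv0
  · simp [ENNReal.zero_rpow_of_pos (zero_lt_one.trans hq)]
  have hv : (0 : ℝ) < v := by positivity
  -- the threshold beyond which the first summand is at most `v / 2`
  set δ₀ : ℝ := (v / (2 * c)) ^ (-1 / e) with hδ₀
  have hδ₀_pos : 0 < δ₀ := by positivity
  have half_le : ∀ δ ∈ Ioi δ₀, ENNReal.ofReal (v / 2) ≤ u δ := fun δ hδ => by
    have hfirst : c * δ ^ (-e) ≤ v / 2 := calc
      c * δ ^ (-e) ≤ c * δ₀ ^ (-e) := by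
        gcongr 1
        exact Real.rpow_le_rpow_of_nonpos hδ₀_pos hδ.le (neg_nonpos.2 he.le)
      _ = v / 2 := by
        rw [hδ₀, ← Real.rpow_mul (by positivity), show -1 / e * -e = 1 by field_simp, Real.rpow_one]
        field_simp
    refine (ENNReal.add_le_add_iff_left (a := ENNReal.ofReal (v / 2)) ENNReal.ofReal_ne_top).1 ?_
    rw [← ENNReal.ofReal_add (by positivity) (by positivity), add_halves, ENNReal.ofReal_coe_nnreal]
    exact (h δ (hδ₀_pos.trans hδ)).trans (by gcongr)
  calc (v : ℝ≥0∞) ^ q = ENNReal.ofReal (2 * (e * (q - 1)) * (2 * c) ^ (q - 1)) *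
        (ENNReal.ofReal (e * (q - 1))⁻¹ * ENNReal.ofReal (δ₀ ^ (-(e * (q - 1)))) *
          ENNReal.ofReal (v / 2)) := by
        have hpow : δ₀ ^ (-(e * (q - 1))) = (v / (2 * c)) ^ (q - 1) := by
          rw [hδ₀, ← Real.rpow_mul (by positivity)]; congr 1; field_simp
        rw [hpow, Real.div_rpow hv.le (by positivity), Real.rpow_sub_one hv.ne',
          ← ENNReal.ofReal_coe_nnreal, ENNReal.ofReal_rpow_of_pos hv]
        rw [← ENNReal.ofReal_mul (by positivity), ← ENNReal.ofReal_mul (by positivity),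
          ← ENNReal.ofReal_mul (by positivity)]
        congr 1
        field_simp
    _ ≤ _ := by
        gcongr
        rw [← neg_neg (e * (q - 1)), neg_neg (-_), ← lintegral_Ioi_rpow (by nlinarith) hδ₀_pos,
          ← lintegral_mul_const _ (by fun_prop)]
        refine (setLIntegral_mono' measurableSet_Ioi fun δ hδ => ?_).trans
          (lintegral_mono_set (Ioi_subset_Ioi hδ₀_pos.le))
        gcongr
        exact half_le δ hδ

theorem rpow_le_lintegral_of_forall_le_add (hc : 0 < c) (he : 0 < e) (hq : 1 < q) {v : ℝ≥0∞}
    {u : ℝ → ℝ≥0∞} (h : ∀ δ : ℝ, 0 < δ → v ≤ ENNReal.ofReal (c * δ ^ (-e)) + u δ) :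
    v ^ q ≤ ENNReal.ofReal (2 * (e * (q - 1)) * (2 * c) ^ (q - 1)) *
      ∫⁻ δ in Ioi (0 : ℝ), ENNReal.ofReal (δ ^ (-(e * (q - 1)) - 1)) * u δ := by
  induction v with
  | coe v => exact coe_rpow_le_lintegral_of_forall_le_add hc he hq h
  | top =>
    refine le_top.trans_eq (ENNReal.eq_top_of_forall_nnreal_le fun r => ?_).symm
    have hr := coe_rpow_le_lintegral_of_forall_le_add (v := r ^ q⁻¹) hc he hq
      fun δ hδ => le_top.trans (h δ hδ)
    rwa [ENNReal.coe_rpow_of_nonneg _ (by positivity), ENNReal.rpow_inv_rpow (by positivity)] at hr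

theorem setLIntegral_rpow_superlevel {k b : ℝ} (hk : 0 < k) (hb : 0 < b) {g : ℝ≥0∞} (hg : g ≠ ⊤) :
    ∫⁻ δ in {δ : ℝ | ENNReal.ofReal (δ ^ (-b)) < g} ∩ Ioi 0, ENNReal.ofReal (δ ^ (-k - 1)) =
      ENNReal.ofReal k⁻¹ * g ^ (k / b) := by
  lift g to ℝ≥0 using hg
  rcases eq_or_ne g 0 with rfl | hg0
  · simp [ENNReal.zero_rpow_of_pos (div_pos hk hb)]
  have hgpos : (0 : ℝ) < g := by positivity
  have hset : {δ : ℝ | ENNReal.ofReal (δ ^ (-b)) < g} ∩ Ioi 0 = Ioi ((g : ℝ) ^ (-(1 / b))) := by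
    ext δ
    simp only [mem_inter_iff, mem_ofPred_eq, mem_Ioi, ← ENNReal.ofReal_coe_nnreal,
      ENNReal.ofReal_lt_ofReal_iff hgpos]
    refine ⟨fun ⟨hδ, hpos⟩ => ?_, fun hδ => ?_⟩
    · have hlt := Real.rpow_lt_rpow_of_neg (by positivity) hδ (show -(1 / b) < 0 by simpa)
      rwa [← Real.rpow_mul hpos.le, show -b * -(1 / b) = 1 by field_simp, Real.rpow_one] at hlt
    · have hlt := Real.rpow_lt_rpow_of_neg (by positivity) hδ (neg_neg_of_pos hb)
      rw [← Real.rpow_mul hgpos.le, show -(1 / b) * -b = 1 by field_simp, Real.rpow_one] at hlt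
      exact ⟨hlt, (by positivity : (0 : ℝ) < (g : ℝ) ^ (-(1 / b))).trans hδ⟩
  rw [hset, lintegral_Ioi_rpow (neg_neg_of_pos hk) (by positivity), neg_neg,
    ← Real.rpow_mul hgpos.le, ← ENNReal.ofReal_coe_nnreal, ENNReal.ofReal_rpow_of_pos hgpos]
  congr 3
  field_simp

end Threshold

theorem lintegral_indicator_rpow {X : Type*} [MeasurableSpace X] {μ : Measure X} {A : Set X}
    (hA : MeasurableSet A) {a : ℝ} (ha : 0 < a) (K : X → ℝ≥0∞) :
    ∫⁻ w, A.indicator K w ^ a ∂μ = ∫⁻ w in A, K w ^ a ∂μ := by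
  rw [← lintegral_indicator hA]
  refine lintegral_congr fun w => ?_
  by_cases hw : w ∈ A
  · simp only [indicator_of_mem hw]
  · simp only [indicator_of_notMem hw, ENNReal.zero_rpow_of_pos ha]

theorem lintegral_lintegral_sub_mul {V : Type*} [MeasurableSpace V] [AddCommGroup V]
    [MeasurableAdd₂ V] [MeasurableNeg V] {μ : Measure V} [SFinite μ] [μ.IsAddRightInvariant]
    {K G : V → ℝ≥0∞} (hK : Measurable K) (hG : Measurable G) :
    ∫⁻ x, ∫⁻ y, K (x - y) * G y ∂μ ∂μ = (∫⁻ w, K w ∂μ) * ∫⁻ y, G y ∂μ := by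
  have hKsub : ∀ y, Measurable fun x => K (x - y) := fun y => by fun_prop
  rw [lintegral_lintegral_swap (by fun_prop)]
  simp only [lintegral_mul_const _ (hKsub _), lintegral_sub_right_eq_self]
  rw [lintegral_const_mul _ hG]

section Superlevel

variable {X : Type*} [MeasurableSpace X] {μ : Measure X} {G : X → ℝ≥0∞}

theorem measurable_superlevel_indicator (hG : Measurable G) (t : ℝ) :
    Measurable fun z : ℝ × X => {y | ENNReal.ofReal (z.1 ^ t) < G y}.indicator G z.2 :=
  (hG.comp measurable_snd).indicator (s := {z : ℝ × X | ENNReal.ofReal (z.1 ^ t) < G z.2})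
    (measurableSet_lt (by fun_prop) (by fun_prop))

theorem lintegral_superlevel_eq [SFinite μ] {k b : ℝ} (hk : 0 < k) (hb : 0 < b) (hG : Measurable G)
    (hfin : ∀ᵐ y ∂μ, G y ≠ ⊤) :
    ∫⁻ δ in Ioi (0 : ℝ), ∫⁻ y, ENNReal.ofReal (δ ^ (-k - 1)) *
        {y | ENNReal.ofReal (δ ^ (-b)) < G y}.indicator G y ∂μ =
      ENNReal.ofReal k⁻¹ * ∫⁻ y, G y ^ (k / b + 1) ∂μ := by
  rw [lintegral_lintegral_swap (by
      exact (Measurable.mul (by fun_prop) (measurable_superlevel_indicator hG _)).aemeasurable),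
    ← lintegral_const_mul' _ _ ENNReal.ofReal_ne_top]
  refine lintegral_congr_ae ?_
  filter_upwards [hfin] with y hy
  have hset : MeasurableSet {δ : ℝ | ENNReal.ofReal (δ ^ (-b)) < G y} :=
    measurableSet_lt (by fun_prop) measurable_const
  calc ∫⁻ δ in Ioi (0 : ℝ), ENNReal.ofReal (δ ^ (-k - 1)) *
        {y | ENNReal.ofReal (δ ^ (-b)) < G y}.indicator G y
      = ∫⁻ δ in {δ : ℝ | ENNReal.ofReal (δ ^ (-b)) < G y} ∩ Ioi 0,
          ENNReal.ofReal (δ ^ (-k - 1)) * G y := by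
        rw [← Measure.restrict_restrict hset, ← lintegral_indicator hset]
        refine lintegral_congr fun δ => ?_
        simp only [indicator, mem_ofPred_eq, mul_ite, mul_zero]
    _ = ENNReal.ofReal k⁻¹ * G y ^ (k / b + 1) := by
        rw [lintegral_mul_const _ (by fun_prop), setLIntegral_rpow_superlevel hk hb hy, mul_assoc,
          ENNReal.rpow_add_of_nonneg _ _ (by positivity) zero_le_one, ENNReal.rpow_one]

end Superlevel

theorem measurable_lintegral_truncated {E : Type*} [NormedAddCommGroup E]
    [SecondCountableTopology E] [MeasurableSpace E] [BorelSpace E] {μ : Measure E} [SFinite μ]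
    {K G : E → ℝ≥0∞} (hK : Measurable K) (hG : Measurable G) (t : ℝ) :
    Measurable fun z : E × ℝ => ∫⁻ y, {w | ‖w‖ ≤ z.2}.indicator K (z.1 - y) *
      {y | ENNReal.ofReal (z.2 ^ t) < G y}.indicator G y ∂μ := by
  have hnear : Measurable fun z : ℝ × E => {w | ‖w‖ ≤ z.1}.indicator K z.2 :=
    (hK.comp measurable_snd).indicator (s := {z : ℝ × E | ‖z.2‖ ≤ z.1})
      (measurableSet_le (by fun_prop) (by fun_prop))
  have hprod : Measurable fun z : (E × ℝ) × E => {w | ‖w‖ ≤ z.1.2}.indicator K (z.1.1 - z.2) *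
      {y | ENNReal.ofReal (z.1.2 ^ t) < G y}.indicator G z.2 :=
    (hnear.comp (f := fun z : (E × ℝ) × E => (z.1.2, z.1.1 - z.2)) (by fun_prop)).mul
      ((measurable_superlevel_indicator hG t).comp
        (f := fun z : (E × ℝ) × E => (z.1.2, z.2)) (by fun_prop))
  exact hprod.lintegral_prod_right'

theorem mul_le_far_add_near_add_superlevel {E : Type*} [NormedAddCommGroup E]
    (K G : E → ℝ≥0∞) (δ : ℝ) (t : ℝ≥0∞) (w y : E) :
    K w * G y ≤ {w | δ < ‖w‖}.indicator K w * G y + ({w | ‖w‖ ≤ δ}.indicator K w * t +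
      {w | ‖w‖ ≤ δ}.indicator K w * {y | t < G y}.indicator G y) := by
  rcases lt_or_ge δ ‖w‖ with hw | hw
  · rw [indicator_of_mem (by exact hw)]
    exact le_self_add
  rw [indicator_of_mem (s := {w | ‖w‖ ≤ δ}) (by exact hw)]
  rcases lt_or_ge t (G y) with hy | hy
  · rw [indicator_of_mem (s := {y | t < G y}) (by exact hy)]
    exact le_add_left le_add_self
  · exact le_add_left (le_add_right (by gcongr))

section HardyLittlewoodSobolev

variable {E : Type*} [NormedAddCommGroup E] [NormedSpace ℝ E] [FiniteDimensional ℝ E] [Nontrivial E]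
  [MeasurableSpace E] [BorelSpace E] {μ : Measure E} [μ.IsAddHaarMeasure]
  {α p p' q : ℝ} {K G : E → ℝ≥0∞}

local notation "dim" => (Module.finrank ℝ E : ℝ)

theorem exists_lintegral_far_mul_le (hK : Measurable K) (hom : PosHomogeneous (α - dim) K)
    (hpp : p'.HolderConjugate p) (hq : 0 < q) (hpq : 1 / q = 1 / p - α / dim)
    (hKp : ∫⁻ ω : sphere (0 : E) 1, K ω ^ p' ∂μ.toSphere < ⊤) :
    ∃ C : ℝ≥0∞, C ≠ ⊤ ∧ ∀ G : E → ℝ≥0∞, Measurable G → ∫⁻ y, G y ^ p ∂μ ≤ 1 → ∀ x, ∀ δ : ℝ, 0 < δ →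
      ∫⁻ y, {w | δ < ‖w‖}.indicator K (x - y) * G y ∂μ ≤ C * ENNReal.ofReal (δ ^ (-(dim / q))) := by
  have hdim : 0 < dim := Nat.cast_pos.2 Module.finrank_pos
  have hp' : 0 < p' := hpp.pos
  have hdeg : α - dim + dim / p' = -(dim / q) := by
    rw [div_eq_mul_one_div dim q, hpq, show 1 / p = 1 - 1 / p' by
      rw [one_div, one_div, ← hpp.inv_add_inv_eq_one]; ring]
    field_simp
    ring
  obtain ⟨C, hC, hfarLp⟩ := hom.exists_setLIntegral_lt_norm_rpow_le hK hp'
    (by rw [hdeg]; exact neg_neg_of_pos (by positivity)) hKp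
  refine ⟨C, hC, fun G hG hG1 x δ hδ => ?_⟩
  have hfar : MeasurableSet {w : E | δ < ‖w‖} := measurableSet_lt measurable_const measurable_norm
  have hKsub : Measurable fun y => {w | δ < ‖w‖}.indicator K (x - y) :=
    (hK.indicator hfar).comp (by fun_prop)
  calc ∫⁻ y, {w | δ < ‖w‖}.indicator K (x - y) * G y ∂μ
      ≤ (∫⁻ w in {w | δ < ‖w‖}, K w ^ p' ∂μ) ^ (1 / p') * 1 := by
        refine (ENNReal.lintegral_mul_le_Lp_mul_Lq _ hpp hKsub.aemeasurable
          hG.aemeasurable).trans ?_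
        gcongr ?_ ^ _ * ?_
        · rw [lintegral_sub_left_eq_self (fun w => {w | δ < ‖w‖}.indicator K w ^ p') x,
            lintegral_indicator_rpow hfar hp']
        · exact ENNReal.rpow_le_one hG1 (one_div_nonneg.2 hpp.symm.nonneg)
    _ ≤ C * ENNReal.ofReal (δ ^ (-(dim / q))) := by
        rw [mul_one, ← hdeg]
        exact hfarLp δ hδ

theorem lintegral_near (hK : Measurable K) (hom : PosHomogeneous (α - dim) K) (hα : 0 < α) {δ : ℝ}
    (hδ : 0 ≤ δ) :
    ∫⁻ w, {w | ‖w‖ ≤ δ}.indicator K w ∂μ =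
      (∫⁻ ω : sphere (0 : E) 1, K ω ∂μ.toSphere) * ENNReal.ofReal α⁻¹ * ENNReal.ofReal (δ ^ α) := by
  rw [lintegral_indicator (measurableSet_le measurable_norm measurable_const),
    hom.setLIntegral_norm_le hK (by linarith) hδ, sub_add_cancel]

theorem lintegral_near_mul_threshold (hK : Measurable K) (hom : PosHomogeneous (α - dim) K)
    (hα : 0 < α) (hpq : 1 / q = 1 / p - α / dim) (x : E) {δ : ℝ} (hδ : 0 < δ) :
    ∫⁻ y, {w | ‖w‖ ≤ δ}.indicator K (x - y) * ENNReal.ofReal (δ ^ (-(dim / p))) ∂μ =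
      (∫⁻ ω : sphere (0 : E) 1, K ω ∂μ.toSphere) * ENNReal.ofReal α⁻¹ *
        ENNReal.ofReal (δ ^ (-(dim / q))) := by
  have hnear : Measurable fun y => {w | ‖w‖ ≤ δ}.indicator K (x - y) :=
    (hK.indicator (measurableSet_le measurable_norm measurable_const)).comp (by fun_prop)
  have hexp : α + -(dim / p) = -(dim / q) := by
    have hdim : dim ≠ 0 := Nat.cast_ne_zero.2 Module.finrank_pos.ne'
    rw [div_eq_mul_one_div dim q, hpq]
    field_simp
    ring
  rw [lintegral_mul_const _ hnear, lintegral_sub_left_eq_self ({w | ‖w‖ ≤ δ}.indicator K) x,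
    lintegral_near hK hom hα hδ.le, mul_assoc, ← ENNReal.ofReal_mul (by positivity),
    ← Real.rpow_add hδ, hexp]

theorem exists_lintegral_sub_mul_le_add_truncated (hK : Measurable K)
    (hom : PosHomogeneous (α - dim) K) (hα : 0 < α) (hpp : p'.HolderConjugate p) (hq : 0 < q)
    (hpq : 1 / q = 1 / p - α / dim) (hKp : ∫⁻ ω : sphere (0 : E) 1, K ω ^ p' ∂μ.toSphere < ⊤) :
    ∃ c : ℝ, 0 < c ∧ ∀ G : E → ℝ≥0∞, Measurable G → ∫⁻ y, G y ^ p ∂μ ≤ 1 → ∀ x, ∀ δ : ℝ, 0 < δ →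
      ∫⁻ y, K (x - y) * G y ∂μ ≤ ENNReal.ofReal (c * δ ^ (-(dim / q))) +
        ∫⁻ y, {w | ‖w‖ ≤ δ}.indicator K (x - y) *
          {y | ENNReal.ofReal (δ ^ (-(dim / p))) < G y}.indicator G y ∂μ := by
  have hK1 : ∫⁻ ω : sphere (0 : E) 1, K ω ∂μ.toSphere < ⊤ := by
    simpa using lintegral_rpow_lt_top_of_exponent_le zero_le_one hpp.lt.le hKp
  obtain ⟨Cfar, hCfar, hfar_le⟩ := exists_lintegral_far_mul_le hK hom hpp hq hpq hKp
  set Cnear := (∫⁻ ω : sphere (0 : E) 1, K ω ∂μ.toSphere) * ENNReal.ofReal α⁻¹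
  have hfin : Cfar + Cnear ≠ ⊤ := by finiteness
  refine ⟨(Cfar + Cnear).toReal + 1, by positivity, fun G hG hG1 x δ hδ => ?_⟩
  have hfar : Measurable fun y => {w | δ < ‖w‖}.indicator K (x - y) :=
    (hK.indicator (measurableSet_lt measurable_const measurable_norm)).comp (by fun_prop)
  have hnear : Measurable fun y => {w | ‖w‖ ≤ δ}.indicator K (x - y) :=
    (hK.indicator (measurableSet_le measurable_norm measurable_const)).comp (by fun_prop)
  refine (lintegral_mono fun y => mul_le_far_add_near_add_superlevel K G δ
    (ENNReal.ofReal (δ ^ (-(dim / p)))) (x - y) y).trans ?_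
  rw [lintegral_add_left (by fun_prop), lintegral_add_left (by fun_prop), ← add_assoc]
  gcongr
  rw [lintegral_near_mul_threshold hK hom hα hpq x hδ, ENNReal.ofReal_mul (by positivity)]
  refine (add_le_add_left (hfar_le G hG hG1 x δ hδ) _).trans ?_
  rw [← add_mul, ENNReal.ofReal_add (by positivity) zero_le_one, ENNReal.ofReal_toReal hfin]
  gcongr ?_ * _
  exact le_self_add

theorem lintegral_truncated_eq (hK : Measurable K) (hom : PosHomogeneous (α - dim) K) (hα : 0 < α)
    (hG : Measurable G) (k t : ℝ) {δ : ℝ} (hδ : 0 < δ) :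
    ∫⁻ x, ENNReal.ofReal (δ ^ (-(k + α) - 1)) * ∫⁻ y, {w | ‖w‖ ≤ δ}.indicator K (x - y) *
        {y | ENNReal.ofReal (δ ^ t) < G y}.indicator G y ∂μ ∂μ =
      (∫⁻ ω : sphere (0 : E) 1, K ω ∂μ.toSphere) * ENNReal.ofReal α⁻¹ *
        ∫⁻ y, ENNReal.ofReal (δ ^ (-k - 1)) *
          {y | ENNReal.ofReal (δ ^ t) < G y}.indicator G y ∂μ := by
  have hsuper : Measurable ({y | ENNReal.ofReal (δ ^ t) < G y}.indicator G) :=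
    hG.indicator (measurableSet_lt measurable_const hG)
  have hexp : δ ^ (-k - 1) = δ ^ (-(k + α) - 1) * δ ^ α := by
    rw [← Real.rpow_add hδ]; congr 1; ring
  rw [lintegral_const_mul' _ _ ENNReal.ofReal_ne_top,
    lintegral_const_mul' _ _ ENNReal.ofReal_ne_top,
    lintegral_lintegral_sub_mul (hK.indicator (measurableSet_le measurable_norm measurable_const))
      hsuper, lintegral_near hK hom hα hδ.le, hexp, ENNReal.ofReal_mul (by positivity)]
  ring

theorem kernelStrongType_of_posHomogeneous (hK : Measurable K) (hom : PosHomogeneous (α - dim) K)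
    (hα : 0 < α) (hpp : p'.HolderConjugate p) (hq : 1 < q) (hpq : 1 / q = 1 / p - α / dim)
    (hKp : ∫⁻ ω : sphere (0 : E) 1, K ω ^ p' ∂μ.toSphere < ⊤) :
    KernelStrongType μ p q fun x y => K (x - y) := by
  have hq0 : 0 < q := zero_lt_one.trans hq
  have hp : 1 < p := hpp.symm.lt
  have hdim : 0 < dim := Nat.cast_pos.2 Module.finrank_pos
  have hk : 0 < dim - dim / p := sub_pos.2 (div_lt_self hdim hp)
  have hK1 : ∫⁻ ω : sphere (0 : E) 1, K ω ∂μ.toSphere < ⊤ := by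
    simpa using lintegral_rpow_lt_top_of_exponent_le zero_le_one hpp.lt.le hKp
  obtain ⟨c, hc, hpt⟩ := exists_lintegral_sub_mul_le_add_truncated hK hom hα hpp hq0 hpq hKp
  have hexp : dim / q * (q - 1) = dim - dim / p + α := by
    rw [mul_sub, div_mul_cancel₀ _ hq0.ne', mul_one, div_eq_mul_one_div dim q, hpq]
    field_simp
    ring
  set A := ENNReal.ofReal (2 * (dim - dim / p + α) * (2 * c) ^ (q - 1))
  set B := (∫⁻ ω : sphere (0 : E) 1, K ω ∂μ.toSphere) * ENNReal.ofReal α⁻¹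
  have hB : B ≠ ⊤ := by finiteness
  refine .of_normalized (C := A * (B * ENNReal.ofReal (dim - dim / p)⁻¹)) (by linarith) hq0
    (by finiteness) fun G hG hG1 => ?_
  have hexp' : (dim - dim / p) / (dim / p) + 1 = p := by field_simp; ring
  have hfin : ∀ᵐ y ∂μ, G y ≠ ⊤ := by
    filter_upwards [ae_lt_top (by fun_prop) (hG1.trans_lt ENNReal.one_lt_top).ne] with y hy hGy
    simp [hGy, ENNReal.top_rpow_of_pos (zero_lt_one.trans hp)] at hy
  refine (lintegral_mono fun x => rpow_le_lintegral_of_forall_le_add hc (by positivity) hq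
    (hpt G hG hG1 x)).trans ?_
  rw [lintegral_const_mul' _ _ ENNReal.ofReal_ne_top, hexp, lintegral_lintegral_swap (by
    exact (Measurable.mul (by fun_prop) (measurable_lintegral_truncated hK hG _)).aemeasurable),
    setLIntegral_congr_fun measurableSet_Ioi fun δ hδ => lintegral_truncated_eq hK hom hα hG _ _ hδ,
    lintegral_const_mul' _ _ hB, lintegral_superlevel_eq hk (by positivity) hG hfin, hexp']
  gcongr
  exact mul_le_of_le_one_right' hG1

end HardyLittlewoodSobolev

/-! ### Hardy-type kernels and the Stein–Weiss inequality -/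

section HardyMoment

variable {E : Type*} [NormedAddCommGroup E] [MeasurableSpace E] {μ : Measure E} {G N : E → ℝ≥0∞}
  {p p' e : ℝ}

/-- The `e * p`-th moment of `G ^ p` over `‖y‖ ^ e ≤ (2 * ‖x‖) ^ e`. This condition describes the
ball `‖y‖ ≤ 2 * ‖x‖` when `0 < e` and essentially its exterior when `e < 0`, so that both Hardy
operators are treated at once. -/
def hardyMoment (μ : Measure E) (e p : ℝ) (G : E → ℝ≥0∞) (x : E) : ℝ≥0∞ :=
  ∫⁻ y in {y | ‖y‖ ^ e ≤ (2 * ‖x‖) ^ e}, ENNReal.ofReal (‖y‖ ^ (e * p)) * G y ^ p ∂μ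

variable [BorelSpace E]

theorem hardyMoment_le (hp : 0 ≤ p) (x : E) :
    hardyMoment μ e p G x ≤ ENNReal.ofReal ((2 * ‖x‖) ^ (e * p)) * ∫⁻ y, G y ^ p ∂μ := by
  rw [← lintegral_const_mul' _ _ ENNReal.ofReal_ne_top]
  refine le_trans (setLIntegral_mono' (measurableSet_le (by fun_prop) (by fun_prop))
    fun y hy => ?_) (setLIntegral_le_lintegral _ _)
  rw [Real.rpow_mul (by positivity), Real.rpow_mul (by positivity)]
  gcongr ENNReal.ofReal (?_ ^ _) * _
  exact hy

theorem lintegral_mul_le_hardyMoment [NullSingletonClass μ] (hpp : p'.HolderConjugate p)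
    (hN : Measurable N) (hG : Measurable G) {x : E}
    (hsupp : ∀ y, N y ≠ 0 → ‖y‖ ^ e ≤ (2 * ‖x‖) ^ e) :
    ∫⁻ y, N y * G y ∂μ ≤ (∫⁻ y, (N y * ENNReal.ofReal (‖y‖ ^ (-e))) ^ p' ∂μ) ^ (1 / p') *
      hardyMoment μ e p G x ^ (1 / p) := by
  have hmeas : MeasurableSet {y : E | ‖y‖ ^ e ≤ (2 * ‖x‖) ^ e} :=
    measurableSet_le (by fun_prop) (by fun_prop)
  calc ∫⁻ y, N y * G y ∂μ
      = ∫⁻ y in {y | ‖y‖ ^ e ≤ (2 * ‖x‖) ^ e},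
          (N y * ENNReal.ofReal (‖y‖ ^ (-e))) * (ENNReal.ofReal (‖y‖ ^ e) * G y) ∂μ := by
        rw [← lintegral_indicator hmeas]
        refine lintegral_congr_ae ?_
        filter_upwards [Measure.ae_ne μ 0] with y hy
        by_cases hmem : y ∈ {y : E | ‖y‖ ^ e ≤ (2 * ‖x‖) ^ e}
        · have hcancel : ENNReal.ofReal (‖y‖ ^ (-e)) * ENNReal.ofReal (‖y‖ ^ e) = 1 := by
            rw [← ENNReal.ofReal_mul (by positivity), ← Real.rpow_add (norm_pos_iff.2 hy)]
            simp
          rw [indicator_of_mem hmem, mul_assoc, ← mul_assoc (ENNReal.ofReal _), hcancel, one_mul]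
        · rw [indicator_of_notMem hmem, not_not.1 (mt (hsupp y) hmem), zero_mul]
    _ ≤ _ := ENNReal.lintegral_mul_le_Lp_mul_Lq _ hpp (by fun_prop) (by fun_prop)
    _ ≤ _ := by
        gcongr ?_ ^ _ * ?_
        · exact one_div_nonneg.2 hpp.nonneg
        · exact setLIntegral_le_lintegral _ _
        · refine le_of_eq (congrArg (· ^ (1 / p)) (lintegral_congr fun y => ?_))
          rw [ENNReal.mul_rpow_of_nonneg _ _ hpp.symm.nonneg,
            ENNReal.ofReal_rpow_of_nonneg (by positivity) hpp.symm.nonneg,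
            Real.rpow_mul (norm_nonneg _)]

end HardyMoment

theorem mul_rpow_le_of_le_two_mul_rpow {d p q e s : ℝ} (hp : 0 < p) (hpq : p ≤ q) (hs : 0 < s)
    {C J : ℝ≥0∞} (hJ : J ≤ ENNReal.ofReal ((2 * s) ^ (e * p))) :
    (C * ENNReal.ofReal (s ^ (-(d / q) - e)) * J ^ (1 / p)) ^ q ≤
      C ^ q * ENNReal.ofReal (2 ^ (e * (q - p))) * (ENNReal.ofReal (s ^ (-d - e * p)) * J) := by
  have hq : 0 < q := hp.trans_le hpq
  have hexp : 0 ≤ q / p - 1 := sub_nonneg.2 ((one_le_div hp).2 hpq)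
  have hJq : J ^ (q / p) ≤ ENNReal.ofReal ((2 * s) ^ (e * (q - p))) * J := calc
    J ^ (q / p) = J ^ (q / p - 1) * J := by
      rw [← sub_add_cancel (q / p) 1, ENNReal.rpow_add_of_nonneg _ _ hexp zero_le_one,
        ENNReal.rpow_one, add_sub_cancel_right]
    _ ≤ ENNReal.ofReal ((2 * s) ^ (e * p)) ^ (q / p - 1) * J := by gcongr
    _ = ENNReal.ofReal ((2 * s) ^ (e * (q - p))) * J := by
      rw [ENNReal.ofReal_rpow_of_pos (by positivity), ← Real.rpow_mul (by positivity)]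
      congr 3
      field_simp
  calc (C * ENNReal.ofReal (s ^ (-(d / q) - e)) * J ^ (1 / p)) ^ q
      = C ^ q * ENNReal.ofReal (s ^ (-d - e * q)) * J ^ (q / p) := by
        rw [ENNReal.mul_rpow_of_nonneg _ _ hq.le, ENNReal.mul_rpow_of_nonneg _ _ hq.le,
          ENNReal.ofReal_rpow_of_pos (by positivity), ← Real.rpow_mul hs.le, ← ENNReal.rpow_mul,
          show (-(d / q) - e) * q = -d - e * q by field_simp, one_div_mul_eq_div]
    _ ≤ C ^ q * ENNReal.ofReal (s ^ (-d - e * q)) *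
          (ENNReal.ofReal ((2 * s) ^ (e * (q - p))) * J) := by gcongr
    _ = C ^ q * ENNReal.ofReal (s ^ (-d - e * q) * (2 * s) ^ (e * (q - p))) * J := by
        rw [ENNReal.ofReal_mul (by positivity)]; ring
    _ = C ^ q * ENNReal.ofReal (2 ^ (e * (q - p)) * s ^ (-d - e * p)) * J := by
        rw [Real.mul_rpow zero_le_two hs.le, mul_left_comm, ← Real.rpow_add hs]
        ring_nf
    _ = _ := by rw [ENNReal.ofReal_mul (by positivity)]; ring

section HardyKernel

variable {E : Type*} [NormedAddCommGroup E] [NormedSpace ℝ E] [FiniteDimensional ℝ E] [Nontrivial E]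
  [MeasurableSpace E] [BorelSpace E] {μ : Measure E} [μ.IsAddHaarMeasure] {p p' q e : ℝ}

local notation "dim" => (Module.finrank ℝ E : ℝ)

theorem exists_setLIntegral_norm_rpow_le (μ : Measure E) [μ.IsAddHaarMeasure] (hp : 0 < p)
    (he : e ≠ 0) : ∃ C : ℝ≥0∞, C ≠ ⊤ ∧ ∀ y : E, y ≠ 0 →
      ∫⁻ x in {x | ‖y‖ ^ e ≤ (2 * ‖x‖) ^ e}, ENNReal.ofReal (‖x‖ ^ (-dim - e * p)) ∂μ ≤
        C * ENNReal.ofReal (‖y‖ ^ (-(e * p))) := by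
  have hom : PosHomogeneous (-dim - e * p) fun x : E => ENNReal.ofReal (‖x‖ ^ (-dim - e * p)) :=
    .norm_rpow _
  have hfin : ∫⁻ ω : sphere (0 : E) 1, ENNReal.ofReal (‖(ω : E)‖ ^ (-dim - e * p)) ^ (1 : ℝ)
      ∂μ.toSphere < ⊤ := by
    simpa using ENNReal.mul_lt_top (ENNReal.natCast_lt_top _) measure_ball_lt_top
  have hdeg : -dim - e * p + dim / 1 = -(e * p) := by ring
  have scale : ∀ C : ℝ≥0∞, ∀ c : ℝ, 0 ≤ c → ∀ y : E,
      C * ENNReal.ofReal ((c * ‖y‖) ^ (-(e * p))) =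
        C * ENNReal.ofReal (c ^ (-(e * p))) * ENNReal.ofReal (‖y‖ ^ (-(e * p))) :=
          fun C c hc y => by
    rw [Real.mul_rpow hc (norm_nonneg _), ENNReal.ofReal_mul (by positivity), mul_assoc]
  rcases lt_or_gt_of_ne he with he | he
  · obtain ⟨C, hC, hle⟩ := hom.exists_setLIntegral_norm_le_rpow_le (by fun_prop) one_pos
      (by nlinarith) hfin
    simp only [hdeg, ENNReal.rpow_one, one_div_one] at hle
    refine ⟨C * ENNReal.ofReal ((1 / 2) ^ (-(e * p))), by finiteness, fun y hy => ?_⟩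
    have hy0 : 0 < ‖y‖ := norm_pos_iff.2 hy
    rw [← scale C _ (by norm_num)]
    refine (lintegral_mono_set fun x hx => ?_).trans (hle (1 / 2 * ‖y‖) (by positivity))
    by_contra hfar
    rw [mem_ofPred_eq, not_le] at hfar
    exact hx.not_gt (Real.rpow_lt_rpow_of_neg hy0 (by linarith) he)
  · obtain ⟨C, hC, hle⟩ := hom.exists_setLIntegral_lt_norm_rpow_le (by fun_prop) one_pos
      (by nlinarith) hfin
    simp only [hdeg, ENNReal.rpow_one, one_div_one] at hle
    refine ⟨C * ENNReal.ofReal ((1 / 4) ^ (-(e * p))), by finiteness, fun y hy => ?_⟩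
    have hy0 : 0 < ‖y‖ := norm_pos_iff.2 hy
    rw [← scale C _ (by norm_num)]
    refine (lintegral_mono_set fun x hx => ?_).trans (hle (1 / 4 * ‖y‖) (by positivity))
    have hxy := (Real.rpow_le_rpow_iff hy0.le (by positivity) he).1 hx
    rw [mem_ofPred_eq]
    linarith

theorem exists_lintegral_norm_rpow_mul_hardyMoment_le (μ : Measure E) [μ.IsAddHaarMeasure]
    (hp : 0 < p) (he : e ≠ 0) : ∃ C : ℝ≥0∞, C ≠ ⊤ ∧ ∀ G : E → ℝ≥0∞, Measurable G →
      ∫⁻ x, ENNReal.ofReal (‖x‖ ^ (-dim - e * p)) * hardyMoment μ e p G x ∂μ ≤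
        C * ∫⁻ y, G y ^ p ∂μ := by
  obtain ⟨C, hC, hle⟩ := exists_setLIntegral_norm_rpow_le μ hp he
  refine ⟨C, hC, fun G hG => ?_⟩
  set S : Set (E × E) := {z | ‖z.2‖ ^ e ≤ (2 * ‖z.1‖) ^ e}
  have hS : MeasurableSet S := measurableSet_le (by fun_prop) (by fun_prop)
  set F : E × E → ℝ≥0∞ := S.indicator fun z => ENNReal.ofReal (‖z.1‖ ^ (-dim - e * p)) *
    (ENNReal.ofReal (‖z.2‖ ^ (e * p)) * G z.2 ^ p)
  have hF : Measurable F := Measurable.indicator (by fun_prop) hS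
  calc ∫⁻ x, ENNReal.ofReal (‖x‖ ^ (-dim - e * p)) * hardyMoment μ e p G x ∂μ
      = ∫⁻ x, ∫⁻ y, F (x, y) ∂μ ∂μ := lintegral_congr fun x => by
        rw [hardyMoment, ← lintegral_const_mul' _ _ ENNReal.ofReal_ne_top,
          ← lintegral_indicator (measurableSet_le (by fun_prop) (by fun_prop))]
        rfl
    _ = ∫⁻ y, ∫⁻ x, F (x, y) ∂μ ∂μ := lintegral_lintegral_swap hF.aemeasurable
    _ = ∫⁻ y, (∫⁻ x in {x | ‖y‖ ^ e ≤ (2 * ‖x‖) ^ e}, ENNReal.ofReal (‖x‖ ^ (-dim - e * p)) ∂μ) *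
          (ENNReal.ofReal (‖y‖ ^ (e * p)) * G y ^ p) ∂μ := lintegral_congr fun y => by
        rw [← lintegral_mul_const _ (by fun_prop),
          ← lintegral_indicator (measurableSet_le (by fun_prop) (by fun_prop))]
        rfl
    _ ≤ ∫⁻ y, C * G y ^ p ∂μ := by
        refine lintegral_mono_ae ?_
        filter_upwards [Measure.ae_ne μ 0] with y hy
        refine (mul_le_mul_left (hle y hy) _).trans (le_of_eq ?_)
        rw [mul_assoc, ← mul_assoc (ENNReal.ofReal _), ← ENNReal.ofReal_mul (by positivity),
          ← Real.rpow_add (norm_pos_iff.2 hy)]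
        simp
    _ = C * ∫⁻ y, G y ^ p ∂μ := lintegral_const_mul' _ _ hC

theorem KernelStrongType.of_slice_le {N : E → E → ℝ≥0∞} (hpp : p'.HolderConjugate p) (hpq : p ≤ q)
    (he : e ≠ 0) {C : ℝ≥0∞} (hC : C ≠ ⊤) (hN : ∀ x, Measurable (N x))
    (hsupp : ∀ x, x ≠ 0 → ∀ y, N x y ≠ 0 → ‖y‖ ^ e ≤ (2 * ‖x‖) ^ e)
    (hslice : ∀ x, x ≠ 0 → (∫⁻ y, (N x y * ENNReal.ofReal (‖y‖ ^ (-e))) ^ p' ∂μ) ^ (1 / p') ≤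
      C * ENNReal.ofReal (‖x‖ ^ (-(dim / q) - e))) : KernelStrongType μ p q N := by
  have hp : 0 < p := hpp.symm.pos
  have hq : 0 < q := hp.trans_le hpq
  obtain ⟨D, hD, hmoment⟩ := exists_lintegral_norm_rpow_mul_hardyMoment_le μ hp he
  have hA : C ^ q * ENNReal.ofReal (2 ^ (e * (q - p))) ≠ ⊤ := by finiteness
  refine .of_normalized (C := C ^ q * ENNReal.ofReal (2 ^ (e * (q - p))) * D) hp hq (by finiteness)
    fun G hG hG1 => ?_
  calc ∫⁻ x, (∫⁻ y, N x y * G y ∂μ) ^ q ∂μ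
      ≤ ∫⁻ x, C ^ q * ENNReal.ofReal (2 ^ (e * (q - p))) *
          (ENNReal.ofReal (‖x‖ ^ (-dim - e * p)) * hardyMoment μ e p G x) ∂μ := by
        refine lintegral_mono_ae ?_
        filter_upwards [Measure.ae_ne μ 0] with x hx
        have hJ : hardyMoment μ e p G x ≤ ENNReal.ofReal ((2 * ‖x‖) ^ (e * p)) :=
          (hardyMoment_le hp.le x).trans (mul_le_of_le_one_right' hG1)
        refine le_trans ?_ (mul_rpow_le_of_le_two_mul_rpow hp hpq (norm_pos_iff.2 hx) hJ)
        gcongr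
        exact (lintegral_mul_le_hardyMoment hpp (hN x) hG (hsupp x hx)).trans
          (mul_le_mul_left (hslice x hx) _)
    _ = C ^ q * ENNReal.ofReal (2 ^ (e * (q - p))) *
          ∫⁻ x, ENNReal.ofReal (‖x‖ ^ (-dim - e * p)) * hardyMoment μ e p G x ∂μ :=
        lintegral_const_mul' _ _ hA
    _ ≤ C ^ q * ENNReal.ofReal (2 ^ (e * (q - p))) * D := by
        gcongr
        exact (hmoment G hG).trans (mul_le_of_le_one_right' hG1)

end HardyKernel

theorem rpow_le_two_rpow_abs_mul_rpow {s t : ℝ} (hs : 0 < s) (ht : 0 < t) (hst : s ≤ 2 * t)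
    (hts : t ≤ 2 * s) (γ : ℝ) : s ^ γ ≤ 2 ^ |γ| * t ^ γ := by
  rcases le_total 0 γ with hγ | hγ
  · rw [abs_of_nonneg hγ, ← Real.mul_rpow zero_le_two ht.le]
    exact Real.rpow_le_rpow hs.le hst hγ
  · rw [abs_of_nonpos hγ, Real.rpow_neg zero_le_two, ← Real.inv_rpow zero_le_two,
      ← Real.mul_rpow (by positivity) ht.le]
    exact Real.rpow_le_rpow_of_nonpos (by positivity) (by linarith) hγ

section SteinWeiss

/-- The kernel `‖x‖ ^ γ * K (x - y) * ‖y‖ ^ (-γ)`, as a function of the pair `(x, y)`: its bounds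
without weights are bounds for convolution with `K` in the power weight `‖x‖ ^ γ`. -/
def powerWeighted {E : Type*} [NormedAddCommGroup E] (γ : ℝ) (K : E → ℝ≥0∞) (z : E × E) : ℝ≥0∞ :=
  ENNReal.ofReal (‖z.1‖ ^ γ) * K (z.1 - z.2) * ENNReal.ofReal (‖z.2‖ ^ (-γ))

theorem lintegral_const_mul_rpow_rpow {X : Type*} [MeasurableSpace X] {μ : Measure X} {a : ℝ}
    (ha : 0 < a) {c : ℝ≥0∞} (hc : c ≠ ⊤) (f : X → ℝ≥0∞) :
    (∫⁻ x, (c * f x) ^ a ∂μ) ^ (1 / a) = c * (∫⁻ x, f x ^ a ∂μ) ^ (1 / a) := by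
  simp_rw [ENNReal.mul_rpow_of_nonneg _ _ ha.le]
  rw [lintegral_const_mul' _ _ (ENNReal.rpow_ne_top_of_nonneg ha.le hc),
    ENNReal.mul_rpow_of_nonneg _ _ (by positivity), ← ENNReal.rpow_mul, mul_one_div_cancel ha.ne',
    ENNReal.rpow_one]

theorem powerWeighted_mul_ofReal_norm_rpow {E : Type*} [NormedAddCommGroup E] (γ δ : ℝ)
    (K : E → ℝ≥0∞) (x : E) {y : E} (hy : y ≠ 0) :
    powerWeighted γ K (x, y) * ENNReal.ofReal (‖y‖ ^ δ) =
      ENNReal.ofReal (‖x‖ ^ γ) * (K (x - y) * ENNReal.ofReal (‖y‖ ^ (δ - γ))) := by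
  rw [powerWeighted, sub_eq_neg_add δ, Real.rpow_add (norm_pos_iff.2 hy),
    ENNReal.ofReal_mul (by positivity)]
  ring

section Measurability

variable {E : Type*} [NormedAddCommGroup E] [SecondCountableTopology E] [MeasurableSpace E]
  [BorelSpace E] {γ : ℝ} {K : E → ℝ≥0∞}

theorem measurable_powerWeighted (hK : Measurable K) : Measurable (powerWeighted γ K) := by
  unfold powerWeighted
  fun_prop

theorem measurable_indicator_near_powerWeighted (hK : Measurable K) :
    Measurable ({z | ‖z.1 - z.2‖ ≤ ‖z.1‖ / 2}.indicator (powerWeighted γ K)) :=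
  (measurable_powerWeighted hK).indicator (measurableSet_le (by fun_prop) (by fun_prop))

theorem measurable_indicator_middle_powerWeighted (hK : Measurable K) :
    Measurable (({z | ‖z.1‖ / 2 < ‖z.1 - z.2‖} ∩ {z | ‖z.2‖ < 2 * ‖z.1‖}).indicator
      (powerWeighted γ K)) :=
  (measurable_powerWeighted hK).indicator ((measurableSet_lt (by fun_prop) (by fun_prop)).inter
    (measurableSet_lt (by fun_prop) (by fun_prop)))

theorem measurable_indicator_outer_powerWeighted (hK : Measurable K) :
    Measurable ({z | 2 * ‖z.1‖ ≤ ‖z.2‖}.indicator (powerWeighted γ K)) :=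
  (measurable_powerWeighted hK).indicator (measurableSet_le (by fun_prop) (by fun_prop))

end Measurability

variable {E : Type*} [NormedAddCommGroup E] [NormedSpace ℝ E] [FiniteDimensional ℝ E] [Nontrivial E]
  [MeasurableSpace E] [BorelSpace E] {μ : Measure E} [μ.IsAddHaarMeasure] {K : E → ℝ≥0∞}
  {α γ p p' q a c e : ℝ}

local notation "dim" => (Module.finrank ℝ E : ℝ)

theorem kernelStrongType_powerWeighted_near (hK : Measurable K)
    (hom : PosHomogeneous (α - dim) K) (hα : 0 < α) (hpp : p'.HolderConjugate p) (hq : 1 < q)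
    (hpq : 1 / q = 1 / p - α / dim) (hKp : ∫⁻ ω : sphere (0 : E) 1, K ω ^ p' ∂μ.toSphere < ⊤) :
    KernelStrongType μ p q
      (Function.curry ({z | ‖z.1 - z.2‖ ≤ ‖z.1‖ / 2}.indicator (powerWeighted γ K))) := by
  have hq0 : 0 < q := zero_lt_one.trans hq
  refine ((kernelStrongType_of_posHomogeneous hK hom hα hpp hq hpq hKp).const_mul hq0
    (c := ENNReal.ofReal (2 ^ |γ|)) ENNReal.ofReal_ne_top).mono hq0 ?_
  filter_upwards [Measure.ae_ne μ 0] with x hx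
  refine ae_of_all _ fun y => indicator_apply_le' (fun hmem => ?_) fun _ => zero_le
  have hnear : ‖x - y‖ ≤ ‖x‖ / 2 := hmem
  have hx0 : 0 < ‖x‖ := norm_pos_iff.2 hx
  have hxy := norm_sub_norm_le x y
  have hyx := norm_sub_rev x y ▸ norm_sub_norm_le y x
  have hy0 : 0 < ‖y‖ := by linarith
  have hcomp := rpow_le_two_rpow_abs_mul_rpow hx0 hy0 (by linarith) (by linarith) γ
  calc powerWeighted γ K (x, y)
      ≤ ENNReal.ofReal (2 ^ |γ| * ‖y‖ ^ γ) * K (x - y) * ENNReal.ofReal (‖y‖ ^ (-γ)) := by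
        unfold powerWeighted; gcongr
    _ = ENNReal.ofReal (2 ^ |γ| * (‖y‖ ^ γ * ‖y‖ ^ (-γ))) * K (x - y) := by
        rw [mul_right_comm, ← ENNReal.ofReal_mul (by positivity), mul_assoc (2 ^ |γ|)]
    _ = ENNReal.ofReal (2 ^ |γ|) * K (x - y) := by
        rw [← Real.rpow_add hy0, add_neg_cancel, Real.rpow_zero, mul_one]

theorem exists_lintegral_far_mul_ball_rpow_le {β δ : ℝ} (hK : Measurable K)
    (hom : PosHomogeneous β K) (hp' : 0 < p') (ha : p' < a) (hc : 0 < c)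
    (hac : 1 / p' = 1 / a + 1 / c) (hβ : β + dim / a < 0) (hδ : 0 < δ + dim / c)
    (hKa : ∫⁻ ω : sphere (0 : E) 1, K ω ^ a ∂μ.toSphere < ⊤) :
    ∃ C : ℝ≥0∞, C ≠ ⊤ ∧ ∀ x : E, ∀ ρ : ℝ, 0 < ρ →
      (∫⁻ y, ({w | ρ / 2 < ‖w‖}.indicator K (x - y) * {y | ‖y‖ ≤ 2 * ρ}.indicator
        (fun y => ENNReal.ofReal (‖y‖ ^ δ)) y) ^ p' ∂μ) ^ (1 / p') ≤
      C * ENNReal.ofReal (ρ ^ (β + dim / a + (δ + dim / c))) := by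
  have ha0 : 0 < a := hp'.trans ha
  obtain ⟨A, hA, hKle⟩ := hom.exists_setLIntegral_lt_norm_rpow_le hK ha0 hβ hKa
  obtain ⟨B, hB, hwle⟩ := (PosHomogeneous.norm_rpow (E := E) δ).exists_setLIntegral_norm_le_rpow_le
    (μ := μ) (by fun_prop) hc hδ (by
      simpa using ENNReal.mul_lt_top (ENNReal.natCast_lt_top _) measure_ball_lt_top)
  refine ⟨A * ENNReal.ofReal (2⁻¹ ^ (β + dim / a)) * (B * ENNReal.ofReal (2 ^ (δ + dim / c))),
    by finiteness, fun x ρ hρ => ?_⟩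
  have hfar : MeasurableSet {w : E | ρ / 2 < ‖w‖} := measurableSet_lt (by fun_prop) (by fun_prop)
  have hball : MeasurableSet {y : E | ‖y‖ ≤ 2 * ρ} := measurableSet_le (by fun_prop) (by fun_prop)
  refine (ENNReal.lintegral_Lp_mul_le_Lq_mul_Lr hp' ha hac μ
    (f := fun y => {w | ρ / 2 < ‖w‖}.indicator K (x - y))
    ((hK.indicator hfar).comp (by fun_prop)).aemeasurable
    (Measurable.indicator (by fun_prop) hball).aemeasurable).trans ?_
  calc _ ≤ A * ENNReal.ofReal ((ρ / 2) ^ (β + dim / a)) *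
        (B * ENNReal.ofReal ((2 * ρ) ^ (δ + dim / c))) := by
        refine mul_le_mul' ?_ ?_
        · rw [lintegral_sub_left_eq_self (fun w => {w | ρ / 2 < ‖w‖}.indicator K w ^ a),
            lintegral_indicator_rpow hfar ha0]
          exact hKle _ (by positivity)
        · rw [lintegral_indicator_rpow hball hc]
          exact hwle _ (by positivity)
    _ = _ := by
        rw [Real.rpow_add hρ (β + dim / a), div_eq_inv_mul, Real.mul_rpow (by positivity) hρ.le,
          Real.mul_rpow zero_le_two hρ.le]
        simp only [ENNReal.ofReal_mul (Real.rpow_nonneg _ _), inv_nonneg, zero_le_two, hρ.le]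
        ring

theorem kernelStrongType_powerWeighted_middle (hK : Measurable K)
    (hom : PosHomogeneous (α - dim) K) (hpp : p'.HolderConjugate p) (hpq : p ≤ q)
    (hexp : dim / q = dim / p - α) (hap : p' < a) (hc : 0 < c) (hac : 1 / p' = 1 / a + 1 / c)
    (he : 0 < e) (hα : α - dim + dim / a < 0) (hγ : 0 < -e - γ + dim / c)
    (hKa : ∫⁻ ω : sphere (0 : E) 1, K ω ^ a ∂μ.toSphere < ⊤) :
    KernelStrongType μ p q (Function.curry
      (({z | ‖z.1‖ / 2 < ‖z.1 - z.2‖} ∩ {z | ‖z.2‖ < 2 * ‖z.1‖}).indicator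
        (powerWeighted γ K))) := by
  obtain ⟨C, hC, hle⟩ := exists_lintegral_far_mul_ball_rpow_le hK hom hpp.pos hap hc hac hα hγ hKa
  refine .of_slice_le hpp hpq he.ne' hC
    (fun x => (measurable_indicator_middle_powerWeighted hK).comp (by fun_prop))
    (fun x _ y hxy => ?_) fun x hx => ?_
  · have hy : ‖y‖ < 2 * ‖x‖ := (mem_of_indicator_ne_zero hxy).2
    gcongr
  have hx0 : 0 < ‖x‖ := norm_pos_iff.2 hx
  have hdeg : -(dim / q) - e = γ + (α - dim + dim / a + (-e - γ + dim / c)) := by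
    rw [hexp, div_eq_mul_one_div dim p, one_div, ← hpp.one_sub_inv, ← one_div, hac]
    ring
  rw [hdeg, Real.rpow_add hx0, ENNReal.ofReal_mul (by positivity), mul_left_comm]
  refine le_trans ?_ (mul_le_mul_right (hle x ‖x‖ hx0) _)
  rw [← lintegral_const_mul_rpow_rpow hpp.pos ENNReal.ofReal_ne_top]
  refine ENNReal.rpow_le_rpow (lintegral_mono_ae ?_) (one_div_nonneg.2 hpp.nonneg)
  filter_upwards [Measure.ae_ne μ 0] with y hy
  refine ENNReal.rpow_le_rpow ?_ hpp.nonneg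
  by_cases hmem : ‖x‖ / 2 < ‖x - y‖ ∧ ‖y‖ < 2 * ‖x‖
  · have hfar : x - y ∈ {w | ‖x‖ / 2 < ‖w‖} := hmem.1
    have hball : y ∈ {y | ‖y‖ ≤ 2 * ‖x‖} := hmem.2.le
    rw [indicator_of_mem hfar, indicator_of_mem hball,
      ← powerWeighted_mul_ofReal_norm_rpow γ (-e) K x hy]
    gcongr
    exact indicator_apply_le fun _ => le_rfl
  · simp [Function.curry, hmem]

theorem indicator_outer_powerWeighted_mul_le {E : Type*} [NormedAddCommGroup E] {e γ : ℝ} {x : E}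
    (hx : 0 < ‖x‖) (K : E → ℝ≥0∞) (y : E) :
    {z : E × E | 2 * ‖z.1‖ ≤ ‖z.2‖}.indicator (powerWeighted γ K) (x, y) *
        ENNReal.ofReal (‖y‖ ^ (-e)) ≤
      ENNReal.ofReal (‖x‖ ^ γ) * (ENNReal.ofReal (2 ^ |-e - γ|) *
        {w | ‖x‖ / 2 < ‖w‖}.indicator (fun w => K w * ENNReal.ofReal (‖w‖ ^ (-e - γ)))
          (x - y)) := by
  by_cases hmem : (x, y) ∈ {z : E × E | 2 * ‖z.1‖ ≤ ‖z.2‖}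
  · have hy : 2 * ‖x‖ ≤ ‖y‖ := hmem
    have hle := norm_sub_le x y
    have hge := norm_sub_rev x y ▸ norm_sub_norm_le y x
    have hfar : x - y ∈ {w | ‖x‖ / 2 < ‖w‖} := by rw [mem_ofPred_eq]; linarith
    have hcomp := rpow_le_two_rpow_abs_mul_rpow (s := ‖y‖) (t := ‖x - y‖) (by linarith)
      (by linarith) (by linarith) (by linarith) (-e - γ)
    rw [indicator_of_mem hmem, indicator_of_mem hfar,
      powerWeighted_mul_ofReal_norm_rpow _ _ _ _ (norm_pos_iff.1 (by linarith)),
      mul_left_comm (ENNReal.ofReal (2 ^ _)), ← ENNReal.ofReal_mul (by positivity)]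
    gcongr
  · simp [indicator_of_notMem hmem]

theorem kernelStrongType_powerWeighted_outer (hK : Measurable K)
    (hom : PosHomogeneous (α - dim) K) (hpp : p'.HolderConjugate p) (hpq : p ≤ q)
    (hexp : dim / q = dim / p - α) (he : e < 0) (hγ : α - dim / p - e < γ)
    (hKp : ∫⁻ ω : sphere (0 : E) 1, K ω ^ p' ∂μ.toSphere < ⊤) :
    KernelStrongType μ p q
      (Function.curry ({z | 2 * ‖z.1‖ ≤ ‖z.2‖}.indicator (powerWeighted γ K))) := by
  have hdeg : α - dim + (-e - γ) + dim / p' = α - dim / p - e - γ := by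
    rw [div_eq_mul_inv, ← hpp.symm.one_sub_inv]
    ring
  obtain ⟨C, hC, hle⟩ := (hom.mul (.norm_rpow (-e - γ))).exists_setLIntegral_lt_norm_rpow_le
    (μ := μ) (by fun_prop) hpp.pos (by linarith) (by simpa using hKp)
  refine .of_slice_le hpp hpq he.ne (C := ENNReal.ofReal (2 ^ |-e - γ|) * (C * ENNReal.ofReal
    (2⁻¹ ^ (α - dim + (-e - γ) + dim / p')))) (by finiteness)
    (fun x => (measurable_indicator_outer_powerWeighted hK).comp (by fun_prop))
    (fun x hx y hxy => ?_) fun x hx => ?_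
  · have hmem : (x, y) ∈ {z : E × E | 2 * ‖z.1‖ ≤ ‖z.2‖} := mem_of_indicator_ne_zero hxy
    exact Real.rpow_le_rpow_of_nonpos (by positivity) hmem he.le
  have hx0 : 0 < ‖x‖ := norm_pos_iff.2 hx
  calc _ ≤ (∫⁻ y, (ENNReal.ofReal (‖x‖ ^ γ) * (ENNReal.ofReal (2 ^ |-e - γ|) *
        {w | ‖x‖ / 2 < ‖w‖}.indicator (fun w => K w * ENNReal.ofReal (‖w‖ ^ (-e - γ)))
          (x - y))) ^ p' ∂μ) ^ (1 / p') := by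
        refine ENNReal.rpow_le_rpow (lintegral_mono fun y => ENNReal.rpow_le_rpow ?_ hpp.nonneg)
          (one_div_nonneg.2 hpp.nonneg)
        exact indicator_outer_powerWeighted_mul_le hx0 K y
    _ = ENNReal.ofReal (‖x‖ ^ γ) * (ENNReal.ofReal (2 ^ |-e - γ|) *
        (∫⁻ w in {w | ‖x‖ / 2 < ‖w‖}, (K w * ENNReal.ofReal (‖w‖ ^ (-e - γ))) ^ p'
          ∂μ) ^ (1 / p')) := by
        rw [lintegral_const_mul_rpow_rpow hpp.pos ENNReal.ofReal_ne_top,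
          lintegral_const_mul_rpow_rpow hpp.pos ENNReal.ofReal_ne_top,
          lintegral_sub_left_eq_self (fun w => {w | ‖x‖ / 2 < ‖w‖}.indicator _ w ^ p'),
          lintegral_indicator_rpow (measurableSet_lt (by fun_prop) (by fun_prop)) hpp.pos]
    _ ≤ ENNReal.ofReal (‖x‖ ^ γ) * (ENNReal.ofReal (2 ^ |-e - γ|) *
        (C * ENNReal.ofReal ((‖x‖ / 2) ^ (α - dim + (-e - γ) + dim / p')))) := by
        gcongr _ * (_ * ?_)
        exact hle (‖x‖ / 2) (by positivity)
    _ = _ := by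
        rw [show -(dim / q) - e = γ + (α - dim + (-e - γ) + dim / p') by rw [hexp, hdeg]; ring,
          Real.rpow_add hx0, div_eq_inv_mul, Real.mul_rpow (by positivity) hx0.le,
          ENNReal.ofReal_mul (Real.rpow_nonneg (by positivity) _),
          ENNReal.ofReal_mul (by positivity)]
        ring

theorem kernelStrongType_powerWeighted (hK : Measurable K) (hom : PosHomogeneous (α - dim) K)
    (hα : 0 < α) (hpp : p'.HolderConjugate p) (hq : 0 < q) (hpq : 1 / q = 1 / p - α / dim)
    (ha : 0 < a) (hap : 1 / a + 1 / p < 1) (hαa : α < dim - dim / a) (hγ₁ : α - dim / p < γ)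
    (hγ₂ : γ < dim * (1 - 1 / a - 1 / p))
    (hKa : ∫⁻ ω : sphere (0 : E) 1, K ω ^ a ∂μ.toSphere < ⊤) :
    KernelStrongType μ p q (Function.curry (powerWeighted γ K)) := by
  have hdim : 0 < dim := Nat.cast_pos.2 Module.finrank_pos
  have hp : 0 < p := hpp.symm.pos
  have hp_le_q : p ≤ q := by
    rw [← one_div_le_one_div hq hp, hpq]
    exact sub_le_self _ (by positivity)
  have hq1 : 1 < q := hpp.symm.lt.trans_le hp_le_q
  have hexp : dim / q = dim / p - α := by
    rw [div_eq_mul_one_div, hpq]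
    field_simp
  have hp'inv : 1 / p' = 1 - 1 / p := by simp only [one_div, hpp.symm.one_sub_inv]
  have hp'a : p' < a := by
    rw [← one_div_lt_one_div ha hpp.pos, hp'inv]
    linarith
  have hKp := lintegral_rpow_lt_top_of_exponent_le hpp.nonneg hp'a.le hKa
  obtain ⟨c, hc, hcinv⟩ : ∃ c : ℝ, 0 < c ∧ 1 / c = 1 - 1 / a - 1 / p :=
    ⟨(1 - 1 / a - 1 / p)⁻¹, inv_pos.2 (by linarith), by simp⟩
  have hγc : γ < dim / c := by rwa [div_eq_mul_one_div, hcinv]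
  obtain ⟨e, he, hγe⟩ := exists_between (sub_pos.2 hγc)
  obtain ⟨e', he', hγe'⟩ := exists_between (sub_pos.2 hγ₁)
  have near := kernelStrongType_powerWeighted_near (γ := γ) hK hom hα hpp hq1 hpq hKp
  have middle := kernelStrongType_powerWeighted_middle (γ := γ) (e := e) hK hom hpp hp_le_q hexp
    hp'a hc (by linarith) he (by linarith) (by linarith) hKa
  have outer := kernelStrongType_powerWeighted_outer (γ := γ) (e := -e') hK hom hpp hp_le_q hexp
    (neg_lt_zero.2 he') (by linarith) hKp
  have hnear := measurable_indicator_near_powerWeighted (γ := γ) hK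
  have hmiddle := measurable_indicator_middle_powerWeighted (γ := γ) hK
  have houter := measurable_indicator_outer_powerWeighted (γ := γ) hK
  refine ((near.add middle hnear hmiddle hq1.le).add outer (hnear.add hmiddle) houter hq1.le).mono
    hq (ae_of_all _ fun x => ae_of_all _ fun y => ?_)
  rcases le_or_gt ‖x - y‖ (‖x‖ / 2) with hxy | hxy
  · exact le_add_right (le_add_right (le_indicator_apply (fun _ => le_rfl) (absurd hxy)))
  rcases lt_or_ge ‖y‖ (2 * ‖x‖) with hyx | hyx
  · exact le_add_right (le_add_left (le_indicator_apply (fun _ => le_rfl) (absurd ⟨hxy, hyx⟩)))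
  · exact le_add_left (le_indicator_apply (fun _ => le_rfl) (absurd hyx))

end SteinWeiss

/-! ### Young's inequality and truncated potentials of homogeneous functions -/

theorem lintegral_rpow_mul_rpow_mul_rpow_le {X : Type*} [MeasurableSpace X] {μ : Measure X}
    {f g h : X → ℝ≥0∞} (hf : AEMeasurable f μ) (hg : AEMeasurable g μ) (hh : AEMeasurable h μ)
    {a b c : ℝ} (ha : 0 ≤ a) (hb : 0 ≤ b) (hc : 0 ≤ c) (habc : a + b + c = 1) :
    ∫⁻ x, f x ^ a * g x ^ b * h x ^ c ∂μ ≤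
      (∫⁻ x, f x ∂μ) ^ a * (∫⁻ x, g x ∂μ) ^ b * (∫⁻ x, h x ∂μ) ^ c := by
  have holder := ENNReal.lintegral_prod_norm_pow_le (μ := μ) Finset.univ (f := ![f, g, h])
    (p := ![a, b, c]) (fun i _ => by fin_cases i <;> assumption)
    (by simpa [Fin.sum_univ_three] using habc) fun i _ => by fin_cases i <;> assumption
  simpa [Fin.prod_univ_three] using holder

section Young

variable {V : Type*} [MeasurableSpace V] [AddCommGroup V] [MeasurableAdd₂ V] [MeasurableNeg V]
  {μ : Measure V} [μ.IsAddLeftInvariant] [μ.IsNegInvariant]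
  {f g : V → ℝ≥0∞} {r b a : ℝ}

theorem lintegral_mul_sub_le_young (hf : Measurable f) (hg : Measurable g) (hr : 1 ≤ r)
    (hb : 1 ≤ b) (ha : 0 < a) (hab : 1 / a + 1 = 1 / r + 1 / b) (w : V) :
    ∫⁻ y, f y * g (w - y) ∂μ ≤ (∫⁻ y, f y ^ r * g (w - y) ^ b ∂μ) ^ (1 / a) *
      (∫⁻ y, f y ^ r ∂μ) ^ (1 - 1 / b) * (∫⁻ y, g y ^ b ∂μ) ^ (1 - 1 / r) := by
  have hb' : 0 ≤ 1 - 1 / b := sub_nonneg.2 ((div_le_one (by linarith)).2 hb)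
  have hr' : 0 ≤ 1 - 1 / r := sub_nonneg.2 ((div_le_one (by linarith)).2 hr)
  have split (u v : ℝ≥0∞) : u * v =
      (u ^ r * v ^ b) ^ (1 / a) * (u ^ r) ^ (1 - 1 / b) * (v ^ b) ^ (1 - 1 / r) := by
    rw [ENNReal.mul_rpow_of_nonneg _ _ (by positivity), mul_assoc, mul_mul_mul_comm,
      ← ENNReal.rpow_add_of_nonneg _ _ (by positivity) hb',
      ← ENNReal.rpow_add_of_nonneg _ _ (by positivity) hr', ← ENNReal.rpow_mul, ← ENNReal.rpow_mul,
      show r * (1 / a + (1 - 1 / b)) = 1 by rw [eq_sub_of_add_eq hab]; field_simp; ring,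
      show b * (1 / a + (1 - 1 / r)) = 1 by rw [eq_sub_of_add_eq hab]; field_simp; ring,
      ENNReal.rpow_one, ENNReal.rpow_one]
  simp_rw [split (f _) (g _)]
  refine (lintegral_rpow_mul_rpow_mul_rpow_le (by fun_prop) (by fun_prop) (by fun_prop)
    (by positivity) hb' hr' (by linarith)).trans_eq ?_
  rw [lintegral_sub_left_eq_self (fun y => g y ^ b) w]

theorem lintegral_convolution_rpow_le [SFinite μ] (hf : Measurable f) (hg : Measurable g)
    (hr : 1 ≤ r) (hb : 1 ≤ b) (ha : 0 < a) (hab : 1 / a + 1 = 1 / r + 1 / b) :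
    (∫⁻ w, (∫⁻ y, f y * g (w - y) ∂μ) ^ a ∂μ) ^ (1 / a) ≤
      (∫⁻ y, f y ^ r ∂μ) ^ (1 / r) * (∫⁻ y, g y ^ b ∂μ) ^ (1 / b) := by
  set F := ∫⁻ y, f y ^ r ∂μ
  set G := ∫⁻ y, g y ^ b ∂μ
  have hb' : 0 ≤ 1 - 1 / b := sub_nonneg.2 ((div_le_one (by linarith)).2 hb)
  have hr' : 0 ≤ 1 - 1 / r := sub_nonneg.2 ((div_le_one (by linarith)).2 hr)
  have hpow (w : V) : (∫⁻ y, f y * g (w - y) ∂μ) ^ a ≤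
      (∫⁻ y, g (w - y) ^ b * f y ^ r ∂μ) * (F ^ (1 - 1 / b) * G ^ (1 - 1 / r)) ^ a := by
    refine (ENNReal.rpow_le_rpow (lintegral_mul_sub_le_young hf hg hr hb ha hab w)
      ha.le).trans_eq ?_
    rw [mul_assoc, ENNReal.mul_rpow_of_nonneg _ _ ha.le, ← ENNReal.rpow_mul,
      one_div_mul_cancel ha.ne', ENNReal.rpow_one]
    simp only [mul_comm, F, G]
  have hmeas : Measurable fun w => ∫⁻ y, g (w - y) ^ b * f y ^ r ∂μ :=
    Measurable.lintegral_prod_right' (f := fun z : V × V => g (z.1 - z.2) ^ b * f z.2 ^ r)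
      (by fun_prop)
  calc (∫⁻ w, (∫⁻ y, f y * g (w - y) ∂μ) ^ a ∂μ) ^ (1 / a)
      ≤ (G * F * (F ^ (1 - 1 / b) * G ^ (1 - 1 / r)) ^ a) ^ (1 / a) := by
        refine ENNReal.rpow_le_rpow ((lintegral_mono hpow).trans_eq ?_) (by positivity)
        rw [lintegral_mul_const _ hmeas, lintegral_lintegral_sub_mul (K := fun y => g y ^ b)
          (G := fun y => f y ^ r) (by fun_prop) (by fun_prop)]
    _ = F ^ (1 / a + (1 - 1 / b)) * G ^ (1 / a + (1 - 1 / r)) := by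
        rw [ENNReal.mul_rpow_of_nonneg _ _ (by positivity), ← ENNReal.rpow_mul,
          mul_one_div_cancel ha.ne', ENNReal.rpow_one,
          ENNReal.mul_rpow_of_nonneg _ _ (by positivity),
          mul_comm (G ^ _), mul_mul_mul_comm, ← ENNReal.rpow_add_of_nonneg _ _ (by positivity) hb',
          ← ENNReal.rpow_add_of_nonneg _ _ (by positivity) hr']
    _ = F ^ (1 / r) * G ^ (1 / b) := by
        rw [eq_sub_of_add_eq hab]
        congr 2 <;> ring

end Young

section TruncatedPotential

variable {E : Type*} [NormedAddCommGroup E] {U : E → ℝ≥0∞} {β γ : ℝ}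

theorem mul_norm_sub_rpow_le_far_add_near {w y : E} (hw : ‖w‖ ∈ Ioc (1 : ℝ) 2)
    (hy : ‖w - y‖ < 2 * ‖y‖) :
    U y * ENNReal.ofReal (‖w - y‖ ^ γ) ≤
      {y | 4 < ‖y‖}.indicator
        (fun y => ENNReal.ofReal (2 ^ |γ|) * (U y * ENNReal.ofReal (‖y‖ ^ γ))) y +
      {y | ‖y‖ ∈ Ioc (1 / 3 : ℝ) 4}.indicator U y *
        {z | ‖z‖ ≤ 8}.indicator (fun z => ENNReal.ofReal (‖z‖ ^ γ)) (w - y) := by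
  obtain ⟨hw₁, hw₂⟩ := hw
  have hw_le : ‖w‖ ≤ ‖w - y‖ + ‖y‖ := by simpa using norm_add_le (w - y) y
  have hy_le : ‖y‖ ≤ ‖w‖ + ‖w - y‖ := by simpa using norm_sub_le w (w - y)
  by_cases hfar : y ∈ {y : E | 4 < ‖y‖}
  · refine le_add_right ?_
    have hfar' : 4 < ‖y‖ := hfar
    rw [indicator_of_mem hfar, mul_left_comm, ← ENNReal.ofReal_mul (by positivity)]
    gcongr
    exact rpow_le_two_rpow_abs_mul_rpow (by linarith) (by linarith) (by linarith) (by linarith) γ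
  · refine le_add_left (le_of_eq ?_)
    have hnear : ‖y‖ ≤ 4 := not_lt.1 hfar
    rw [indicator_of_mem (by exact ⟨by linarith, hnear⟩),
      indicator_of_mem (show w - y ∈ {z : E | ‖z‖ ≤ 8} from hy.le.trans (by linarith))]

variable [MeasurableSpace E] [BorelSpace E] {μ : Measure E}

/-- The convolution of `U` with `‖·‖ ^ γ`, restricted to the region where `‖w - y‖ < 2 ‖y‖`. For the
modulus `U` of a rough homogeneous kernel and `γ = 1 - dim E` it is the convolution kernel that
controls the singular integral by the gradient. -/
def truncatedPotential (μ : Measure E) (γ : ℝ) (U : E → ℝ≥0∞) (w : E) : ℝ≥0∞ :=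
  ∫⁻ y in {y | ‖w - y‖ < 2 * ‖y‖}, U y * ENNReal.ofReal (‖w - y‖ ^ γ) ∂μ

theorem measurableSet_norm_sub_lt_two_mul_norm (w : E) :
    MeasurableSet {y : E | ‖w - y‖ < 2 * ‖y‖} :=
  measurableSet_lt (by fun_prop) (by fun_prop)

theorem measurable_truncatedPotential [SecondCountableTopology E] [SFinite μ] (hU : Measurable U) :
    Measurable (truncatedPotential μ γ U) := by
  have hjoint : Measurable ({z : E × E | ‖z.1 - z.2‖ < 2 * ‖z.2‖}.indicator
      fun z => U z.2 * ENNReal.ofReal (‖z.1 - z.2‖ ^ γ)) :=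
    Measurable.indicator (by fun_prop) (measurableSet_lt (by fun_prop) (by fun_prop))
  convert hjoint.lintegral_prod_right' (ν := μ) using 2 with w
  rw [truncatedPotential, ← lintegral_indicator (measurableSet_norm_sub_lt_two_mul_norm w)]
  rfl

theorem truncatedPotential_le_far_add_convolution [SecondCountableTopology E] (hU : Measurable U)
    {w : E} (hw : ‖w‖ ∈ Ioc (1 : ℝ) 2) :
    truncatedPotential μ γ U w ≤
      ENNReal.ofReal (2 ^ |γ|) * (∫⁻ y in {y | 4 < ‖y‖}, U y * ENNReal.ofReal (‖y‖ ^ γ) ∂μ) +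
      ∫⁻ y, {y | ‖y‖ ∈ Ioc (1 / 3 : ℝ) 4}.indicator U y *
        {z | ‖z‖ ≤ 8}.indicator (fun z => ENNReal.ofReal (‖z‖ ^ γ)) (w - y) ∂μ := by
  have hfar : MeasurableSet {y : E | 4 < ‖y‖} := measurableSet_lt (by fun_prop) (by fun_prop)
  rw [← lintegral_const_mul _ (by fun_prop), ← lintegral_indicator hfar,
    ← lintegral_add_left (Measurable.indicator (by fun_prop) hfar)]
  exact (setLIntegral_mono' (measurableSet_norm_sub_lt_two_mul_norm w) fun y hy =>
    mul_norm_sub_rpow_le_far_add_near hw hy).trans (setLIntegral_le_lintegral _ _)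

variable [NormedSpace ℝ E]

local notation "dim" => (Module.finrank ℝ E : ℝ)

theorem lintegral_eq_rpow_mul_lintegral_smul [FiniteDimensional ℝ E] [μ.IsAddHaarMeasure] {s : ℝ}
    (hs : 0 < s) {Φ : E → ℝ≥0∞} (hΦ : Measurable Φ) :
    ∫⁻ y, Φ y ∂μ = ENNReal.ofReal (s ^ dim) * ∫⁻ y, Φ (s • y) ∂μ := by
  rw [← lintegral_map hΦ (measurable_const_smul s), Measure.map_addHaar_smul μ hs.ne',
    lintegral_smul_measure, smul_eq_mul, ← mul_assoc, ← ENNReal.ofReal_mul (by positivity),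
    Real.rpow_natCast, abs_of_pos (by positivity), mul_inv_cancel₀ (by positivity),
    ENNReal.ofReal_one, one_mul]

theorem PosHomogeneous.truncatedPotential [FiniteDimensional ℝ E] [μ.IsAddHaarMeasure]
    (h : PosHomogeneous β U) (hU : Measurable U) (γ : ℝ) :
    PosHomogeneous (β + γ + dim) (truncatedPotential μ γ U) := fun s hs w _ => by
  have hmem (y : E) : ‖s • w - s • y‖ < 2 * ‖s • y‖ ↔ ‖w - y‖ < 2 * ‖y‖ := by
    rw [← smul_sub, norm_smul, norm_smul, Real.norm_of_nonneg hs.le, mul_left_comm,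
      mul_lt_mul_iff_right₀ hs]
  have hscale (y : E) : {y | ‖s • w - y‖ < 2 * ‖y‖}.indicator
      (fun y => U y * ENNReal.ofReal (‖s • w - y‖ ^ γ)) (s • y) =
      ENNReal.ofReal (s ^ (β + γ)) * {y | ‖w - y‖ < 2 * ‖y‖}.indicator
        (fun y => U y * ENNReal.ofReal (‖w - y‖ ^ γ)) y := by
    by_cases hy : y ∈ {y | ‖w - y‖ < 2 * ‖y‖}
    · have hy0 : y ≠ 0 := by
        rintro rfl
        simp only [mem_ofPred_eq, norm_zero, mul_zero] at hy
        exact hy.not_ge (norm_nonneg _)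
      rw [indicator_of_mem hy, indicator_of_mem (by exact (hmem y).2 hy), h s hs y hy0, ← smul_sub,
        norm_smul, Real.norm_of_nonneg hs.le, Real.mul_rpow hs.le (norm_nonneg _),
        ENNReal.ofReal_mul (by positivity), Real.rpow_add hs, ENNReal.ofReal_mul (by positivity),
        mul_mul_mul_comm]
    · rw [indicator_of_notMem hy, indicator_of_notMem (by exact (hmem y).not.2 hy), mul_zero]
  have hind (w : E) : Measurable ({y | ‖w - y‖ < 2 * ‖y‖}.indicator
      fun y => U y * ENNReal.ofReal (‖w - y‖ ^ γ)) :=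
    Measurable.indicator (by fun_prop) (measurableSet_norm_sub_lt_two_mul_norm w)
  simp only [_root_.truncatedPotential]
  rw [← lintegral_indicator (measurableSet_norm_sub_lt_two_mul_norm _),
    ← lintegral_indicator (measurableSet_norm_sub_lt_two_mul_norm _),
    lintegral_eq_rpow_mul_lintegral_smul hs (hind _)]
  simp only [hscale]
  rw [lintegral_const_mul _ (hind w), ← mul_assoc, ← ENNReal.ofReal_mul (by positivity),
    ← Real.rpow_add hs, add_comm]

variable [FiniteDimensional ℝ E] [Nontrivial E] [μ.IsAddHaarMeasure]

theorem PosHomogeneous.setLIntegral_annulus_lt_top (h : PosHomogeneous β U) (hU : Measurable U)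
    (hfin : ∫⁻ ω : sphere (0 : E) 1, U ω ∂μ.toSphere < ⊤) {c d : ℝ} (hc : 0 < c) :
    ∫⁻ y in {y | ‖y‖ ∈ Ioc c d}, U y ∂μ < ⊤ := by
  refine (h.setLIntegral_norm_mem hU measurableSet_Ioc).trans_lt (ENNReal.mul_lt_top hfin ?_)
  have hcont : ContinuousOn (fun t : ℝ => t ^ (β + dim - 1)) (Icc c d) := fun t ht =>
    (Real.continuousAt_rpow_const t _ (Or.inl (hc.trans_le ht.1).ne')).continuousWithinAt
  exact (hcont.integrableOn_Icc.mono_set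
    (inter_subset_left.trans Ioc_subset_Icc_self)).lintegral_lt_top

theorem PosHomogeneous.setLIntegral_far_mul_norm_rpow_lt_top (h : PosHomogeneous β U)
    (hU : Measurable U) (hβγ : β + γ + dim < 0) {r : ℝ} (hr : 1 ≤ r)
    (hfin : ∫⁻ ω : sphere (0 : E) 1, U ω ^ r ∂μ.toSphere < ⊤) {c : ℝ} (hc : 0 < c) :
    ∫⁻ y in {y | c < ‖y‖}, U y * ENNReal.ofReal (‖y‖ ^ γ) ∂μ < ⊤ := by
  have hfin₁ : ∫⁻ ω : sphere (0 : E) 1, U ω ∂μ.toSphere < ⊤ := by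
    simpa using lintegral_rpow_lt_top_of_exponent_le zero_le_one hr hfin
  rw [(h.mul (.norm_rpow γ)).setLIntegral_lt_norm (by fun_prop) hβγ hc]
  refine ENNReal.mul_lt_top (ENNReal.mul_lt_top ?_ ENNReal.ofReal_lt_top) ENNReal.ofReal_lt_top
  simpa using hfin₁

theorem setLIntegral_norm_le_norm_rpow_rpow_lt_top {b : ℝ} (hb : 0 < b) (hγ : 0 < γ * b + dim)
    {d : ℝ} (hd : 0 ≤ d) :
    ∫⁻ z in {z : E | ‖z‖ ≤ d}, ENNReal.ofReal (‖z‖ ^ γ) ^ b ∂μ < ⊤ := by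
  rw [((PosHomogeneous.norm_rpow γ).rpow hb.le).setLIntegral_norm_le (by fun_prop) hγ hd]
  refine ENNReal.mul_lt_top (ENNReal.mul_lt_top ?_ ENNReal.ofReal_lt_top) ENNReal.ofReal_lt_top
  simpa using ENNReal.mul_lt_top (ENNReal.natCast_lt_top _) measure_ball_lt_top

theorem PosHomogeneous.lintegral_truncatedPotential_rpow_toSphere_lt_top (h : PosHomogeneous β U)
    (hU : Measurable U) {r b a : ℝ} (hr : 1 ≤ r) (hb : 1 ≤ b) (ha : 1 ≤ a)
    (hab : 1 / a + 1 = 1 / r + 1 / b) (hβγ : β + γ + dim < 0) (hγb : 0 < γ * b + dim)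
    (hfin : ∫⁻ ω : sphere (0 : E) 1, U ω ^ r ∂μ.toSphere < ⊤) :
    ∫⁻ ω : sphere (0 : E) 1, _root_.truncatedPotential μ γ U ω ^ a ∂μ.toSphere < ⊤ := by
  set near := {y : E | ‖y‖ ∈ Ioc (1 / 3 : ℝ) 4}.indicator U
  set riesz := {z : E | ‖z‖ ≤ 8}.indicator fun z => ENNReal.ofReal (‖z‖ ^ γ)
  have ha₀ : 0 < a := zero_lt_one.trans_le ha
  have hr₀ : 0 < r := zero_lt_one.trans_le hr
  have hb₀ : 0 < b := zero_lt_one.trans_le hb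
  have hannulus : MeasurableSet {y : E | ‖y‖ ∈ Ioc (1 / 3 : ℝ) 4} :=
    measurable_norm measurableSet_Ioc
  have hball : MeasurableSet {z : E | ‖z‖ ≤ 8} := measurableSet_le (by fun_prop) (by fun_prop)
  have hnear : ∫⁻ y, near y ^ r ∂μ < ⊤ := by
    rw [lintegral_indicator_rpow hannulus hr₀]
    exact (h.rpow hr₀.le).setLIntegral_annulus_lt_top (by fun_prop) hfin (by norm_num)
  have hriesz : ∫⁻ z, riesz z ^ b ∂μ < ⊤ := by
    rw [lintegral_indicator_rpow hball hb₀]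
    exact setLIntegral_norm_le_norm_rpow_rpow_lt_top hb₀ hγb (by norm_num)
  have hconv : ∫⁻ w, (∫⁻ y, near y * riesz (w - y) ∂μ) ^ a ∂μ < ⊤ := by
    refine (ENNReal.rpow_lt_top_iff_of_pos (one_div_pos.2 ha₀)).1 <|
      (lintegral_convolution_rpow_le (hU.indicator hannulus)
        (Measurable.indicator (by fun_prop) hball)
        hr hb ha₀ hab).trans_lt (by finiteness)
  have hfar := h.setLIntegral_far_mul_norm_rpow_lt_top hU hβγ hr hfin (c := 4) (by norm_num)
  refine ((h.truncatedPotential hU γ).rpow ha₀.le).lintegral_toSphere_lt_top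
    ((measurable_truncatedPotential hU).pow_const a) ?_
  refine (setLIntegral_mono' (measurable_norm measurableSet_Ioc) fun w hw =>
    (ENNReal.rpow_le_rpow (truncatedPotential_le_far_add_convolution hU hw) ha₀.le).trans
      (ENNReal.rpow_add_le_mul_rpow_add_rpow _ _ ha)).trans_lt ?_
  rw [lintegral_const_mul' _ _ (by finiteness), lintegral_add_left measurable_const,
    setLIntegral_const]
  refine ENNReal.mul_lt_top (by finiteness) (ENNReal.add_lt_top.2 ⟨ENNReal.mul_lt_top
    (by finiteness) ?_, (setLIntegral_le_lintegral _ _).trans_lt hconv⟩)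
  exact (measure_mono fun w hw => mem_closedBall_zero_iff.2 hw.2).trans_lt
    (measure_closedBall_lt_top (x := (0 : E)) (r := 2))

end TruncatedPotential

/-! ### Controlling the deviation from ball averages by the gradient -/

section Segment

variable {E : Type*} [NormedAddCommGroup E] [NormedSpace ℝ E] [FiniteDimensional ℝ E]

local notation "dim" => (Module.finrank ℝ E : ℝ)

theorem lintegral_Ioc_rpow_mul_indicator_ball_le [Nontrivial E] {D : ℝ} (hD : 0 < D) {u : E}
    (hu : u ≠ 0) (c : ℝ≥0∞) :
    ∫⁻ s in Ioc (0 : ℝ) 1,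
        ENNReal.ofReal (s ^ (-dim - 1)) * (ball (0 : E) (s * D)).indicator (fun _ => c) u ≤
      (ball (0 : E) D).indicator
        (fun u => ENNReal.ofReal (D ^ dim / dim) * ENNReal.ofReal (‖u‖ ^ (-dim)) * c) u := by
  have hdim : 0 < dim := Nat.cast_pos.2 Module.finrank_pos
  have hu₀ : 0 < ‖u‖ := norm_pos_iff.2 hu
  by_cases huD : u ∈ ball (0 : E) D
  · calc ∫⁻ s in Ioc (0 : ℝ) 1,
          ENNReal.ofReal (s ^ (-dim - 1)) * (ball (0 : E) (s * D)).indicator (fun _ => c) u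
        ≤ ∫⁻ s, (Ioi (‖u‖ / D)).indicator (fun s => ENNReal.ofReal (s ^ (-dim - 1)) * c) s := by
          refine (setLIntegral_le_lintegral _ _).trans (lintegral_mono fun s => ?_)
          by_cases hs : u ∈ ball (0 : E) (s * D)
          · rw [indicator_of_mem hs, indicator_of_mem (by
              rwa [mem_Ioi, div_lt_iff₀ hD, ← mem_ball_zero_iff])]
          · simp [indicator_of_notMem hs]
      _ = ENNReal.ofReal dim⁻¹ * ENNReal.ofReal ((‖u‖ / D) ^ (-dim)) * c := by
          rw [lintegral_indicator measurableSet_Ioi, lintegral_mul_const _ (by fun_prop),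
            lintegral_Ioi_rpow (by linarith) (by positivity), neg_neg]
      _ = (ball (0 : E) D).indicator
          (fun u => ENNReal.ofReal (D ^ dim / dim) * ENNReal.ofReal (‖u‖ ^ (-dim)) * c) u := by
          rw [indicator_of_mem huD, ← ENNReal.ofReal_mul (by positivity),
            ← ENNReal.ofReal_mul (by positivity), Real.div_rpow hu₀.le hD.le, Real.rpow_neg hD.le]
          congr 2
          field_simp
  · have hnotMem (s : ℝ) (hs : s ∈ Ioc (0 : ℝ) 1) : u ∉ ball (0 : E) (s * D) := fun h =>
      huD (ball_subset_ball (mul_le_of_le_one_left hD.le hs.2) h)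
    rw [setLIntegral_congr_fun measurableSet_Ioc fun s hs => by
      rw [indicator_of_notMem (hnotMem s hs), mul_zero], lintegral_zero]
    exact zero_le

variable [MeasurableSpace E] [BorelSpace E] {μ : Measure E} [μ.IsAddHaarMeasure] {Ψ : E → ℝ≥0∞}

theorem setLIntegral_ball_comp_smul_mul_norm (hΨ : Measurable Ψ) {s D : ℝ} (hs : 0 < s) :
    ∫⁻ h in ball (0 : E) D, Ψ (s • h) * ENNReal.ofReal ‖h‖ ∂μ =
      ENNReal.ofReal (s ^ (-dim - 1)) *
        ∫⁻ u in ball (0 : E) (s * D), Ψ u * ENNReal.ofReal ‖u‖ ∂μ := by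
  have hmem (h : E) : s • h ∈ ball (0 : E) (s * D) ↔ h ∈ ball (0 : E) D := by
    rw [mem_ball_zero_iff, mem_ball_zero_iff, norm_smul, Real.norm_of_nonneg hs.le,
      mul_lt_mul_iff_right₀ hs]
  have hscale (h : E) :
      (ball (0 : E) (s * D)).indicator (fun u => Ψ u * ENNReal.ofReal ‖u‖) (s • h) =
        ENNReal.ofReal s *
          (ball (0 : E) D).indicator (fun h => Ψ (s • h) * ENNReal.ofReal ‖h‖) h := by
    by_cases hh : h ∈ ball (0 : E) D
    · rw [indicator_of_mem hh, indicator_of_mem ((hmem h).2 hh), norm_smul,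
        Real.norm_of_nonneg hs.le, ENNReal.ofReal_mul hs.le, mul_left_comm]
    · rw [indicator_of_notMem hh, indicator_of_notMem ((hmem h).not.2 hh), mul_zero]
  have : Measurable fun h : E => Ψ (s • h) := hΨ.comp (measurable_const_smul s)
  rw [← lintegral_indicator measurableSet_ball, ← lintegral_indicator measurableSet_ball,
    lintegral_eq_rpow_mul_lintegral_smul hs (Φ := (ball (0 : E) (s * D)).indicator _)
      (Measurable.indicator (by fun_prop) measurableSet_ball)]
  simp only [hscale]
  rw [lintegral_const_mul _ (Measurable.indicator (by fun_prop) measurableSet_ball), ← mul_assoc,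
    ← mul_assoc, ← ENNReal.ofReal_mul (by positivity), ← ENNReal.ofReal_mul (by positivity),
    ← Real.rpow_add hs, ← Real.rpow_add_one hs.ne', show -dim - 1 + dim + 1 = 0 by ring,
    Real.rpow_zero, ENNReal.ofReal_one, one_mul]

theorem setLIntegral_ball_lintegral_smul_mul_norm_le [Nontrivial E] (hΨ : Measurable Ψ) {D : ℝ}
    (hD : 0 < D) :
    ∫⁻ h in ball (0 : E) D, (∫⁻ s in Ioc (0 : ℝ) 1, Ψ (s • h) * ENNReal.ofReal ‖h‖) ∂μ ≤
      ENNReal.ofReal (D ^ dim / dim) *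
        ∫⁻ u in ball (0 : E) D, Ψ u * ENNReal.ofReal (‖u‖ ^ (1 - dim)) ∂μ := by
  have hball : Measurable fun z : ℝ × E => ENNReal.ofReal (z.1 ^ (-dim - 1)) *
      (ball (0 : E) (z.1 * D)).indicator (fun _ => Ψ z.2 * ENNReal.ofReal ‖z.2‖) z.2 := by
    refine Measurable.mul (by fun_prop) ?_
    have hset : MeasurableSet {z : ℝ × E | dist z.2 0 < z.1 * D} :=
      measurableSet_lt (by fun_prop) (by fun_prop)
    exact Measurable.indicator (f := fun z : ℝ × E => Ψ z.2 * ENNReal.ofReal ‖z.2‖)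
      (by fun_prop) hset
  calc ∫⁻ h in ball (0 : E) D, (∫⁻ s in Ioc (0 : ℝ) 1, Ψ (s • h) * ENNReal.ofReal ‖h‖) ∂μ
      = ∫⁻ s in Ioc (0 : ℝ) 1, ∫⁻ u, ENNReal.ofReal (s ^ (-dim - 1)) *
          (ball (0 : E) (s * D)).indicator (fun _ => Ψ u * ENNReal.ofReal ‖u‖) u ∂μ := by
        rw [lintegral_lintegral_swap (by fun_prop)]
        refine setLIntegral_congr_fun measurableSet_Ioc fun s hs => ?_
        rw [setLIntegral_ball_comp_smul_mul_norm hΨ hs.1, ← lintegral_indicator measurableSet_ball,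
          ← lintegral_const_mul _ (Measurable.indicator (by fun_prop) measurableSet_ball)]
        rfl
    _ = ∫⁻ u, (∫⁻ s in Ioc (0 : ℝ) 1, ENNReal.ofReal (s ^ (-dim - 1)) *
          (ball (0 : E) (s * D)).indicator (fun _ => Ψ u * ENNReal.ofReal ‖u‖) u) ∂μ :=
        lintegral_lintegral_swap hball.aemeasurable
    _ ≤ ∫⁻ u, (ball (0 : E) D).indicator (fun u => ENNReal.ofReal (D ^ dim / dim) *
          (Ψ u * ENNReal.ofReal (‖u‖ ^ (1 - dim)))) u ∂μ := by
        refine lintegral_mono_ae ?_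
        filter_upwards [Measure.ae_ne μ 0] with u hu
        refine (lintegral_Ioc_rpow_mul_indicator_ball_le hD hu _).trans_eq ?_
        by_cases huD : u ∈ ball (0 : E) D
        · rw [indicator_of_mem huD, indicator_of_mem huD, sub_eq_neg_add,
            Real.rpow_add (norm_pos_iff.2 hu), Real.rpow_one, ENNReal.ofReal_mul (by positivity)]
          ring
        · rw [indicator_of_notMem huD, indicator_of_notMem huD]
    _ = _ := by
        rw [lintegral_indicator measurableSet_ball, lintegral_const_mul _ (by fun_prop)]

end Segment

section Gradient

variable {E F : Type*} [NormedAddCommGroup E] [NormedSpace ℝ E] [NormedAddCommGroup F]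
  [NormedSpace ℝ F] {f : E → F}

theorem enorm_sub_le_lintegral_segment (hf : ContDiff ℝ 1 f) (z h : E) :
    ‖f (z + h) - f z‖ₑ ≤
      ∫⁻ s in Ioc (0 : ℝ) 1, ‖fderiv ℝ f (z + s • h)‖ₑ * ENNReal.ofReal ‖h‖ := by
  have hderiv (s : ℝ) :
      HasDerivAt (fun s : ℝ => f (z + s • h)) (fderiv ℝ f (z + s • h) h) s :=
    (hf.differentiable one_ne_zero _).hasFDerivAt.comp_hasDerivAt s
      (by simpa using ((hasDerivAt_id s).smul_const h).const_add z)
  have hsegment : ContDiff ℝ 1 fun s : ℝ => f (z + s • h) := hf.comp (by fun_prop)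
  have hftc := enorm_sub_le_lintegral_deriv_of_contDiffOn_Icc hsegment.contDiffOn zero_le_one
  simp only [one_smul, zero_smul, add_zero, (hderiv _).deriv] at hftc
  rw [setLIntegral_congr Ioc_ae_eq_Icc.symm] at hftc
  refine hftc.trans (lintegral_mono fun s => ?_)
  rw [ofReal_norm]
  exact ContinuousLinearMap.le_opENorm _ _

theorem enorm_sub_average_le_laverage [CompleteSpace F] {X : Type*} [MeasurableSpace X]
    {μ : Measure X} [IsFiniteMeasure μ] [NeZero μ] {g : X → F} (hg : Integrable g μ) (a : F) :
    ‖a - ⨍ x, g x ∂μ‖ₑ ≤ ⨍⁻ x, ‖g x - a‖ₑ ∂μ := by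
  have hconst : ⨍ _, a ∂μ = a := average_const μ a
  have hav : (⨍ x, g x ∂μ) - a = ⨍ x, (g x - a) ∂μ := by
    conv_lhs => rw [← hconst]
    exact (integral_sub (hg.to_average) (integrable_const a)).symm
  rw [enorm_sub_rev, hav]
  exact enorm_integral_le_lintegral_enorm _

variable [FiniteDimensional ℝ E] [MeasurableSpace E] [BorelSpace E] {μ : Measure E}
  [μ.IsAddHaarMeasure]

theorem lintegral_mul_setLIntegral_ball_eq_lintegral_truncatedPotential {U G : E → ℝ≥0∞}
    (hU : Measurable U) (hG : Measurable G) (γ : ℝ) (x : E) :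
    ∫⁻ y, U y * ∫⁻ u in ball (x - y) (2 * ‖y‖), G u * ENNReal.ofReal (‖u - (x - y)‖ ^ γ) ∂μ ∂μ =
      ∫⁻ u, truncatedPotential μ γ U (x - u) * G u ∂μ := by
  have hnorm (u y : E) : ‖u - (x - y)‖ = ‖x - u - y‖ := by rw [norm_sub_rev]; congr 1; abel
  set region := {z : E × E | ‖x - z.2 - z.1‖ < 2 * ‖z.1‖}
  set Φ : E × E → ℝ≥0∞ := fun z => U z.1 * ENNReal.ofReal (‖x - z.2 - z.1‖ ^ γ) * G z.2
  have hregion : MeasurableSet region := measurableSet_lt (by fun_prop) (by fun_prop)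
  have hΦ : Measurable (region.indicator Φ) := Measurable.indicator (by fun_prop) hregion
  calc ∫⁻ y, U y * ∫⁻ u in ball (x - y) (2 * ‖y‖), G u * ENNReal.ofReal (‖u - (x - y)‖ ^ γ) ∂μ ∂μ
      = ∫⁻ y, ∫⁻ u, region.indicator Φ (y, u) ∂μ ∂μ := by
        refine lintegral_congr fun y => ?_
        have hball : (fun u => (y, u)) ⁻¹' region = ball (x - y) (2 * ‖y‖) := by
          ext u
          simp only [region, mem_preimage, mem_ofPred_eq, mem_ball, dist_eq_norm, hnorm]
        simp only [hnorm]
        rw [← lintegral_const_mul _ (by fun_prop), ← hball,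
          ← lintegral_indicator (hregion.preimage (by fun_prop))]
        simp only [Φ, mul_left_comm, mul_comm, indicator, mem_preimage]
    _ = ∫⁻ u, ∫⁻ y, region.indicator Φ (y, u) ∂μ ∂μ := lintegral_lintegral_swap hΦ.aemeasurable
    _ = ∫⁻ u, truncatedPotential μ γ U (x - u) * G u ∂μ := by
        refine lintegral_congr fun u => ?_
        rw [truncatedPotential, ← lintegral_mul_const _ (by fun_prop),
          ← lintegral_indicator (measurableSet_norm_sub_lt_two_mul_norm _)]
        rfl

variable [Nontrivial E]

local notation "dim" => (Module.finrank ℝ E : ℝ)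

theorem setLIntegral_ball_enorm_sub_center_le (hf : ContDiff ℝ 1 f) (z : E) {D : ℝ} (hD : 0 < D) :
    ∫⁻ ξ in ball z D, ‖f ξ - f z‖ₑ ∂μ ≤ ENNReal.ofReal (D ^ dim / dim) *
      ∫⁻ u in ball z D, ‖fderiv ℝ f u‖ₑ * ENNReal.ofReal (‖u - z‖ ^ (1 - dim)) ∂μ := by
  have htranslate (Φ : E → ℝ≥0∞) :
      ∫⁻ ξ in ball z D, Φ ξ ∂μ = ∫⁻ u in ball (0 : E) D, Φ (z + u) ∂μ := by
    have hpre : (fun u => z + u) ⁻¹' ball z D = ball 0 D := by ext u; simp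
    rw [← hpre, (measurePreserving_add_left μ z).setLIntegral_comp_preimage_emb
      (measurableEmbedding_addLeft z)]
  have : Continuous (fderiv ℝ f) := hf.continuous_fderiv one_ne_zero
  rw [htranslate, htranslate]
  simp only [add_sub_cancel_left]
  exact (lintegral_mono fun h => enorm_sub_le_lintegral_segment hf z h).trans
    (setLIntegral_ball_lintegral_smul_mul_norm_le (Ψ := fun u => ‖fderiv ℝ f (z + u)‖ₑ)
      (Continuous.measurable (by fun_prop)) hD)

theorem exists_enorm_sub_average_ball_le (F : Type*) [NormedAddCommGroup F] [NormedSpace ℝ F]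
    [CompleteSpace F] (μ : Measure E) [μ.IsAddHaarMeasure] :
    ∃ C : ℝ≥0∞, C ≠ ⊤ ∧ ∀ f : E → F, ContDiff ℝ 1 f → ∀ x y : E, y ≠ 0 →
      ‖f (x - y) - ⨍ ξ in ball x ‖y‖, f ξ ∂μ‖ₑ ≤ C * ∫⁻ u in ball (x - y) (2 * ‖y‖),
        ‖fderiv ℝ f u‖ₑ * ENNReal.ofReal (‖u - (x - y)‖ ^ (1 - dim)) ∂μ := by
  have hv₀ : μ (ball 0 1) ≠ 0 := (measure_ball_pos _ _ one_pos).ne'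
  have hv : μ (ball 0 1) ≠ ⊤ := measure_ball_lt_top.ne
  refine ⟨(μ (ball 0 1))⁻¹ * ENNReal.ofReal (2 ^ dim / dim), by finiteness,
    fun f hf x y hy => ?_⟩
  have hy₀ : 0 < ‖y‖ := norm_pos_iff.2 hy
  have hvy : μ (ball x ‖y‖) = ENNReal.ofReal (‖y‖ ^ dim) * μ (ball 0 1) := by
    rw [Measure.addHaar_ball_of_pos _ _ hy₀, Real.rpow_natCast]
  have hsub : ball x ‖y‖ ⊆ ball (x - y) (2 * ‖y‖) :=
    ball_subset_ball' (by simp; linarith)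
  have hint : IntegrableOn f (ball x ‖y‖) μ := (hf.continuous.continuousOn.integrableOn_compact
    (isCompact_closedBall x ‖y‖)).mono_set ball_subset_closedBall
  have : NeZero (μ.restrict (ball x ‖y‖)) :=
    ⟨fun h => (measure_ball_pos μ x hy₀).ne' (Measure.restrict_eq_zero.1 h)⟩
  have : IsFiniteMeasure (μ.restrict (ball x ‖y‖)) :=
    ⟨by simpa using measure_ball_lt_top⟩
  set I := ∫⁻ u in ball (x - y) (2 * ‖y‖),
    ‖fderiv ℝ f u‖ₑ * ENNReal.ofReal (‖u - (x - y)‖ ^ (1 - dim)) ∂μ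
  calc ‖f (x - y) - ⨍ ξ in ball x ‖y‖, f ξ ∂μ‖ₑ
      ≤ ⨍⁻ ξ in ball x ‖y‖, ‖f ξ - f (x - y)‖ₑ ∂μ := enorm_sub_average_le_laverage hint _
    _ ≤ ENNReal.ofReal ((2 * ‖y‖) ^ dim / dim) * I / μ (ball x ‖y‖) := by
        rw [setLAverage_eq]
        gcongr
        exact (lintegral_mono_set hsub).trans
          (setLIntegral_ball_enorm_sub_center_le hf _ (by positivity))
    _ = (μ (ball 0 1))⁻¹ *
          (ENNReal.ofReal (‖y‖ ^ dim)⁻¹ * ENNReal.ofReal ((2 * ‖y‖) ^ dim / dim)) * I := by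
        rw [hvy, div_eq_mul_inv, ENNReal.mul_inv (Or.inr hv) (Or.inl ENNReal.ofReal_ne_top),
          ENNReal.ofReal_inv_of_pos (by positivity)]
        ring
    _ = (μ (ball 0 1))⁻¹ * ENNReal.ofReal (2 ^ dim / dim) * I := by
        rw [← ENNReal.ofReal_mul (by positivity), Real.mul_rpow (by norm_num) hy₀.le]
        congr 3
        field_simp

theorem exists_lintegral_mul_enorm_sub_average_ball_le (F : Type*) [NormedAddCommGroup F]
    [NormedSpace ℝ F] [CompleteSpace F] (μ : Measure E) [μ.IsAddHaarMeasure] :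
    ∃ C : ℝ≥0∞, C ≠ ⊤ ∧ ∀ U : E → ℝ≥0∞, Measurable U → ∀ f : E → F, ContDiff ℝ 1 f → ∀ x : E,
      ∫⁻ y, U y * ‖f (x - y) - ⨍ ξ in ball x ‖y‖, f ξ ∂μ‖ₑ ∂μ ≤
        C * ∫⁻ u, truncatedPotential μ (1 - dim) U (x - u) * ‖fderiv ℝ f u‖ₑ ∂μ := by
  obtain ⟨C, hC, hdev⟩ := exists_enorm_sub_average_ball_le F μ
  refine ⟨C, hC, fun U hU f hf x => ?_⟩
  rw [← lintegral_mul_setLIntegral_ball_eq_lintegral_truncatedPotential hU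
    (hf.continuous_fderiv one_ne_zero).enorm.measurable, ← lintegral_const_mul' _ _ hC]
  refine lintegral_mono_ae ?_
  filter_upwards [Measure.ae_ne μ 0] with y hy
  rw [mul_left_comm]
  gcongr
  exact hdev f hf x y hy

end Gradient

/-! ### The principal value as an absolutely convergent integral -/

section BallAverage

variable {E : Type*} [NormedAddCommGroup E] [MeasurableSpace E] [BorelSpace E]

theorem tendsto_setIntegral_lt_norm {μ : Measure E}
    [NullSingletonClass μ] {F : Type*} [NormedAddCommGroup F] [NormedSpace ℝ F] {g : E → F}
    (hg : Integrable g μ) :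
    Tendsto (fun ε => ∫ y in {y | ε < ‖y‖}, g y ∂μ) (𝓝[>] 0) (𝓝 (∫ y, g y ∂μ)) := by
  have hcover : AECover μ (𝓝[>] (0 : ℝ)) fun ε => {y : E | ε < ‖y‖} := by
    refine ⟨?_, fun ε => measurableSet_lt (by fun_prop) (by fun_prop)⟩
    filter_upwards [Measure.ae_ne μ 0] with y hy
    exact mem_nhdsWithin_of_mem_nhds (Iio_mem_nhds (norm_pos_iff.2 hy))
  exact hcover.integral_tendsto_of_countably_generated hg

variable [NormedSpace ℝ E] [FiniteDimensional ℝ E] {μ : Measure E} [μ.IsAddHaarMeasure]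

local notation "dim" => (Module.finrank ℝ E : ℝ)

theorem measurable_average_ball {f : E → ℝ} (hf : Measurable f) (x : E) :
    Measurable fun t => ⨍ ξ in ball x t, f ξ ∂μ := by
  have hvol : Measurable fun t => μ.real (ball x t) := by
    have hmono : Monotone fun t => μ (ball x t) := fun s t h => measure_mono (ball_subset_ball h)
    exact hmono.measurable.ennreal_toReal
  have hint : Measurable fun t => ∫ ξ in ball x t, f ξ ∂μ := by
    have hset : MeasurableSet {z : ℝ × E | dist z.2 x < z.1} :=
      measurableSet_lt (by fun_prop) (by fun_prop)
    have hjoint := (hf.comp measurable_snd).indicator hset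
    convert (hjoint.stronglyMeasurable.integral_prod_right' (ν := μ)).measurable using 2 with t
    rw [← integral_indicator measurableSet_ball]
    rfl
  simp only [setAverage_eq, smul_eq_mul]
  exact hvol.inv.mul hint

theorem enorm_average_ball_le {F : Type*} [NormedAddCommGroup F] [NormedSpace ℝ F] (f : E → F)
    (x : E) {t : ℝ} (ht : 0 < t) :
    ‖⨍ ξ in ball x t, f ξ ∂μ‖ₑ ≤
      (μ (ball 0 1))⁻¹ * (∫⁻ ξ, ‖f ξ‖ₑ ∂μ) * ENNReal.ofReal (t ^ (-dim)) := by
  have hv : μ (ball x t) = ENNReal.ofReal (t ^ dim) * μ (ball 0 1) := by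
    rw [Measure.addHaar_ball_of_pos _ _ ht, Real.rpow_natCast]
  calc ‖⨍ ξ in ball x t, f ξ ∂μ‖ₑ ≤ ⨍⁻ ξ in ball x t, ‖f ξ‖ₑ ∂μ :=
        enorm_integral_le_lintegral_enorm _
    _ ≤ (∫⁻ ξ, ‖f ξ‖ₑ ∂μ) / μ (ball x t) := by
        rw [setLAverage_eq]
        gcongr
        exact Measure.restrict_le_self
    _ = (μ (ball 0 1))⁻¹ * (∫⁻ ξ, ‖f ξ‖ₑ ∂μ) * ENNReal.ofReal (t ^ (-dim)) := by
        rw [hv, div_eq_mul_inv, ENNReal.mul_inv (Or.inr measure_ball_lt_top.ne)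
          (Or.inl ENNReal.ofReal_ne_top), Real.rpow_neg ht.le,
          ENNReal.ofReal_inv_of_pos (by positivity)]
        ring

end BallAverage

section RoughOperator

variable {n : ℕ} {α : ℝ} {Ω f : Rn n → ℝ}

/-- The convolution kernel `Ω(y/|y|) |y|^{-(n+1-α)}` of `T_{Ω,α}`. -/
def roughKernel (n : ℕ) (α : ℝ) (Ω : Rn n → ℝ) (y : Rn n) : ℝ :=
  Ω (‖y‖⁻¹ • y) / ‖y‖ ^ ((n : ℝ) + 1 - α)

theorem measurable_roughKernel (hΩ : Measurable Ω) : Measurable (roughKernel n α Ω) := by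
  unfold roughKernel
  fun_prop

theorem posHomogeneous_enorm_roughKernel (n : ℕ) (α : ℝ) (Ω : Rn n → ℝ) :
    PosHomogeneous (α - n - 1) fun y => ‖roughKernel n α Ω y‖ₑ := fun s hs y _ => by
  beta_reduce
  have hdir : ‖s • y‖⁻¹ • s • y = ‖y‖⁻¹ • y := by
    rw [norm_smul, Real.norm_of_nonneg hs.le, smul_smul, mul_inv, mul_right_comm,
      inv_mul_cancel₀ hs.ne', one_mul]
  have hscale : roughKernel n α Ω (s • y) = s ^ (α - n - 1) * roughKernel n α Ω y := by
    rw [roughKernel, roughKernel, hdir, norm_smul, Real.norm_of_nonneg hs.le,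
      Real.mul_rpow hs.le (norm_nonneg _), show α - n - 1 = -((n : ℝ) + 1 - α) by ring,
      Real.rpow_neg hs.le]
    field_simp
  rw [hscale, enorm_mul, Real.enorm_of_nonneg (by positivity)]

theorem enorm_roughKernel_coe_sphere (ω : sphere (0 : Rn n) 1) :
    ‖roughKernel n α Ω ω‖ₑ = ‖Ω ω‖ₑ := by
  simp [roughKernel]

variable [NeZero n]

theorem integrableOn_roughKernel_mul_average (hα : α < n + 1) (hΩ : Measurable Ω)
    (hfin : ∫⁻ ω : sphere (0 : Rn n) 1, ‖Ω ω‖ₑ ∂volume.toSphere < ⊤) (hfm : Measurable f)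
    (hf : Integrable f) (x : Rn n) {ε : ℝ} (hε : 0 < ε) :
    IntegrableOn (fun y => roughKernel n α Ω y * ⨍ ξ in ball x ‖y‖, f ξ) {y | ε < ‖y‖} := by
  have hk := measurable_roughKernel (α := α) hΩ
  have hmeas : Measurable fun y => roughKernel n α Ω y * ⨍ ξ in ball x ‖y‖, f ξ :=
    hk.mul ((measurable_average_ball hfm x).comp measurable_norm)
  have hdeg : α - n - 1 + -n + (Module.finrank ℝ (Rn n) : ℝ) < 0 := by
    rw [finrank_euclideanSpace_fin]
    linarith
  have hfar : ∫⁻ y in {y : Rn n | ε < ‖y‖},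
      ‖roughKernel n α Ω y‖ₑ * ENNReal.ofReal (‖y‖ ^ (-n : ℝ)) < ⊤ :=
    (posHomogeneous_enorm_roughKernel n α Ω).setLIntegral_far_mul_norm_rpow_lt_top hk.enorm hdeg
      le_rfl (by simpa only [enorm_roughKernel_coe_sphere, ENNReal.rpow_one] using hfin) hε
  set A := (volume (ball (0 : Rn n) 1))⁻¹ * ∫⁻ ξ, ‖f ξ‖ₑ
  have hA : A ≠ ⊤ := ENNReal.mul_ne_top
    (ENNReal.inv_ne_top.2 (measure_ball_pos _ _ one_pos).ne') hf.hasFiniteIntegral.ne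
  refine ⟨hmeas.aestronglyMeasurable, (setLIntegral_mono' (measurableSet_lt (by fun_prop)
    (by fun_prop)) fun y (hy : ε < ‖y‖) => ?_).trans_lt
      (lintegral_const_mul' A _ hA ▸ ENNReal.mul_lt_top hA.lt_top hfar)⟩
  have hav := enorm_average_ball_le (μ := volume) f x (hε.trans hy)
  rw [finrank_euclideanSpace_fin] at hav
  rw [enorm_mul, mul_left_comm]
  gcongr

theorem setIntegral_roughKernel_mul_norm_eq_zero
    (hmean : ∫ ω : sphere (0 : Rn n) 1, Ω ω ∂volume.toSphere = 0) (φ : ℝ → ℝ) (ε : ℝ) :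
    ∫ y in {y | ε < ‖y‖}, roughKernel n α Ω y * φ ‖y‖ = 0 := by
  rw [← integral_direction_mul_norm_eq_zero
    ((Ioi ε).indicator fun t => (t ^ ((n : ℝ) + 1 - α))⁻¹ * φ t) hmean,
    ← integral_indicator (measurableSet_lt (by fun_prop) (by fun_prop))]
  refine integral_congr_ae (.of_forall fun y => ?_)
  by_cases hy : y ∈ {y : Rn n | ε < ‖y‖}
  · simp only [indicator_of_mem hy, indicator_of_mem (show ‖y‖ ∈ Ioi ε from hy), roughKernel,
      div_eq_mul_inv, mul_assoc]
  · simp only [indicator_of_notMem hy, indicator_of_notMem (show ‖y‖ ∉ Ioi ε from hy), mul_zero]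

theorem tendsto_roughOpTrunc (hα : α < n + 1) (hΩ : Measurable Ω)
    (hfin : ∫⁻ ω : sphere (0 : Rn n) 1, ‖Ω ω‖ₑ ∂volume.toSphere < ⊤)
    (hmean : ∫ ω : sphere (0 : Rn n) 1, Ω ω ∂volume.toSphere = 0) (hfm : Measurable f)
    (hf : Integrable f) {x : Rn n}
    (hdev : Integrable fun y => roughKernel n α Ω y * (f (x - y) - ⨍ ξ in ball x ‖y‖, f ξ)) :
    Tendsto (roughOpTrunc n α Ω f x) (𝓝[>] 0)
      (𝓝 (∫ y, roughKernel n α Ω y * (f (x - y) - ⨍ ξ in ball x ‖y‖, f ξ))) := by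
  refine (tendsto_setIntegral_lt_norm hdev).congr' ?_
  filter_upwards [self_mem_nhdsWithin] with ε hε
  have havg := integrableOn_roughKernel_mul_average hα hΩ hfin hfm hf x hε
  rw [← add_zero (∫ y in _, _), ← setIntegral_roughKernel_mul_norm_eq_zero (α := α) hmean
    (fun t => ⨍ ξ in ball x t, f ξ) ε, ← integral_add hdev.integrableOn havg]
  simp only [← mul_add, sub_add_cancel]
  rfl

theorem enorm_roughOp_le_lintegral_enorm_sub_average (hα : α < n + 1) (hΩ : Measurable Ω)
    (hfin : ∫⁻ ω : sphere (0 : Rn n) 1, ‖Ω ω‖ₑ ∂volume.toSphere < ⊤)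
    (hmean : ∫ ω : sphere (0 : Rn n) 1, Ω ω ∂volume.toSphere = 0) (hfm : Measurable f)
    (hf : Integrable f) (x : Rn n) :
    ‖roughOp n α Ω f x‖ₑ ≤
      ∫⁻ y, ‖roughKernel n α Ω y‖ₑ * ‖f (x - y) - ⨍ ξ in ball x ‖y‖, f ξ‖ₑ := by
  simp only [← enorm_mul]
  by_cases htop : ∫⁻ y, ‖roughKernel n α Ω y * (f (x - y) - ⨍ ξ in ball x ‖y‖, f ξ)‖ₑ = ⊤
  · exact htop ▸ le_top
  have hmeas : Measurable fun y => roughKernel n α Ω y * (f (x - y) - ⨍ ξ in ball x ‖y‖, f ξ) :=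
    (measurable_roughKernel hΩ).mul
      ((by fun_prop : Measurable fun y => f (x - y)).sub
        ((measurable_average_ball hfm x).comp measurable_norm))
  have hdev : Integrable fun y => roughKernel n α Ω y * (f (x - y) - ⨍ ξ in ball x ‖y‖, f ξ) :=
    ⟨hmeas.aestronglyMeasurable, lt_top_iff_ne_top.2 htop⟩
  rw [roughOp, (tendsto_roughOpTrunc hα hΩ hfin hmean hfm hf hdev).limUnder_eq]
  exact enorm_integral_le_lintegral_enorm _

end RoughOperator

/-! ### Lorentz spaces on the sphere -/

section LorentzSphere

theorem lintegral_enorm_rpow_lt_top_of_mul_meas_rpow_le {X : Type*} [MeasurableSpace X]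
    {μ : Measure X} [IsFiniteMeasure μ] {f : X → ℝ} (hf : Measurable f) {ρ r : ℝ} (hρ : 0 < ρ)
    (hρr : ρ < r) {C : ℝ≥0∞} (hC : C ≠ ⊤)
    (hweak : ∀ t : ℝ, 0 < t → ENNReal.ofReal t * μ {y | t < |f y|} ^ (1 / r) ≤ C) :
    ∫⁻ y, ‖f y‖ₑ ^ ρ ∂μ < ⊤ := by
  have hr : 0 < r := hρ.trans hρr
  have hmeas : ∀ t : ℝ, 0 < t → μ {y | t < |f y|} ≤ C ^ r * ENNReal.ofReal (t ^ (-r)) := by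
    intro t ht
    have hpow := ENNReal.rpow_le_rpow (hweak t ht) hr.le
    rw [ENNReal.mul_rpow_of_nonneg _ _ hr.le, ← ENNReal.rpow_mul, one_div_mul_cancel hr.ne',
      ENNReal.rpow_one, ENNReal.ofReal_rpow_of_pos ht] at hpow
    rw [Real.rpow_neg ht.le, ENNReal.ofReal_inv_of_pos (by positivity), ← div_eq_mul_inv]
    rwa [ENNReal.le_div_iff_mul_le (by simp [Real.rpow_pos_of_pos ht]) (by simp), mul_comm]
  have hsmall : ∫⁻ t in Ioc 0 1, μ {y | t < |f y|} * ENNReal.ofReal (t ^ (ρ - 1)) < ⊤ := by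
    refine (lintegral_mono (fun t => mul_le_mul_left (measure_mono (subset_univ _)) _)).trans_lt ?_
    rw [lintegral_const_mul' _ _ (measure_ne_top _ _), lintegral_Ioc_rpow hρ zero_le_one]
    finiteness
  have hlarge : ∫⁻ t in Ioi 1, μ {y | t < |f y|} * ENNReal.ofReal (t ^ (ρ - 1)) < ⊤ := by
    calc ∫⁻ t in Ioi 1, μ {y | t < |f y|} * ENNReal.ofReal (t ^ (ρ - 1))
        ≤ ∫⁻ t in Ioi 1, C ^ r * ENNReal.ofReal (t ^ ((ρ - r) - 1)) := by
          refine setLIntegral_mono' measurableSet_Ioi fun t (ht : 1 < t) => ?_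
          have ht0 : 0 < t := one_pos.trans ht
          rw [show (ρ - r) - 1 = -r + (ρ - 1) by ring, Real.rpow_add ht0,
            ENNReal.ofReal_mul (by positivity), ← mul_assoc]
          gcongr
          exact hmeas t ht0
      _ = C ^ r * (ENNReal.ofReal (-(ρ - r))⁻¹ * ENNReal.ofReal (1 ^ (ρ - r))) := by
          rw [lintegral_const_mul' _ _ (by finiteness), lintegral_Ioi_rpow (by linarith) one_pos]
      _ < ⊤ := by finiteness
  have hlayer := lintegral_rpow_eq_lintegral_meas_lt_mul μ (.of_forall fun y => abs_nonneg (f y))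
    (by fun_prop) hρ
  rw [← Ioc_union_Ioi_eq_Ioi zero_le_one] at hlayer
  simp only [← ENNReal.ofReal_rpow_of_nonneg (abs_nonneg _) hρ.le, ← Real.enorm_eq_ofReal_abs]
    at hlayer
  rw [hlayer]
  exact ENNReal.mul_lt_top (by finiteness)
    ((lintegral_union_le _ _ _).trans_lt (ENNReal.add_lt_top.2 ⟨hsmall, hlarge⟩))

variable {n : ℕ} {Ω : Rn n → ℝ}

theorem weakLorentzSphere_le {r q : ℝ} (hr : 0 < r) (hq : 0 < q) :
    weakLorentzSphere n r Ω ≤ ENNReal.ofReal (q / r) ^ (1 / q) * lorentzSphere n r q Ω := by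
  refine iSup₂_le fun t ht => ?_
  have hlow : sphereMeasure n {y | t < |Ω y|} ^ (q / r) *
        (ENNReal.ofReal q⁻¹ * ENNReal.ofReal t ^ q) ≤
      ∫⁻ u in Ioi (0 : ℝ), ENNReal.ofReal u ^ q * sphereMeasure n {y | u < |Ω y|} ^ (q / r) /
        ENNReal.ofReal u := by
    rw [ENNReal.ofReal_rpow_of_pos ht, ← lintegral_Ioc_rpow hq ht.le,
      ← lintegral_const_mul _ (by fun_prop)]
    refine (setLIntegral_mono' measurableSet_Ioc fun u hu => ?_).trans
      (lintegral_mono_set Ioc_subset_Ioi_self)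
    rw [Real.rpow_sub_one hu.1.ne', ENNReal.ofReal_div_of_pos hu.1,
      ← ENNReal.ofReal_rpow_of_pos hu.1, mul_comm, ← ENNReal.mul_div_right_comm]
    gcongr with y
    exact hu.2
  rw [lorentzSphere, ← ENNReal.mul_rpow_of_nonneg _ _ (by positivity), ← mul_assoc,
    ← ENNReal.ofReal_mul (by positivity), div_mul_cancel₀ q hr.ne',
    one_div q, ENNReal.le_rpow_inv_iff hq, ENNReal.mul_rpow_of_nonneg _ _ hq.le, ← ENNReal.rpow_mul,
    one_div_mul_eq_div]
  calc ENNReal.ofReal t ^ q * sphereMeasure n {y | t < |Ω y|} ^ (q / r)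
      = ENNReal.ofReal q * (sphereMeasure n {y | t < |Ω y|} ^ (q / r) *
          (ENNReal.ofReal q⁻¹ * ENNReal.ofReal t ^ q)) := by
        rw [mul_left_comm, ← mul_assoc (ENNReal.ofReal q), ← ENNReal.ofReal_mul hq.le,
          mul_inv_cancel₀ hq.ne', ENNReal.ofReal_one, one_mul, mul_comm]
    _ ≤ _ := by gcongr

variable [NeZero n]

theorem sphereMeasure_eq_hausdorffMeasure_pred :
    sphereMeasure n = (μH[(n - 1 : ℕ)]).restrict (sphere (0 : Rn n) 1) := by
  rw [sphereMeasure, Nat.cast_pred (NeZero.pos n)]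

instance fact_finrank_euclideanSpace_fin : Fact (Module.finrank ℝ (Rn n) = n - 1 + 1) :=
  ⟨by rw [finrank_euclideanSpace_fin, Nat.sub_add_cancel NeZero.one_le]⟩

instance isFiniteMeasure_sphereMeasure : IsFiniteMeasure (sphereMeasure n) := by
  rw [sphereMeasure_eq_hausdorffMeasure_pred]
  exact ⟨by simpa using hausdorffMeasure_sphere_lt_top⟩

theorem lintegral_enorm_rpow_sphereMeasure_lt_top (hΩ : Measurable Ω) {ρ r q : ℝ} (hρ : 0 < ρ)
    (hρr : ρ < r) (hq : 0 < q) (hlor : lorentzSphere n r q Ω < ⊤) :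
    ∫⁻ y, ‖Ω y‖ₑ ^ ρ ∂sphereMeasure n < ⊤ := by
  have hweak : weakLorentzSphere n r Ω < ⊤ :=
    (weakLorentzSphere_le (hρ.trans hρr) hq).trans_lt (ENNReal.mul_lt_top (by finiteness) hlor)
  exact lintegral_enorm_rpow_lt_top_of_mul_meas_rpow_le hΩ hρ hρr hweak.ne fun t ht =>
    le_iSup₂ (f := fun t (_ : 0 < t) =>
      ENNReal.ofReal t * sphereMeasure n {y | t < |Ω y|} ^ (1 / r)) t ht

theorem exists_map_toSphere_eq_smul_sphereMeasure :
    ∃ c : ℝ≥0∞, c ≠ ⊤ ∧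
      (volume : Measure (Rn n)).toSphere.map Subtype.val = c • sphereMeasure n := by
  rw [sphereMeasure_eq_hausdorffMeasure_pred]
  exact exists_map_toSphere_eq_smul_hausdorffMeasure

theorem lintegral_toSphere_lt_top {g : Rn n → ℝ≥0∞} (hg : Measurable g)
    (h : ∫⁻ y, g y ∂sphereMeasure n < ⊤) :
    ∫⁻ ω : sphere (0 : Rn n) 1, g ω ∂volume.toSphere < ⊤ := by
  obtain ⟨c, hc, hmap⟩ := exists_map_toSphere_eq_smul_sphereMeasure (n := n)
  rw [← lintegral_map hg measurable_subtype_coe, hmap, lintegral_smul_measure]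
  exact ENNReal.mul_lt_top hc.lt_top h

theorem integral_toSphere_eq_zero (h : ∫ y, Ω y ∂sphereMeasure n = 0) :
    ∫ ω : sphere (0 : Rn n) 1, Ω ω ∂volume.toSphere = 0 := by
  obtain ⟨c, -, hmap⟩ := exists_map_toSphere_eq_smul_sphereMeasure (n := n)
  have hemb : MeasurableEmbedding (Subtype.val : sphere (0 : Rn n) 1 → Rn n) :=
    .subtype_coe isClosed_sphere.measurableSet
  rw [← hemb.integral_map, hmap, integral_smul_measure, h, smul_zero]

end LorentzSphere

/-! ### The weighted inequality -/

section WeightedInequality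

theorem exists_young_exponents {d r : ℝ} (hr : 1 < r) (hrd : r < d) {B : ℝ}
    (hB : 1 / r - 1 / d < B) :
    ∃ ρ b a : ℝ, 1 < ρ ∧ ρ < r ∧ 1 ≤ b ∧ 0 < (1 - d) * b + d ∧ 0 < a ∧ 1 / a < B ∧
      1 / a + 1 = 1 / ρ + 1 / b := by
  have hd : 0 < d := by linarith
  have hr0 : 0 < r := by linarith
  have hr_inv : 1 / r < 1 := (div_lt_one hr0).2 hr
  have hd_inv : 0 < 1 / d := by positivity
  have hlt : 1 / d < 1 / r := one_div_lt_one_div_of_lt hr0 hrd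
  obtain ⟨A, hA, hA'⟩ : ∃ A, 1 / r - 1 / d < A ∧
      A < min B (min (2 - 1 / r - 1 / d) (1 / r + 1 / d)) :=
    exists_between (by rw [lt_min_iff, lt_min_iff]; exact ⟨hB, by linarith, by linarith⟩)
  obtain ⟨hAB, hA₁, hA₂⟩ : A < B ∧ A < 2 - 1 / r - 1 / d ∧ A < 1 / r + 1 / d := by
    rwa [lt_min_iff, lt_min_iff] at hA'
  set η := (A - (1 / r - 1 / d)) / 2 with hη
  have hρ : 0 < 1 / r + η := by linarith
  have hb : 0 < 1 - 1 / d + η := by linarith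
  refine ⟨(1 / r + η)⁻¹, (1 - 1 / d + η)⁻¹, A⁻¹, ?_, ?_, ?_, ?_, inv_pos.2 (by linarith), ?_, ?_⟩
  · exact (one_lt_inv₀ hρ).2 (by linarith)
  · rw [inv_lt_comm₀ hρ hr0, ← one_div]
    linarith
  · exact (one_le_inv₀ hb).2 (by linarith)
  · have hη0 : 0 < d * η := mul_pos hd (by linarith)
    have hexpand : d * (1 - 1 / d + η) = d - 1 + d * η := by field_simp
    rw [← div_eq_mul_inv, div_add' _ _ _ hb.ne', hexpand]
    exact div_pos (by linarith) hb
  · simpa using hAB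
  · simp only [one_div, inv_inv] at hη ⊢
    linarith

theorem exists_weighted_lintegral_convolution_le {E : Type*} [NormedAddCommGroup E]
    [MeasurableSpace E] [OpensMeasurableSpace E] {μ : Measure E} [NullSingletonClass μ]
    {K : E → ℝ≥0∞} {p q γ : ℝ} (h : KernelStrongType μ p q (Function.curry (powerWeighted γ K))) :
    ∃ C : ℝ≥0∞, C ≠ ⊤ ∧ ∀ g : E → ℝ≥0∞, Measurable g →
      (∫⁻ x, (ENNReal.ofReal (‖x‖ ^ γ) * ∫⁻ y, K (x - y) * g y ∂μ) ^ q ∂μ) ^ (1 / q) ≤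
        C * (∫⁻ x, (ENNReal.ofReal (‖x‖ ^ γ) * g x) ^ p ∂μ) ^ (1 / p) := by
  obtain ⟨C, hC, hbound⟩ := h
  refine ⟨C, hC, fun g hg => ?_⟩
  convert hbound (fun y => ENNReal.ofReal (‖y‖ ^ γ) * g y) (by fun_prop) using 5 with x
  rw [← lintegral_const_mul' _ _ (by finiteness)]
  refine lintegral_congr_ae ?_
  filter_upwards [Measure.ae_ne μ 0] with y hy
  rw [Function.curry_apply, ← mul_assoc (powerWeighted γ K (x, y)),
    powerWeighted_mul_ofReal_norm_rpow γ γ K x hy]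
  simp [mul_assoc]

variable {E : Type*} [NormedAddCommGroup E] [NormedSpace ℝ E] [FiniteDimensional ℝ E]
  [Nontrivial E] [MeasurableSpace E] [BorelSpace E] {μ : Measure E} [μ.IsAddHaarMeasure]

local notation "dim" => (Module.finrank ℝ E : ℝ)

theorem kernelStrongType_powerWeighted_truncatedPotential {U : E → ℝ≥0∞} {α r p p' q γ : ℝ}
    (hU : Measurable U) (hom : PosHomogeneous (α - dim - 1) U) (hr : 1 < r) (hrd : r < dim)
    (hUfin : ∀ ρ, 1 < ρ → ρ < r → ∫⁻ ω : sphere (0 : E) 1, U ω ^ ρ ∂μ.toSphere < ⊤)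
    (hα : 0 < α) (hpp : p'.HolderConjugate p) (hpr : 1 / p < 1 - 1 / r + 1 / dim) (hq : 0 < q)
    (hpq : 1 / q = 1 / p - α / dim) (hγ₁ : α - dim / p < γ)
    (hγ₂ : γ < 1 + dim - dim / r - dim / p) :
    KernelStrongType μ p q
      (Function.curry (powerWeighted γ (truncatedPotential μ (1 - dim) U))) := by
  have hd : 0 < dim := by linarith
  have hp : 0 < p := hpp.symm.pos
  have hB : 1 / r - 1 / dim < min (1 - 1 / p) (1 - 1 / p - γ / dim) := by
    refine lt_min (by linarith) ?_
    have hγ := (div_lt_div_iff_of_pos_right hd).2 hγ₂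
    have hexpand : (1 + dim - dim / r - dim / p) / dim = 1 / dim + 1 - 1 / r - 1 / p := by
      field_simp
    linarith
  obtain ⟨ρ, b, a, hρ, hρr, hb, hbd, ha, haB, hab⟩ := exists_young_exponents hr hrd hB
  obtain ⟨hap, haγ⟩ := lt_min_iff.1 haB
  have hp_inv : 0 < 1 / p := by positivity
  have ha1 : 1 ≤ a := ((one_div_lt (by positivity) one_pos).1 (by linarith)).le.trans' (by simp)
  have hγa : γ < dim * (1 - 1 / a - 1 / p) := by
    rw [mul_comm, ← div_lt_iff₀ hd]
    linarith
  have hαa : α < dim - dim / a := by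
    have hdiv : dim * (1 - 1 / a - 1 / p) = dim - dim / a - dim / p := by ring
    linarith
  have hαd : α < dim := by
    have : 0 < dim / a := by positivity
    linarith
  have hKa := hom.lintegral_truncatedPotential_rpow_toSphere_lt_top hU hρ.le hb ha1 hab
    (γ := 1 - dim) (by linarith) hbd (hUfin ρ hρ hρr)
  refine kernelStrongType_powerWeighted (measurable_truncatedPotential hU) ?_ hα hpp hq hpq ha
    (by linarith) hαa hγ₁ hγa hKa
  convert hom.truncatedPotential (μ := μ) hU (1 - dim) using 1
  ring

end WeightedInequality

theorem gradNorm_eq_norm_fderiv {n : ℕ} (f : Rn n → ℝ) (y : Rn n) :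
    gradNorm f y = ‖fderiv ℝ f y‖ := by
  simp [gradNorm, gradient]

theorem exists_lintegral_norm_rpow_mul_roughOp_le {n : ℕ} [NeZero n] {α r p p' q γ : ℝ}
    {Ω : Rn n → ℝ} (hΩ : Measurable Ω) (hr : 1 < r) (hrn : r < n)
    (hΩfin : ∀ ρ, 1 < ρ → ρ < r → ∫⁻ y, ‖Ω y‖ₑ ^ ρ ∂sphereMeasure n < ⊤)
    (hmean : ∫ y, Ω y ∂sphereMeasure n = 0) (hα : 0 < α) (hpp : p'.HolderConjugate p)
    (hpr : 1 / p < 1 - 1 / r + 1 / n) (hq : 0 < q) (hpq : 1 / q = 1 / p - α / n)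
    (hγ₁ : α - n / p < γ) (hγ₂ : γ < 1 + n - n / r - n / p) :
    ∃ C : ℝ≥0∞, C ≠ ⊤ ∧ ∀ f : Rn n → ℝ, ContDiff ℝ 1 f → Integrable f →
      (∫⁻ x, (ENNReal.ofReal (‖x‖ ^ γ) * ‖roughOp n α Ω f x‖ₑ) ^ q) ^ (1 / q) ≤
        C * (∫⁻ x, (ENNReal.ofReal (‖x‖ ^ γ) * ‖fderiv ℝ f x‖ₑ) ^ p) ^ (1 / p) := by
  have hdim : (Module.finrank ℝ (Rn n) : ℝ) = n := by rw [finrank_euclideanSpace_fin]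
  have hU : Measurable fun y => ‖roughKernel n α Ω y‖ₑ := (measurable_roughKernel hΩ).enorm
  have hΩsphere : ∀ ρ, 1 < ρ → ρ < r →
      ∫⁻ ω : sphere (0 : Rn n) 1, ‖Ω ω‖ₑ ^ ρ ∂volume.toSphere < ⊤ := fun ρ hρ hρr =>
    lintegral_toSphere_lt_top (by fun_prop) (hΩfin ρ hρ hρr)
  have hΩ1 : ∫⁻ ω : sphere (0 : Rn n) 1, ‖Ω ω‖ₑ ∂volume.toSphere < ⊤ := by
    obtain ⟨ρ, hρ, hρr⟩ := exists_between hr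
    simpa using lintegral_rpow_lt_top_of_exponent_le zero_le_one hρ.le (hΩsphere ρ hρ hρr)
  have hαn : α < n + 1 := by
    have : 0 < n / r := div_pos (by linarith) (by linarith)
    linarith
  obtain ⟨C₁, hC₁, hconv⟩ := exists_weighted_lintegral_convolution_le
    (kernelStrongType_powerWeighted_truncatedPotential (μ := (volume : Measure (Rn n))) (γ := γ)
      hU (by rw [hdim]; exact posHomogeneous_enorm_roughKernel n α Ω) hr (by rwa [hdim])
      (by simpa only [enorm_roughKernel_coe_sphere] using hΩsphere) hα hpp (by rwa [hdim]) hq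
      (by rwa [hdim]) (by rwa [hdim]) (by rwa [hdim]))
  obtain ⟨C₂, hC₂, hgrad⟩ := exists_lintegral_mul_enorm_sub_average_ball_le ℝ
    (volume : Measure (Rn n))
  refine ⟨C₂ * C₁, by finiteness, fun f hf hfint => ?_⟩
  have hpointwise : ∀ x, ‖roughOp n α Ω f x‖ₑ ≤ C₂ * ∫⁻ u, truncatedPotential volume
      (1 - (Module.finrank ℝ (Rn n) : ℝ)) (fun y => ‖roughKernel n α Ω y‖ₑ) (x - u) *
        ‖fderiv ℝ f u‖ₑ := fun x =>
    (enorm_roughOp_le_lintegral_enorm_sub_average hαn hΩ hΩ1 (integral_toSphere_eq_zero hmean)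
      hf.continuous.measurable hfint x).trans (hgrad _ hU f hf x)
  refine (ENNReal.rpow_le_rpow (lintegral_mono fun x => ENNReal.rpow_le_rpow
    (mul_le_mul_right (hpointwise x) _) hq.le) (by positivity)).trans ?_
  simp only [mul_left_comm _ C₂]
  rw [lintegral_const_mul_rpow_rpow hq hC₂, mul_assoc]
  gcongr
  exact hconv _ (hf.continuous_fderiv one_ne_zero).measurable.enorm

theorem statement5_general (n : ℕ) (r r' α : ℝ) (hr1 : 1 < r) (hrn : r < n)
    (hr' : r' = r / (r - 1)) (hα0 : 0 < α) (Ω : Rn n → ℝ) (hΩmeas : Measurable Ω)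
    (hΩfin : ∀ ρ, 1 < ρ → ρ < r → ∫⁻ y, ‖Ω y‖ₑ ^ ρ ∂sphereMeasure n < ⊤)
    (hΩmean : ∫ y, Ω y ∂sphereMeasure n = 0)
    (p q lam : ℝ) (hp1 : r' * n / (r' + n) < p) (hp2 : p < n / α)
    (hq : 1 / q = 1 / p - α / n)
    (hlam1 : α - n / p < lam) (hlam2 : lam < 1 + n / r' - n / p) :
    ∃ C > (0 : ℝ), ∀ f : Rn n → ℝ, ContDiff ℝ 1 f → Integrable f →
      (∫⁻ x : Rn n, ENNReal.ofReal (‖x‖ ^ lam * |roughOp n α Ω f x|) ^ q) ^ (1 / q) ≤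
        ENNReal.ofReal C *
          (∫⁻ x : Rn n, ENNReal.ofReal (‖x‖ ^ lam * gradNorm f x) ^ p) ^ (1 / p) := by
  have hn : (0 : ℝ) < n := by linarith
  have : NeZero n := ⟨by rintro rfl; simp at hn⟩
  have hr_pos : 0 < r - 1 := by linarith
  have hr'_pos : 0 < r' := by rw [hr']; positivity
  have hr'_inv : 1 / r' = 1 - 1 / r := by rw [hr']; field_simp
  have hp : 0 < p := lt_trans (by positivity) hp1
  have hp_inv : 1 / p < 1 - 1 / r + 1 / n := by
    calc 1 / p < 1 / (r' * n / (r' + n)) := one_div_lt_one_div_of_lt (by positivity) hp1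
      _ = 1 / r' + 1 / n := by field_simp; ring
      _ = 1 - 1 / r + 1 / n := by rw [hr'_inv]
  have hn_inv : 1 / (n : ℝ) < 1 / r := one_div_lt_one_div_of_lt (by linarith) hrn
  have hp_one : 1 < p := (div_lt_one hp).1 (by linarith)
  have hq_pos : 0 < q := by
    rw [← one_div_pos, hq, sub_pos, div_lt_div_iff₀ hn hp, mul_comm, one_mul]
    exact (lt_div_iff₀ hα0).1 hp2
  have hlam : lam < 1 + n - n / r - n / p := by
    rw [div_eq_mul_one_div (n : ℝ) r', hr'_inv] at hlam2
    rwa [div_eq_mul_one_div (n : ℝ) r, add_sub_assoc, ← mul_one_sub]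
  obtain ⟨C, hC, hbound⟩ := exists_lintegral_norm_rpow_mul_roughOp_le hΩmeas hr1 hrn hΩfin hΩmean
    hα0 (Real.HolderConjugate.conjExponent hp_one).symm hp_inv hq_pos hq hlam1 hlam
  refine ⟨C.toReal + 1, by positivity, fun f hf hfint => ?_⟩
  have hC_le : C ≤ ENNReal.ofReal (C.toReal + 1) :=
    (ENNReal.ofReal_toReal hC).ge.trans (ENNReal.ofReal_le_ofReal (by linarith))
  have hnorm : ∀ (x : Rn n) (s : ℝ), ENNReal.ofReal (‖x‖ ^ lam * s) =
      ENNReal.ofReal (‖x‖ ^ lam) * ENNReal.ofReal s := fun x s =>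
    ENNReal.ofReal_mul (by positivity)
  simp only [hnorm, gradNorm_eq_norm_fderiv, ← Real.enorm_eq_ofReal_abs, ofReal_norm]
  exact (hbound f hf hfint).trans (by gcongr)

/-- Power-weighted Sobolev inequality for `T_{Ω,α}` with
`Ω ∈ L^{r,r*}(𝕊^{n-1})` of mean zero. -/
theorem statement5 (n : ℕ) (hn : 2 ≤ n) (r r' rstar α : ℝ)
    (hr1 : 1 < r) (hrn : r < n) (hr' : r' = r / (r - 1)) (hrstar : rstar = n * r / (n - r))
    (hα0 : 0 < α) (hα1 : α < 1 + n / r')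
    (Ω : Rn n → ℝ) (hΩmeas : Measurable Ω) (hΩlor : lorentzSphere n r rstar Ω < ⊤)
    (hΩint : Integrable Ω (sphereMeasure n))
    (hΩmean : ∫ y, Ω y ∂sphereMeasure n = 0)
    (p q lam : ℝ) (hp1 : r' * n / (r' + n) < p) (hp2 : p < n / α)
    (hq : 1 / q = 1 / p - α / n)
    (hlam1 : α - n / p < lam) (hlam2 : lam < 1 + n / r' - n / p) :
    ∃ C > (0 : ℝ), ∀ f : Rn n → ℝ, IsCcSmooth f →
      (∫⁻ x : Rn n, ENNReal.ofReal (‖x‖ ^ lam * |roughOp n α Ω f x|) ^ q) ^ (1 / q) ≤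
        ENNReal.ofReal C *
          (∫⁻ x : Rn n, ENNReal.ofReal (‖x‖ ^ lam * gradNorm f x) ^ p) ^ (1 / p) := by
  have : NeZero n := ⟨by omega⟩
  have hrstar_pos : 0 < rstar := by
    rw [hrstar]
    exact div_pos (by positivity) (sub_pos.2 hrn)
  have hΩfin : ∀ ρ, 1 < ρ → ρ < r → ∫⁻ y, ‖Ω y‖ₑ ^ ρ ∂sphereMeasure n < ⊤ := fun ρ hρ hρr =>
    lintegral_enorm_rpow_sphereMeasure_lt_top hΩmeas (one_pos.trans hρ) hρr hrstar_pos hΩlor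
  obtain ⟨C, hC, hbound⟩ := statement5_general n r r' α hr1 hrn hr' hα0 Ω hΩmeas hΩfin hΩmean
    p q lam hp1 hp2 hq hlam1 hlam2
  exact ⟨C, hC, fun f hf => hbound f (hf.1.of_le (by exact_mod_cast le_top))
    (hf.1.continuous.integrable_of_hasCompactSupport hf.2)⟩

end
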